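/- arXiv:1604.00460 — 3 statements merged into one kernel-verified Lean document; each statement's English description precedes it below -/
import Mathlib

section
/- Consider a scaling of the heterogeneous key predistribution model with on/off channels such that λ_1(n) = o(1) and α_n K_{1,n} K_avg,n / P_n ~ c (log n)/n for some c > 0, where K_avg,n = Σ_{j=1}^r μ_j K_{j,n}. Then: if c < 1 the probability that G(n; μ, K_n, P_n, α_n) has no isolated nodes tends to 0, and if c > 1 it tends to 1. If in addition P_n ≥ σ n for all n for some σ > 0 and p_11(n) = ω(1/(n α_n)), then the same zero-one law holds for the probability that G(n; μ, K_n, P_n, α_n) is connected. -/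
open Filter

/-- Probability that a uniformly random `b`-subset of a `P`-set avoids a fixed `a`-subset. -/
noncomputable def avoidProb (P a b : ℕ) : ℝ := ((P - a).choose b : ℝ) / (P.choose b : ℝ)

/-- `p_{ab}` : probability that independent uniformly random key rings of sizes
`a` and `b` (from a pool of size `P`) intersect. -/
noncomputable def pEdge (P a b : ℕ) : ℝ := 1 - avoidProb P a b

/-- `λ_i` : mean edge probability of a class-`i` node in the inhomogeneous random key graph. -/
noncomputable def lamb {r : ℕ} (μ : Fin (r + 1) → ℝ) (K : Fin (r + 1) → ℕ) (P : ℕ)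
    (i : Fin (r + 1)) : ℝ :=
  ∑ j, μ j * pEdge P (K i) (K j)

/-- A configuration of the model: a class for each vertex, a key ring for each vertex,
and an on/off state for each (unordered) channel. -/
abbrev Config (n r P : ℕ) := (Fin n → Fin (r + 1)) × (Fin n → Finset (Fin P)) × (Sym2 (Fin n) → Bool)

/-- Probability weight of a configuration: classes are i.i.d. with law `μ`; given its class `i`,
a vertex's key ring is uniform among the `C(P, K i)` subsets of size `K i`; channels over
distinct pairs are i.i.d. Bernoulli(`α`) (diagonal channel variables are forced to `false`). -/
noncomputable def wt {n r P : ℕ} (μ : Fin (r + 1) → ℝ) (K : Fin (r + 1) → ℕ) (α : ℝ)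
    (c : Config n r P) : ℝ :=
  (∏ x : Fin n, μ (c.1 x)) *
    (∏ x : Fin n, if (c.2.1 x).card = K (c.1 x) then ((P.choose (K (c.1 x)) : ℝ))⁻¹ else 0) *
    (∏ e : Sym2 (Fin n),
      if e.IsDiag then (if c.2.2 e then 0 else 1) else (if c.2.2 e then α else 1 - α))

open Classical in
/-- Probability of an event under the heterogeneous key predistribution model
with on/off channels. -/
noncomputable def pr {n r P : ℕ} (μ : Fin (r + 1) → ℝ) (K : Fin (r + 1) → ℕ) (α : ℝ)
    (E : Config n r P → Prop) : ℝ :=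
  ∑ c : Config n r P, if E c then wt μ K α c else 0

/-- Two vertices are adjacent iff their key rings intersect and the channel between them is on. -/
def Adj {n r P : ℕ} (c : Config n r P) (x y : Fin n) : Prop :=
  x ≠ y ∧ ((c.2.1 x) ∩ (c.2.1 y)).Nonempty ∧ c.2.2 s(x, y) = true

/-- The random graph `G(n; μ, K, P, α)` as a simple graph. -/
def graphOf {n r P : ℕ} (c : Config n r P) : SimpleGraph (Fin n) :=
  SimpleGraph.fromRel (fun x y => ((c.2.1 x) ∩ (c.2.1 y)).Nonempty ∧ c.2.2 s(x, y) = true)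

/-- A vertex is isolated if it has no neighbours. -/
def Isolated {n r P : ℕ} (c : Config n r P) (x : Fin n) : Prop := ∀ y, ¬ Adj c x y

/-- The graph has no isolated nodes. -/
def NoIsolatedNodes {n r P : ℕ} (c : Config n r P) : Prop := ∀ x, ¬ Isolated c x

/-! Let `m = α K₁ K_avg / P`, so that `m ~ c log n / n`. Since `λ₁ → 0`, a node of the smallest
class is joined to a random node with probability about `m`, and is isolated with probability
about `n ^ (-c)`; nodes of larger classes are less often isolated. For `c > 1` the union bound
over the nodes suffices. For `c < 1` the second moment method applies: two nodes with disjoint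
rings are nearly independent, and two nodes with meeting rings contribute at most
`p₁₁ exp (α d log n)`, which convexity bounds by `p₁₁ + α p₁₁ n ^ d`; this vanishes because
`α p₁₁ ≤ m`.

For connectivity, consider the cuts between a set `S` of `ℓ ≤ n / 2` nodes and its complement.
Given the rings of `S`, the nodes outside are independent, and each one misses `S` with a
probability that only increases when all rings of `S` are replaced by smallest ones. If few keys
belong to many of these rings, the second moment of the number of open overlaps bounds the miss
probability by a constant below one as soon as its mean is large, and by nearly `exp (-ℓ m)` when
the mean is small. A Chernoff bound shows that many keys are overloaded with probability at most
`(exp (-K₁) ℓ K₁ / P) ^ ℓ`, which sums to `o(1)` over all sets `S` since `P ≥ σ n` and `K₁ → ∞`.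
The remaining sum over `S` is split by `ℓ`: for small mean overlaps the `ℓ`-th term is at most
`n ^ (-γ ℓ)`; up to `ℓ = η n` a miss probability bounded away from one beats the entropy of the
cuts; beyond that `n α p₁₁ → ∞` forces a miss probability of at most `1 / 16`, which beats
`2 ^ n`. -/

section

open Finset

/-! ### Finite expectations -/

section Mean

variable {Ω : Type*} [Fintype Ω] {p f g : Ω → ℝ}

/-- The expectation of `f` under the mass function `p`. Probability mass functions are the members
of `stdSimplex ℝ Ω`. -/
def mean (p f : Ω → ℝ) : ℝ := ∑ ω, p ω * f ω

theorem mean_add (p f g : Ω → ℝ) : mean p (fun ω ↦ f ω + g ω) = mean p f + mean p g := by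
  simp [mean, mul_add, sum_add_distrib]

theorem mean_const_mul (p : Ω → ℝ) (a : ℝ) (f : Ω → ℝ) :
    mean p (fun ω ↦ a * f ω) = a * mean p f := by
  simp [mean, mul_sum, mul_left_comm]

theorem mean_sum {ι : Type*} (p : Ω → ℝ) (s : Finset ι) (f : ι → Ω → ℝ) :
    mean p (fun ω ↦ ∑ i ∈ s, f i ω) = ∑ i ∈ s, mean p (f i) := by
  simp only [mean, mul_sum]
  exact sum_comm

theorem mean_const (hp : p ∈ stdSimplex ℝ Ω) (a : ℝ) : mean p (fun _ ↦ a) = a := by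
  simp [mean, ← sum_mul, hp.2]

theorem mean_one_sub (hp : p ∈ stdSimplex ℝ Ω) (f : Ω → ℝ) :
    mean p (fun ω ↦ 1 - f ω) = 1 - mean p f := by
  simp [mean, mul_sub, sum_sub_distrib, hp.2]

theorem mean_mono_of_support (hp : 0 ≤ p) (h : ∀ ω, p ω ≠ 0 → f ω ≤ g ω) :
    mean p f ≤ mean p g := by
  refine sum_le_sum fun ω _ ↦ ?_
  rcases eq_or_ne (p ω) 0 with h0 | h0
  · simp [h0]
  · exact mul_le_mul_of_nonneg_left (h ω h0) (hp ω)

theorem mean_mono (hp : 0 ≤ p) (h : ∀ ω, f ω ≤ g ω) : mean p f ≤ mean p g :=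
  mean_mono_of_support hp fun ω _ ↦ h ω

theorem mean_nonneg (hp : 0 ≤ p) (h : ∀ ω, 0 ≤ f ω) : 0 ≤ mean p f :=
  sum_nonneg fun ω _ ↦ mul_nonneg (hp ω) (h ω)

theorem mean_le_one (hp : p ∈ stdSimplex ℝ Ω) (h : ∀ ω, f ω ≤ 1) : mean p f ≤ 1 :=
  (mean_mono hp.1 h).trans_eq (mean_const hp 1)

end Mean

/-! ### Independent draws -/

section Iid

variable {ι V : Type*} [Fintype ι]

/-- The joint mass function of independent draws from `p`, one for each member of `ι`. -/
def iidLaw (p : V → ℝ) (v : ι → V) : ℝ := ∏ i, p (v i)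

theorem iidLaw_mem_stdSimplex [Fintype V] [DecidableEq ι] {p : V → ℝ}
    (hp : p ∈ stdSimplex ℝ V) :
    iidLaw p ∈ stdSimplex ℝ (ι → V) := by
  refine ⟨fun v ↦ prod_nonneg fun i _ ↦ hp.1 (v i), ?_⟩
  simp only [iidLaw]
  rw [← Fintype.prod_sum fun (_ : ι) a ↦ p a]
  simp [hp.2]

theorem ne_zero_of_iidLaw_ne_zero {p : V → ℝ} {v : ι → V} (h : iidLaw p v ≠ 0) (i : ι) :
    p (v i) ≠ 0 :=
  prod_ne_zero_iff.1 h i (mem_univ i)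

variable [Fintype V]

theorem mean_iidLaw_zero (p : V → ℝ) (F : (Fin 0 → V) → ℝ) : mean (iidLaw p) F = F ![] := by
  simp [mean, iidLaw, Subsingleton.elim default ![]]

theorem mean_iidLaw_succ {ℓ : ℕ} (p : V → ℝ) (F : (Fin (ℓ + 1) → V) → ℝ) :
    mean (iidLaw p) F = mean (iidLaw p) fun v : Fin ℓ → V ↦ mean p fun a ↦ F (Fin.cons a v) := by
  simp only [mean, mul_sum]
  rw [← (Fin.consEquiv fun _ ↦ V).sum_comp, Fintype.sum_prod_type, sum_comm]
  refine sum_congr rfl fun v _ ↦ sum_congr rfl fun a _ ↦ ?_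
  change iidLaw p (Fin.cons a v) * F (Fin.cons a v) = _
  simp only [iidLaw, Fin.prod_univ_succ, Fin.cons_zero, Fin.cons_succ]
  ring

theorem mean_iidLaw_comp_equiv [DecidableEq ι] {κ : Type*} [Fintype κ] [DecidableEq κ] (e : ι ≃ κ)
    (p : V → ℝ) (F : (ι → V) → ℝ) :
    mean (iidLaw p) (fun v : κ → V ↦ F (v ∘ e)) = mean (iidLaw p) F := by
  rw [mean, mean, ← (e.arrowCongr (Equiv.refl V)).sum_comp]
  refine sum_congr rfl fun v _ ↦ ?_
  have hcomp : (e.arrowCongr (Equiv.refl V) v) ∘ e = v := by ext i; simp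
  rw [hcomp, iidLaw, iidLaw, ← e.prod_comp, ← hcomp]
  simp

/-- Stochastic domination tensorizes. -/
theorem mean_iidLaw_le_of_antitone {W : Type*} [Fintype W] [Preorder W] {p : V → ℝ} {q : W → ℝ}
    (hp : 0 ≤ p) (hq : 0 ≤ q) (φ : V → W)
    (h : ∀ f : W → ℝ, Antitone f → mean p (f ∘ φ) ≤ mean q f)
    {ℓ : ℕ} {F : (Fin ℓ → W) → ℝ} (hF : Antitone F) :
    mean (iidLaw p) (fun v ↦ F (φ ∘ v)) ≤ mean (iidLaw q) F := by
  induction ℓ with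
  | zero => simp [mean_iidLaw_zero, Subsingleton.elim (φ ∘ ![]) ![]]
  | succ ℓ ih =>
    have hhead (w : Fin ℓ → W) : Antitone fun b ↦ F (Fin.cons b w) := fun b b' hb ↦
      hF (Fin.cons_le_cons.2 ⟨hb, le_rfl⟩)
    have htail : Antitone fun w : Fin ℓ → W ↦ mean q fun b ↦ F (Fin.cons b w) := fun w w' hw ↦
      mean_mono hq fun b ↦ hF (Fin.cons_le_cons.2 ⟨le_rfl, hw⟩)
    rw [mean_iidLaw_succ, mean_iidLaw_succ]
    refine (mean_mono (fun v ↦ prod_nonneg fun i _ ↦ hp (v i)) fun v ↦ ?_).trans (ih htail)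
    simp only [Fin.comp_cons]
    exact h _ (hhead (φ ∘ v))

end Iid

/-! ### Uniform rings -/

section Ring

variable {κ : Type*} [Fintype κ] {k l : ℕ} {f : Finset κ → ℝ}

/-- The uniform mass function on the `k`-element rings of keys from the pool `κ`. It vanishes
identically when `k` exceeds the size of the pool. -/
noncomputable def ringLaw (k : ℕ) (T : Finset κ) : ℝ :=
  if #T = k then ((Fintype.card κ).choose k : ℝ)⁻¹ else 0

theorem card_eq_of_ringLaw_ne_zero {T : Finset κ} (h : ringLaw k T ≠ 0) : #T = k := by
  by_contra hT
  simp [ringLaw, hT] at h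

theorem mean_ringLaw (k : ℕ) (f : Finset κ → ℝ) :
    mean (ringLaw k) f = (∑ T ∈ powersetCard k univ, f T) / (Fintype.card κ).choose k := by
  have hfilter : powersetCard k (univ : Finset κ) = univ.filter fun T ↦ #T = k := by
    ext T; simp [mem_powersetCard]
  rw [hfilter, sum_div, sum_filter]
  refine sum_congr rfl fun T _ ↦ ?_
  simp only [ringLaw]
  split_ifs <;> simp [div_eq_inv_mul]

theorem ringLaw_nonneg (k : ℕ) : 0 ≤ (ringLaw k : Finset κ → ℝ) := fun T ↦ by
  simp only [ringLaw, Pi.zero_apply]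
  positivity

theorem ringLaw_mem_stdSimplex (hk : k ≤ Fintype.card κ) :
    (ringLaw k : Finset κ → ℝ) ∈ stdSimplex ℝ (Finset κ) := by
  refine ⟨ringLaw_nonneg k, ?_⟩
  have hchoose : ((Fintype.card κ).choose k : ℝ) ≠ 0 := mod_cast (Nat.choose_pos hk).ne'
  simpa [mean, hchoose] using mean_ringLaw k fun _ : Finset κ ↦ (1 : ℝ)

theorem choose_sub_sub_le_pow_mul {N b : ℕ} (hk : k ≤ N) (hb : b ≤ k) :
    ((N - b).choose (k - b) : ℝ) ≤ ((k : ℝ) / N) ^ b * N.choose k := by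
  induction b with
  | zero => simp
  | succ b ih =>
    obtain ⟨m, rfl⟩ : ∃ m, k = m + (b + 1) := ⟨k - (b + 1), by omega⟩
    obtain ⟨d, rfl⟩ : ∃ d, N = m + (b + 1) + d := ⟨N - (m + (b + 1)), by omega⟩
    have hih := ih (by omega)
    rw [show m + (b + 1) + d - b = m + d + 1 by omega, show m + (b + 1) - b = m + 1 by omega]
      at hih
    rw [show m + (b + 1) + d - (b + 1) = m + d by omega, show m + (b + 1) - (b + 1) = m by omega]
    have hpascal : ((m + d + 1 : ℕ) : ℝ) * (m + d).choose m =
        (m + d + 1).choose (m + 1) * (m + 1 : ℕ) := mod_cast Nat.add_one_mul_choose_eq (m + d) m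
    have hratio : ((m + 1 : ℕ) : ℝ) / (m + d + 1 : ℕ) ≤
        ((m + (b + 1) : ℕ) : ℝ) / (m + (b + 1) + d : ℕ) := by
      rw [div_le_div_iff₀ (by positivity) (by positivity)]
      push_cast
      nlinarith [mul_nonneg (Nat.cast_nonneg (α := ℝ) b) (Nat.cast_nonneg (α := ℝ) d)]
    calc ((m + d).choose m : ℝ)
        = (m + d + 1).choose (m + 1) * ((m + 1 : ℕ) / (m + d + 1 : ℕ)) := by
          field_simp; linarith
      _ ≤ _ := mul_le_mul hih hratio (by positivity) (by positivity)
      _ = _ := by ring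

section DecidableEq

variable [DecidableEq κ]

theorem mean_ringLaw_superset_le (hk : k ≤ Fintype.card κ) (B : Finset κ) :
    mean (ringLaw k) (fun T ↦ if B ⊆ T then 1 else 0) ≤ ((k : ℝ) / Fintype.card κ) ^ #B := by
  have hchoose : (0 : ℝ) < (Fintype.card κ).choose k := mod_cast Nat.choose_pos hk
  rw [mean_ringLaw, div_le_iff₀ hchoose, sum_boole]
  rcases le_or_gt #B k with hB | hB
  · rw [card_filter_powersetCard_subset B univ k (subset_univ B) hB, card_univ]
    exact choose_sub_sub_le_pow_mul hk hB
  · rw [filter_eq_empty_iff.2 fun T hT h ↦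
      hB.not_ge ((card_le_card h).trans_eq (mem_powersetCard.1 hT).2)]
    simpa using by positivity

theorem mean_ringLaw_mem (hk : k ≤ Fintype.card κ) (x : κ) :
    mean (ringLaw k) (fun T ↦ if x ∈ T then 1 else 0) = (k : ℝ) / Fintype.card κ := by
  have hchoose : (0 : ℝ) < (Fintype.card κ).choose k := mod_cast Nat.choose_pos hk
  have hpos : 0 < Fintype.card κ := Fintype.card_pos_iff.2 ⟨x⟩
  rw [mean_ringLaw, div_eq_div_iff hchoose.ne' (by positivity), sum_boole]
  rcases k with _ | k
  · simp
  · have hcard := card_filter_powersetCard_subset {x} univ (k + 1) (subset_univ _) (by simp)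
    simp only [singleton_subset_iff, card_univ, card_singleton, Nat.add_sub_cancel] at hcard
    have hpascal := Nat.add_one_mul_choose_eq (Fintype.card κ - 1) k
    rw [Nat.sub_add_cancel hpos] at hpascal
    rw [hcard]
    exact_mod_cast (by linarith : _ * _ = (k + 1) * (Fintype.card κ).choose (k + 1))

theorem mean_ringLaw_mem_mul_mem_le (hk : k ≤ Fintype.card κ) {x y : κ} (hxy : x ≠ y) :
    mean (ringLaw k) (fun T ↦ (if x ∈ T then 1 else 0) * (if y ∈ T then 1 else 0)) ≤
      ((k : ℝ) / Fintype.card κ) ^ 2 := by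
  have h := mean_ringLaw_superset_le hk {x, y}
  rw [card_pair hxy] at h
  refine (mean_mono (ringLaw_nonneg k) fun T ↦ ?_).trans h
  by_cases hx : x ∈ T <;> by_cases hy : y ∈ T <;> simp [hx, hy, insert_subset_iff]

/-- Expand `s ^ #(T ∩ H)` over the subsets of `T ∩ H` in powers of `s - 1`. The bound is the
generating function of a Poisson variable with the same expectation. -/
theorem mean_ringLaw_pow_card_inter_le (hk : k ≤ Fintype.card κ) (H : Finset κ) {s : ℝ}
    (hs : 1 ≤ s) :
    mean (ringLaw k) (fun T ↦ s ^ #(T ∩ H)) ≤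
      Real.exp ((s - 1) * (k * (#H / Fintype.card κ))) := by
  have : 0 ≤ s - 1 := sub_nonneg.2 hs
  have hexpand (T : Finset κ) : s ^ #(T ∩ H) =
      ∑ B ∈ H.powerset, (s - 1) ^ #B * (if B ⊆ T then 1 else 0) := by
    have hsubset : (T ∩ H).powerset = H.powerset.filter (· ⊆ T) := by
      ext B; rw [mem_filter, mem_powerset, mem_powerset, subset_inter_iff, and_comm]
    have h := sum_pow_mul_eq_add_pow (s - 1) 1 (T ∩ H)
    simp only [one_pow, mul_one, sub_add_cancel] at h
    simp [← h, hsubset, sum_filter]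
  calc mean (ringLaw k) (fun T ↦ s ^ #(T ∩ H))
      = ∑ B ∈ H.powerset, (s - 1) ^ #B * mean (ringLaw k) fun T ↦ if B ⊆ T then 1 else 0 := by
        simp only [hexpand, mean_sum, mean_const_mul]
    _ ≤ ∑ B ∈ H.powerset, (s - 1) ^ #B * ((k : ℝ) / Fintype.card κ) ^ #B := by
        gcongr
        exact mean_ringLaw_superset_le hk _
    _ = ((s - 1) * ((k : ℝ) / Fintype.card κ) + 1) ^ #H := by
        simp only [← sum_pow_mul_eq_add_pow, mul_pow, one_pow, mul_one]
    _ ≤ Real.exp ((s - 1) * ((k : ℝ) / Fintype.card κ)) ^ #H := by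
        gcongr
        exact Real.add_one_le_exp _
    _ = Real.exp ((s - 1) * (k * (#H / Fintype.card κ))) := by
        rw [← Real.exp_nat_mul]
        ring_nf

theorem sum_powersetCard_succ_sum_erase (k : ℕ) (f : Finset κ → ℝ) :
    ∑ T ∈ powersetCard (k + 1) univ, ∑ x ∈ T, f (T.erase x) =
      ∑ T ∈ powersetCard k univ, ∑ _x ∈ Tᶜ, f T := by
  rw [sum_sigma', sum_sigma']
  refine sum_bij' (fun p _ ↦ ⟨p.1.erase p.2, p.2⟩) (fun p _ ↦ ⟨insert p.2 p.1, p.2⟩)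
    ?_ ?_ ?_ ?_ fun _ _ ↦ rfl
  all_goals
    rintro ⟨T, x⟩ h
    simp only [mem_sigma, mem_powersetCard, mem_compl] at h
    simp [h]

end DecidableEq

/-- A uniform `(k + 1)`-ring with a uniform element deleted is a uniform `k`-ring. -/
theorem mean_ringLaw_succ_le (hk : k + 1 ≤ Fintype.card κ) (hf : Antitone f) :
    mean (ringLaw (k + 1)) f ≤ mean (ringLaw k) f := by
  classical
  have hchoose : (0 : ℝ) < (Fintype.card κ).choose k := mod_cast Nat.choose_pos (by omega)
  have hchoose' : (0 : ℝ) < (Fintype.card κ).choose (k + 1) := mod_cast Nat.choose_pos hk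
  have hpascal : ((Fintype.card κ).choose (k + 1) : ℝ) * (k + 1) =
      (Fintype.card κ).choose k * (Fintype.card κ - k : ℕ) :=
    mod_cast Nat.choose_succ_right_eq (Fintype.card κ) k
  have hdelete : (k + 1) * ∑ T ∈ powersetCard (k + 1) univ, f T ≤
      (Fintype.card κ - k : ℕ) * ∑ T ∈ powersetCard k univ, f T := calc
    _ = ∑ T ∈ powersetCard (k + 1) univ, ∑ _x ∈ T, f T := by
      rw [mul_sum]
      refine sum_congr rfl fun T hT ↦ ?_
      simp [(mem_powersetCard.1 hT).2]
    _ ≤ ∑ T ∈ powersetCard (k + 1) univ, ∑ x ∈ T, f (T.erase x) := by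
      gcongr with T _ x _
      exact hf (erase_subset x T)
    _ = ∑ T ∈ powersetCard k univ, ∑ _x ∈ Tᶜ, f T := sum_powersetCard_succ_sum_erase k f
    _ = _ := by
      rw [mul_sum]
      refine sum_congr rfl fun T hT ↦ ?_
      simp [card_compl, (mem_powersetCard.1 hT).2]
  rw [mean_ringLaw, mean_ringLaw, div_le_div_iff₀ hchoose' hchoose]
  have hscaled := mul_le_mul_of_nonneg_left hdelete hchoose.le
  rw [← mul_assoc _ _ (∑ T ∈ powersetCard k univ, f T), ← hpascal] at hscaled
  refine le_of_mul_le_mul_left ?_ (by positivity : (0 : ℝ) < k + 1)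
  linarith

theorem mean_ringLaw_antitone (hkl : k ≤ l) (hl : l ≤ Fintype.card κ) (hf : Antitone f) :
    mean (ringLaw l) f ≤ mean (ringLaw k) f := by
  induction l, hkl using Nat.le_induction with
  | base => rfl
  | succ l _ ih => exact (mean_ringLaw_succ_le hl hf).trans (ih (by omega))

end Ring

/-! ### The number of keys a uniform ring shares with a family of rings -/

section Meet

variable {κ : Type*} [DecidableEq κ] {α : ℝ}

/-- The indicator that the rings `A` and `T` share a key. -/
def meet (A T : Finset κ) : ℝ := if (A ∩ T).Nonempty then 1 else 0

theorem meet_nonneg (A T : Finset κ) : 0 ≤ meet A T := by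
  unfold meet; positivity

theorem meet_le_one (A T : Finset κ) : meet A T ≤ 1 := by
  unfold meet; split_ifs <;> norm_num

theorem meet_mono {A B : Finset κ} (h : A ⊆ B) (T : Finset κ) : meet A T ≤ meet B T := by
  by_cases hA : (A ∩ T).Nonempty
  · simp [meet, hA, hA.mono (inter_subset_inter_right h)]
  · simpa [meet, hA] using meet_nonneg B T

theorem meet_comm (A T : Finset κ) : meet A T = meet T A := by
  rw [meet, meet, inter_comm]

theorem meet_le_card_inter (A T : Finset κ) : meet A T ≤ #(A ∩ T) := by
  unfold meet
  split_ifs with h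
  · exact_mod_cast h.card_pos
  · positivity

theorem one_sub_mul_meet_nonneg (hα : α ∈ Set.Icc 0 1) (A T : Finset κ) :
    0 ≤ 1 - α * meet A T :=
  sub_nonneg.2 (mul_le_one₀ hα.2 (meet_nonneg A T) (meet_le_one A T))

theorem one_sub_mul_meet_le_one (hα : 0 ≤ α) (A T : Finset κ) : 1 - α * meet A T ≤ 1 :=
  sub_le_self 1 (mul_nonneg hα (meet_nonneg A T))

end Meet

section Load

variable {κ ι : Type*} [DecidableEq κ] [Fintype ι]

/-- The number of rings of the family `A` that contain the key `x`. -/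
def keyLoad (A : ι → Finset κ) (x : κ) : ℕ := #{i | x ∈ A i}

theorem sum_keyLoad (A : ι → Finset κ) (T : Finset κ) :
    ∑ x ∈ T, keyLoad A x = ∑ i, #(A i ∩ T) := by
  simp only [keyLoad, card_filter]
  rw [sum_comm]
  refine sum_congr rfl fun i _ ↦ ?_
  rw [← card_filter, filter_mem_eq_inter, inter_comm]

theorem sum_univ_keyLoad [Fintype κ] (A : ι → Finset κ) : ∑ x, keyLoad A x = ∑ i, #(A i) := by
  simpa using sum_keyLoad A univ

theorem keyLoad_mono {A B : ι → Finset κ} (h : A ≤ B) (x : κ) : keyLoad A x ≤ keyLoad B x :=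
  card_le_card <| monotone_filter_right _ fun i _ hx ↦ h i hx

end Load

/-- The left-hand side is `c²` times the probability that `X = ∑ N i * B i` has no nonzero summand,
where the `B i` are independent Bernoulli(`α`) variables. That event forces `X = 0`, and the
right-hand side is the expectation of `(c - t X)²`. -/
theorem sq_mul_prod_one_sub_le {ι : Type*} (s : Finset ι) (N : ι → ℝ) {α : ℝ}
    (hα : α ∈ Set.Icc 0 1) (t c : ℝ) :
    c ^ 2 * ∏ i ∈ s, (1 - α * if N i = 0 then 0 else 1) ≤
      (c - t * α * ∑ i ∈ s, N i) ^ 2 + t ^ 2 * (α * (1 - α)) * ∑ i ∈ s, N i ^ 2 := by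
  classical
  obtain ⟨hα0, hα1⟩ := hα
  have hα' : 0 ≤ 1 - α := sub_nonneg.2 hα1
  induction s using Finset.induction_on generalizing c with
  | empty => simp
  | insert i s hi ih =>
    rw [prod_insert hi, sum_insert hi, sum_insert hi]
    by_cases hN : N i = 0
    · simpa [hN] using ih c
    · have hclosed := mul_le_mul_of_nonneg_left (ih c) hα'
      have hopen : 0 ≤ α * ((c - t * N i - t * α * ∑ i ∈ s, N i) ^ 2 +
          t ^ 2 * (α * (1 - α)) * ∑ i ∈ s, N i ^ 2) := by positivity
      simp only [hN, if_false, mul_one]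
      linarith

theorem prod_one_sub_mul_meet_le {κ ι : Type*} [DecidableEq κ] [Fintype ι] {α : ℝ}
    (hα : α ∈ Set.Icc 0 1) (A : ι → Finset κ) (T : Finset κ) (t : ℝ) :
    ∏ i, (1 - α * meet (A i) T) ≤
      1 + -(2 * t * α) * ∑ i, (#(A i ∩ T) : ℝ) + t ^ 2 * α ^ 2 * (∑ i, (#(A i ∩ T) : ℝ)) ^ 2 +
        t ^ 2 * (α * (1 - α)) * ∑ i, (#(A i ∩ T) : ℝ) ^ 2 := by
  classical
  have hmeet (i : ι) : meet (A i) T = if (#(A i ∩ T) : ℝ) = 0 then 0 else 1 := by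
    simp only [meet, Nat.cast_eq_zero, card_eq_zero, nonempty_iff_ne_empty, ite_not]
  have h := sq_mul_prod_one_sub_le univ (fun i ↦ (#(A i ∩ T) : ℝ)) hα t 1
  simp only [← hmeet] at h
  linarith

section HitBound

variable {κ : Type*} [Fintype κ] {k : ℕ}

theorem mean_ringLaw_sum (hk : k ≤ Fintype.card κ) (w : κ → ℝ) :
    mean (ringLaw k) (fun T ↦ ∑ x ∈ T, w x) = (∑ x, w x) * (k / Fintype.card κ) := by
  classical
  have hind : (fun T ↦ ∑ x ∈ T, w x) = fun T ↦ ∑ x, w x * if x ∈ T then 1 else 0 := by ext; simp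
  rw [hind]
  simp only [mean_sum, mean_const_mul, mean_ringLaw_mem hk, sum_mul]

/-- Membership of distinct keys is negatively correlated, so the second moment is at most that of
independent membership. -/
theorem mean_ringLaw_sum_sq_le (hk : k ≤ Fintype.card κ) {w : κ → ℝ} (hw : 0 ≤ w) :
    mean (ringLaw k) (fun T ↦ (∑ x ∈ T, w x) ^ 2) ≤
      (∑ x, w x ^ 2) * (k / Fintype.card κ) + ((∑ x, w x) * (k / Fintype.card κ)) ^ 2 := by
  classical
  set d : ℝ := k / Fintype.card κ
  have hexpand (T : Finset κ) : (∑ x ∈ T, w x) ^ 2 =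
      ∑ x, ∑ y, w x * w y * ((if x ∈ T then 1 else 0) * if y ∈ T then 1 else 0) := by
    have hind : ∑ x ∈ T, w x = ∑ x, w x * if x ∈ T then 1 else 0 := by simp
    rw [hind, sq, sum_mul_sum]
    exact sum_congr rfl fun x _ ↦ sum_congr rfl fun y _ ↦ by ring
  have hpair (x y : κ) :
      mean (ringLaw k) (fun T ↦ (if x ∈ T then (1 : ℝ) else 0) * if y ∈ T then 1 else 0) ≤
        (if x = y then d else 0) + d ^ 2 := by
    rcases eq_or_ne x y with rfl | hxy
    · simpa only [ite_mul, one_mul, zero_mul, ite_self, ← ite_and, and_self, mean_ringLaw_mem hk,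
        if_true] using le_add_of_nonneg_right (sq_nonneg d)
    · simpa [hxy] using mean_ringLaw_mem_mul_mem_le hk hxy
  calc mean (ringLaw k) (fun T ↦ (∑ x ∈ T, w x) ^ 2)
      = ∑ x, ∑ y, w x * w y * mean (ringLaw k) fun T ↦
          (if x ∈ T then (1 : ℝ) else 0) * if y ∈ T then 1 else 0 := by
        simp only [hexpand, mean_sum, mean_const_mul]
    _ ≤ ∑ x, ∑ y, w x * w y * ((if x = y then d else 0) + d ^ 2) := by
        gcongr with x _ y _
        · exact mul_nonneg (hw x) (hw y)
        · exact hpair x y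
    _ = (∑ x, w x ^ 2) * d + ((∑ x, w x) * d) ^ 2 := by
        simp only [mul_add, sum_add_distrib, mul_ite, mul_zero, sum_ite_eq, mem_univ, if_true]
        rw [mul_pow, sq (∑ x, w x), sum_mul_sum, sum_mul, sum_mul]
        simp only [sum_mul, sq (w _)]

variable [DecidableEq κ]

theorem mean_ringLaw_card_inter (hk : k ≤ Fintype.card κ) (A : Finset κ) :
    mean (ringLaw k) (fun T ↦ (#(A ∩ T) : ℝ)) = #A * (k / Fintype.card κ) := by
  have hind (T : Finset κ) : (#(A ∩ T) : ℝ) = ∑ x ∈ T, if x ∈ A then 1 else 0 := by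
    rw [sum_boole, filter_mem_eq_inter, inter_comm]
  simp_rw [hind]
  rw [mean_ringLaw_sum hk, sum_boole, filter_univ_mem]

theorem mean_ringLaw_card_inter_sq_le (hk : k ≤ Fintype.card κ) (A : Finset κ) :
    mean (ringLaw k) (fun T ↦ (#(A ∩ T) : ℝ) ^ 2) ≤
      #A * (k / Fintype.card κ) * (1 + #A * (k / Fintype.card κ)) := by
  have hind (T : Finset κ) : (#(A ∩ T) : ℝ) = ∑ x ∈ T, if x ∈ A then 1 else 0 := by
    rw [sum_boole, filter_mem_eq_inter, inter_comm]
  simp only [hind]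
  refine (mean_ringLaw_sum_sq_le hk fun x ↦ by positivity).trans_eq ?_
  simp only [ite_pow, one_pow, zero_pow two_ne_zero, sum_boole, filter_univ_mem]
  ring

variable {ι : Type*} [Fintype ι]

theorem mean_ringLaw_sum_card_inter_sq_le (hk : k ≤ Fintype.card κ) {A : ι → Finset κ} {b : ℝ}
    (hload : ∀ x, keyLoad A x ≤ b) :
    mean (ringLaw k) (fun T ↦ (∑ i, (#(A i ∩ T) : ℝ)) ^ 2) ≤
      (∑ i, (#(A i) : ℝ)) * (k / Fintype.card κ) *
        (b + (∑ i, (#(A i) : ℝ)) * (k / Fintype.card κ)) := by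
  have hcount (T : Finset κ) : ∑ i, (#(A i ∩ T) : ℝ) = ∑ x ∈ T, (keyLoad A x : ℝ) := by
    exact_mod_cast (sum_keyLoad A T).symm
  have htotal : ∑ x, (keyLoad A x : ℝ) = ∑ i, (#(A i) : ℝ) := mod_cast sum_univ_keyLoad A
  have hsq : ∑ x, (keyLoad A x : ℝ) ^ 2 ≤ b * ∑ i, (#(A i) : ℝ) := by
    rw [← htotal, mul_sum]
    refine sum_le_sum fun x _ ↦ ?_
    rw [sq]
    exact mul_le_mul_of_nonneg_right (hload x) (by positivity)
  simp only [hcount]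
  refine (mean_ringLaw_sum_sq_le hk fun x ↦ by positivity).trans ?_
  rw [htotal]
  calc (∑ x, (keyLoad A x : ℝ) ^ 2) * (k / Fintype.card κ) + _
      ≤ b * (∑ i, (#(A i) : ℝ)) * (k / Fintype.card κ) + _ := by gcongr
    _ = _ := by ring

theorem mean_ringLaw_prod_one_sub_mul_meet_le_quadratic {K₁ : ℕ} (hk : k ≤ Fintype.card κ)
    {A : ι → Finset κ} (hA : ∀ i, #(A i) ≤ K₁) {M : ℝ} (hload : ∀ x, keyLoad A x ≤ 1 + M) {α : ℝ}
    (hα : α ∈ Set.Icc 0 1) {N d : ℝ} (hN : N = ∑ i, (#(A i) : ℝ)) (hd : d = k / Fintype.card κ)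
    (t : ℝ) :
    mean (ringLaw k) (fun T ↦ ∏ i, (1 - α * meet (A i) T)) ≤
      1 + -(2 * t * α) * (N * d) + t ^ 2 * α ^ 2 * (N * d * (1 + M + N * d)) +
        t ^ 2 * (α * (1 - α)) * (N * d * (1 + K₁ * d)) := by
  subst hN hd
  have : 0 ≤ α * (1 - α) := mul_nonneg hα.1 (sub_nonneg.2 hα.2)
  have hfirst : mean (ringLaw k) (fun T ↦ ∑ i, (#(A i ∩ T) : ℝ)) =
      (∑ i, (#(A i) : ℝ)) * (k / Fintype.card κ) := by
    rw [mean_sum, sum_mul]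
    exact sum_congr rfl fun i _ ↦ mean_ringLaw_card_inter hk (A i)
  have hdiag : mean (ringLaw k) (fun T ↦ ∑ i, (#(A i ∩ T) : ℝ) ^ 2) ≤
      (∑ i, (#(A i) : ℝ)) * (k / Fintype.card κ) * (1 + K₁ * (k / Fintype.card κ)) := by
    rw [mean_sum, sum_mul, sum_mul]
    refine sum_le_sum fun i _ ↦ (mean_ringLaw_card_inter_sq_le hk (A i)).trans ?_
    have : (#(A i) : ℝ) ≤ K₁ := mod_cast hA i
    gcongr
  refine (mean_mono (ringLaw_nonneg k) fun T ↦ prod_one_sub_mul_meet_le hα A T t).trans ?_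
  simp only [mean_add, mean_const_mul, mean_const (ringLaw_mem_stdSimplex hk), hfirst]
  gcongr
  exact mean_ringLaw_sum_card_inter_sq_le hk hload

/-- The bound is `b / (e + b)`, where `e` is the expected number of keys that the random ring
shares with the family over open channels, and `b = 1 + α M + K₁ k / P`. It comes from the second
moment of that number, with `t = 1 / (e + b)` in the quadratic bound. -/
theorem mean_ringLaw_prod_one_sub_mul_meet_le {K₁ : ℕ} (hk : k ≤ Fintype.card κ)
    {A : ι → Finset κ} (hA : ∀ i, #(A i) ≤ K₁) {M : ℝ} (hM : 0 ≤ M)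
    (hload : ∀ x, keyLoad A x ≤ 1 + M) {α : ℝ} (hα : α ∈ Set.Icc 0 1) :
    mean (ringLaw k) (fun T ↦ ∏ i, (1 - α * meet (A i) T)) ≤
      1 - α * (∑ i, (#(A i) : ℝ)) * (k / Fintype.card κ) /
        (α * (∑ i, (#(A i) : ℝ)) * (k / Fintype.card κ) +
          (1 + α * M + K₁ * (k / Fintype.card κ))) := by
  set d : ℝ := k / Fintype.card κ with hd
  set N : ℝ := ∑ i, (#(A i) : ℝ) with hN
  set e : ℝ := α * N * d with he
  set b : ℝ := 1 + α * M + K₁ * d with hb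
  have hquadratic := mean_ringLaw_prod_one_sub_mul_meet_le_quadratic hk hA hload hα hN hd
  have hα0 : 0 ≤ α := hα.1
  have hd0 : 0 ≤ d := by rw [hd]; positivity
  have hN0 : 0 ≤ N := sum_nonneg fun i _ ↦ Nat.cast_nonneg _
  clear_value d N e b
  have he0 : 0 ≤ e := by rw [he]; positivity
  have hb0 : 0 < b := by rw [hb]; positivity
  obtain ⟨t, ht⟩ : ∃ t, t * (e + b) = 1 :=
    ⟨(e + b)⁻¹, inv_mul_cancel₀ (by positivity)⟩
  have hb_le : α * (1 + M) + (1 - α) * (1 + K₁ * d) ≤ b := by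
    have : 0 ≤ α * (K₁ * d) := by positivity
    rw [hb]; linarith
  calc mean (ringLaw k) (fun T ↦ ∏ i, (1 - α * meet (A i) T))
      ≤ 1 - 2 * t * e + t ^ 2 * (e ^ 2 + e * (α * (1 + M) + (1 - α) * (1 + K₁ * d))) := by
        refine (hquadratic t).trans_eq ?_
        rw [he]; ring
    _ ≤ 1 - 2 * t * e + t ^ 2 * (e ^ 2 + e * b) := by gcongr
    _ = 1 - e / (e + b) := by
        rw [eq_sub_iff_add_eq, div_eq_of_eq_mul (by positivity) (by linear_combination -e * ht :
          e = t * e * (e + b))]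
        linear_combination t * e * ht

end HitBound

/-! ### Overloaded keys -/

section Excess

variable {κ : Type*} [DecidableEq κ] {ℓ k : ℕ} {M : ℝ}

theorem keyLoad_cons (B : Finset κ) (A : Fin ℓ → Finset κ) (x : κ) :
    keyLoad (Fin.cons B A : Fin (ℓ + 1) → Finset κ) x = (if x ∈ B then 1 else 0) + keyLoad A x := by
  simp only [keyLoad, card_filter, Fin.sum_univ_succ, Fin.cons_zero, Fin.cons_succ]

variable [Fintype κ]

/-- The keys that lie in more than `M` of the rings of the family `A`. -/
noncomputable def heavy {ι : Type*} [Fintype ι] (M : ℝ) (A : ι → Finset κ) : Finset κ :=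
  {x | M < keyLoad A x}

/-- Revealing the rings from the last to the first, the total number of keys that are already heavy
at the moment at which a new ring picks them. -/
noncomputable def excess (M : ℝ) : {ℓ : ℕ} → (Fin ℓ → Finset κ) → ℕ
  | 0, _ => 0
  | _ + 1, R => excess M (Fin.tail R) + #(R 0 ∩ heavy M (Fin.tail R))

theorem card_heavy_mul_le {ι : Type*} [Fintype ι] (hM : 0 ≤ M) (A : ι → Finset κ) :
    (#(heavy M A) : ℝ) * max 1 M ≤ ∑ i, (#(A i) : ℝ) := by
  rw [← nsmul_eq_mul, ← sum_const]
  calc ∑ _x ∈ heavy M A, max 1 M ≤ ∑ x ∈ heavy M A, (keyLoad A x : ℝ) := by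
        refine sum_le_sum fun x hx ↦ ?_
        have hx : M < keyLoad A x := (mem_filter.1 hx).2
        have hpos : 0 < keyLoad A x := mod_cast hM.trans_lt hx
        exact max_le (mod_cast hpos) hx.le
    _ ≤ ∑ x, (keyLoad A x : ℝ) := sum_le_univ_sum_of_nonneg fun x ↦ by positivity
    _ = ∑ i, (#(A i) : ℝ) := mod_cast sum_univ_keyLoad A

/-- From each ring delete the keys that are already heavy when it is revealed. -/
theorem exists_trim (hM : 0 ≤ M) (R : Fin ℓ → Finset κ) :
    ∃ A ≤ R, (∀ x, keyLoad A x ≤ 1 + M) ∧ ∑ i, #(A i) + excess M R = ∑ i, #(R i) := by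
  induction ℓ with
  | zero => exact ⟨R, le_rfl, fun x ↦ by simpa [keyLoad] using by positivity, by simp [excess]⟩
  | succ ℓ ih =>
    obtain ⟨A, hAR, hload, hcard⟩ := ih (Fin.tail R)
    refine ⟨Fin.cons (R 0 \ heavy M (Fin.tail R)) A, fun i ↦ ?_, fun x ↦ ?_, ?_⟩
    · cases i using Fin.cases with
      | zero => exact sdiff_subset
      | succ i => exact hAR i
    · rw [keyLoad_cons]
      split_ifs with hx
      · have hlight : (keyLoad (Fin.tail R) x : ℝ) ≤ M := by simpa [heavy] using (mem_sdiff.1 hx).2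
        have hmono : (keyLoad A x : ℝ) ≤ keyLoad (Fin.tail R) x := mod_cast keyLoad_mono hAR x
        push_cast
        linarith
      · simpa using hload x
    · have hsplit := card_sdiff_add_card_inter (R 0) (heavy M (Fin.tail R))
      simp only [Fin.sum_univ_succ, Fin.cons_zero, Fin.cons_succ, excess]
      change _ = _ + ∑ i, #(Fin.tail R i)
      omega

/-- Given the rings revealed before, at most a proportion `ζ` of the pool is heavy, so that each new
ring multiplies the generating function by at most a Poisson factor. -/
theorem mean_pow_excess_le (hk : k ≤ Fintype.card κ) (hM : 0 ≤ M) {ζ s : ℝ} (hζ : 0 ≤ ζ)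
    (hs : 1 ≤ s) (hload : (ℓ : ℝ) * k ≤ ζ * Fintype.card κ * max 1 M) :
    mean (iidLaw (ringLaw k)) (fun R : Fin ℓ → Finset κ ↦ s ^ excess M R) ≤
      Real.exp ((s - 1) * (k * ζ)) ^ ℓ := by
  have hlaw := ringLaw_mem_stdSimplex hk
  induction ℓ with
  | zero => simp [mean_iidLaw_zero, excess]
  | succ ℓ ih =>
    have hprev : (ℓ : ℝ) * k ≤ ζ * Fintype.card κ * max 1 M := hload.trans' (by gcongr; simp)
    have hnew (R : Fin ℓ → Finset κ) (hR : iidLaw (ringLaw k) R ≠ 0) :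
        mean (ringLaw k) (fun T ↦ s ^ excess M (Fin.cons T R : Fin (ℓ + 1) → Finset κ)) ≤
          Real.exp ((s - 1) * (k * ζ)) * s ^ excess M R := by
      have hheavy : (#(heavy M R) : ℝ) / Fintype.card κ ≤ ζ := by
        refine div_le_of_le_mul₀ (by positivity) hζ ?_
        refine le_of_mul_le_mul_right ?_ (by positivity : 0 < max 1 M)
        refine (card_heavy_mul_le hM R).trans (hprev.trans_eq' ?_)
        simp [card_eq_of_ringLaw_ne_zero (ne_zero_of_iidLaw_ne_zero hR _)]
      have : 0 ≤ s - 1 := sub_nonneg.2 hs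
      simp only [excess, Fin.tail_cons, Fin.cons_zero, pow_add, mean_const_mul]
      rw [mul_comm]
      gcongr
      exact (mean_ringLaw_pow_card_inter_le hk _ hs).trans (by gcongr)
    rw [mean_iidLaw_succ, pow_succ']
    refine (mean_mono_of_support (iidLaw_mem_stdSimplex hlaw).1 hnew).trans ?_
    rw [mean_const_mul]
    gcongr
    exact ih hprev

/-- Chernoff bound, from the generating function at `1 / ζ`. -/
theorem mean_excess_gt_le (hk : k ≤ Fintype.card κ) (hM : 0 ≤ M) {ζ : ℝ} (hζ0 : 0 < ζ) (hζ1 : ζ ≤ 1)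
    (hload : (ℓ : ℝ) * k ≤ ζ * Fintype.card κ * max 1 M) (δ : ℝ) :
    mean (iidLaw (ringLaw k))
        (fun R : Fin ℓ → Finset κ ↦ if δ * (ℓ * k) < excess M R then 1 else 0) ≤
      (Real.exp k * ζ ^ (δ * k)) ^ ℓ := by
  have hmarkov (R : Fin ℓ → Finset κ) : (if δ * (ℓ * k) < excess M R then (1 : ℝ) else 0) ≤
      ζ ^ (δ * (ℓ * k)) * ζ⁻¹ ^ excess M R := by
    split_ifs with h
    · rw [← Real.rpow_natCast, Real.inv_rpow hζ0.le, ← div_eq_mul_inv,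
        one_le_div (Real.rpow_pos_of_pos hζ0 _)]
      exact Real.rpow_le_rpow_of_exponent_ge hζ0 hζ1 h.le
    · positivity
  have hexp : (ζ⁻¹ - 1) * (k * ζ) ≤ k := by
    have : (ζ⁻¹ - 1) * (k * ζ) = k - k * ζ := by field_simp
    rw [this]
    exact sub_le_self _ (by positivity)
  calc _ ≤ ζ ^ (δ * (ℓ * k)) *
          mean (iidLaw (ringLaw k)) fun R : Fin ℓ → Finset κ ↦ ζ⁻¹ ^ excess M R := by
        rw [← mean_const_mul]
        exact mean_mono (iidLaw_mem_stdSimplex (ringLaw_mem_stdSimplex hk)).1 hmarkov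
    _ ≤ ζ ^ (δ * (ℓ * k)) * Real.exp k ^ ℓ := by
        gcongr
        refine (mean_pow_excess_le hk hM hζ0.le ((one_le_inv₀ hζ0).2 hζ1) hload).trans ?_
        gcongr
    _ = (Real.exp k * ζ ^ (δ * k)) ^ ℓ := by
        rw [mul_pow, ← Real.rpow_mul_natCast hζ0.le, mul_comm]
        ring_nf

end Excess

/-! ### The probability that a new vertex misses a set of vertices -/

section Miss

variable {C κ : Type*} [Fintype C] [Fintype κ] {μ : C → ℝ} {K : C → ℕ}

/-- The joint mass function of the class and the ring of one vertex. -/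
noncomputable def nodeLaw (μ : C → ℝ) (K : C → ℕ) (v : C × Finset κ) : ℝ :=
  μ v.1 * ringLaw (K v.1) v.2

theorem mean_nodeLaw (μ : C → ℝ) (K : C → ℕ) (f : C × Finset κ → ℝ) :
    mean (nodeLaw μ K) f = mean μ fun j ↦ mean (ringLaw (K j)) fun T ↦ f (j, T) := by
  simp only [mean, Fintype.sum_prod_type, nodeLaw, mul_sum, mul_assoc]

theorem nodeLaw_mem_stdSimplex (hμ : μ ∈ stdSimplex ℝ C) (hK : ∀ j, K j ≤ Fintype.card κ) :
    (nodeLaw μ K : C × Finset κ → ℝ) ∈ stdSimplex ℝ (C × Finset κ) := by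
  refine ⟨fun v ↦ mul_nonneg (hμ.1 v.1) (ringLaw_nonneg _ v.2), ?_⟩
  have h := mean_nodeLaw (κ := κ) μ K fun _ ↦ 1
  simp only [mean_const (ringLaw_mem_stdSimplex (hK _)), mean_const hμ] at h
  simpa [mean] using h

theorem mean_nodeLaw_snd_le (hμ : μ ∈ stdSimplex ℝ C) (hK : ∀ j, K j ≤ Fintype.card κ) {k : ℕ}
    (hk : ∀ j, k ≤ K j) {f : Finset κ → ℝ} (hf : Antitone f) :
    mean (nodeLaw μ K) (f ∘ Prod.snd) ≤ mean (ringLaw k) f := by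
  rw [mean_nodeLaw]
  refine (mean_mono hμ.1 fun j ↦ ?_).trans_eq (mean_const hμ _)
  exact mean_ringLaw_antitone (hk j) (hK j) hf

variable {ι : Type*} [Fintype ι] [DecidableEq κ] {α : ℝ}

/-- The probability that a new random vertex is adjacent to none of the vertices with the rings
`A i`. -/
noncomputable def missProb (μ : C → ℝ) (K : C → ℕ) (α : ℝ) (A : ι → Finset κ) : ℝ :=
  mean μ fun j ↦ mean (ringLaw (K j)) fun T ↦ ∏ i, (1 - α * meet (A i) T)

theorem missProb_nonneg (hμ : μ ∈ stdSimplex ℝ C) (hα : α ∈ Set.Icc 0 1) (A : ι → Finset κ) :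
    0 ≤ missProb μ K α A :=
  mean_nonneg hμ.1 fun j ↦ mean_nonneg (ringLaw_nonneg (K j)) fun T ↦
    prod_nonneg fun i _ ↦ one_sub_mul_meet_nonneg hα (A i) T

theorem missProb_antitone (hμ : μ ∈ stdSimplex ℝ C) (hα : α ∈ Set.Icc 0 1) :
    Antitone (missProb μ K α : (ι → Finset κ) → ℝ) := fun A B hAB ↦ by
  refine mean_mono hμ.1 fun j ↦ mean_mono (ringLaw_nonneg (K j)) fun T ↦ ?_
  refine prod_le_prod (fun i _ ↦ one_sub_mul_meet_nonneg hα (B i) T) fun i _ ↦ ?_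
  exact sub_le_sub_left (mul_le_mul_of_nonneg_left (meet_mono (hAB i) T) hα.1) 1

theorem missProb_le_one (hμ : μ ∈ stdSimplex ℝ C) (hK : ∀ j, K j ≤ Fintype.card κ)
    (hα : α ∈ Set.Icc 0 1) (A : ι → Finset κ) : missProb μ K α A ≤ 1 :=
  mean_le_one hμ fun j ↦ mean_le_one (ringLaw_mem_stdSimplex (hK j)) fun T ↦
    prod_le_one (fun i _ ↦ one_sub_mul_meet_nonneg hα (A i) T)
      fun i _ ↦ one_sub_mul_meet_le_one hα.1 (A i) T

/-- An upper bound for `missProb` at `ℓ` rings that retain a proportion `1 - δ` of `ℓ * k` ring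
entries, when no key lies in more than `1 + M` of these rings and the pool has `P` keys. -/
noncomputable def missBound (μ : C → ℝ) (K : C → ℕ) (k P : ℕ) (α : ℝ) (ℓ : ℕ) (δ M : ℝ) : ℝ :=
  1 - mean μ fun j ↦ (1 - δ) * (α * (ℓ * k) * (K j / P)) /
    (α * (ℓ * k) * (K j / P) + (1 + α * M + k * (K j / P)))

theorem missBound_nonneg (hμ : μ ∈ stdSimplex ℝ C) (k P : ℕ) (hα : 0 ≤ α) (ℓ : ℕ) {δ M : ℝ}
    (hδ : 0 ≤ δ) (hM : 0 ≤ M) : 0 ≤ missBound μ K k P α ℓ δ M := by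
  refine sub_nonneg.2 (mean_le_one hμ fun j ↦ ?_)
  refine div_le_one_of_le₀ ?_ (by positivity)
  have hload : 0 ≤ α * (ℓ * k) * (K j / P : ℝ) := by positivity
  have hrest : 0 ≤ 1 + α * M + k * (K j / P : ℝ) := by positivity
  nlinarith

theorem missProb_le_missBound {k : ℕ} (hμ : μ ∈ stdSimplex ℝ C) (hK : ∀ j, K j ≤ Fintype.card κ)
    (hα : α ∈ Set.Icc 0 1) {A : ι → Finset κ} (hA : ∀ i, #(A i) ≤ k) {M : ℝ} (hM : 0 ≤ M)
    (hload : ∀ x, keyLoad A x ≤ 1 + M) {δ : ℝ} (hδ0 : 0 ≤ δ) (hδ1 : δ ≤ 1)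
    (htotal : (1 - δ) * (Fintype.card ι * k) ≤ ∑ i, (#(A i) : ℝ)) :
    missProb μ K α A ≤ missBound μ K k (Fintype.card κ) α (Fintype.card ι) δ M := by
  have hα0 : 0 ≤ α := hα.1
  rw [missBound, ← mean_one_sub hμ]
  refine mean_mono hμ.1 fun j ↦
    (mean_ringLaw_prod_one_sub_mul_meet_le (hK j) hA hM hload hα).trans (sub_le_sub_left ?_ 1)
  set d : ℝ := K j / Fintype.card κ
  have hd : 0 ≤ d := by positivity
  have hb : 0 < 1 + α * M + k * d := by positivity
  have hm : 0 ≤ α * (Fintype.card ι * k) * d := by positivity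
  have hm' : (1 - δ) * (α * (Fintype.card ι * k) * d) ≤ α * (∑ i, (#(A i) : ℝ)) * d := by
    have := mul_le_mul_of_nonneg_left htotal (mul_nonneg hα0 hd)
    linarith
  generalize α * (∑ i, (#(A i) : ℝ)) * d = e at *
  generalize α * (Fintype.card ι * k) * d = m at *
  generalize 1 + α * M + k * d = b at *
  have he : 0 ≤ e := hm'.trans' (mul_nonneg (sub_nonneg.2 hδ1) hm)
  rw [div_le_div_iff₀ (by linarith) (by linarith)]
  nlinarith [mul_nonneg hδ0 (mul_nonneg hm he)]

/-- Unless too many ring entries are overloaded, trimming the rings only increases `missProb` and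
makes `missProb_le_missBound` applicable. -/
theorem mean_missProb_pow_le {k ℓ : ℕ} (hμ : μ ∈ stdSimplex ℝ C)
    (hK : ∀ j, K j ≤ Fintype.card κ) (hk : k ≤ Fintype.card κ) (hα : α ∈ Set.Icc 0 1)
    {M ζ δ : ℝ} (hM : 0 ≤ M) (hδ0 : 0 ≤ δ) (hδ1 : δ ≤ 1) (hζ0 : 0 < ζ) (hζ1 : ζ ≤ 1)
    (hload : (ℓ : ℝ) * k ≤ ζ * Fintype.card κ * max 1 M) (N : ℕ) :
    mean (iidLaw (ringLaw k)) (fun R : Fin ℓ → Finset κ ↦ missProb μ K α R ^ N) ≤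
      (Real.exp k * ζ ^ (δ * k)) ^ ℓ + missBound μ K k (Fintype.card κ) α ℓ δ M ^ N := by
  have hlaw : (iidLaw (ringLaw k) : (Fin ℓ → Finset κ) → ℝ) ∈ stdSimplex ℝ _ :=
    iidLaw_mem_stdSimplex (ringLaw_mem_stdSimplex hk)
  have hpointwise (R : Fin ℓ → Finset κ) (hR : iidLaw (ringLaw k) R ≠ 0) :
      missProb μ K α R ^ N ≤ (if δ * (ℓ * k) < excess M R then 1 else 0) +
        missBound μ K k (Fintype.card κ) α ℓ δ M ^ N := by
    have hmiss := missProb_nonneg (K := K) hμ hα R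
    split_ifs with hexcess
    · exact le_add_of_le_of_nonneg (pow_le_one₀ hmiss (missProb_le_one hμ hK hα R))
        (pow_nonneg (missBound_nonneg hμ k _ hα.1 ℓ hδ0 hM) N)
    · have hcard (i : Fin ℓ) : #(R i) = k :=
        card_eq_of_ringLaw_ne_zero (ne_zero_of_iidLaw_ne_zero hR i)
      obtain ⟨A, hAR, hAload, hAcard⟩ := exists_trim hM R
      have htotal : (∑ i, (#(A i) : ℝ)) + excess M R = ℓ * k := by
        simp only [hcard, sum_const, card_univ, Fintype.card_fin, smul_eq_mul] at hAcard
        exact_mod_cast hAcard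
      have htrim := missProb_le_missBound hμ hK hα
        (fun i ↦ (card_le_card (hAR i)).trans_eq (hcard i)) hM hAload hδ0 hδ1
        (by rw [Fintype.card_fin]; linarith)
      rw [Fintype.card_fin] at htrim
      rw [zero_add]
      exact pow_le_pow_left₀ hmiss ((missProb_antitone hμ hα hAR).trans htrim) N
  calc _ ≤ _ := mean_mono_of_support hlaw.1 hpointwise
    _ = _ := by rw [mean_add, mean_const hlaw]
    _ ≤ _ := by gcongr; exact mean_excess_gt_le hk hM hζ0 hζ1 hload δ

end Miss

/-! ### The configuration law -/

section IidSplit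

variable {ι V : Type*} [Fintype ι] [DecidableEq ι]

theorem prod_coe_mul_prod_notMem {M : Type*} [CommMonoid M] (S : Finset ι) (f : ι → M) :
    (∏ x : S, f x) * ∏ y : {y // y ∉ S}, f y = ∏ x, f x := by
  rw [prod_coe_sort, ← prod_mul_prod_compl S f]
  congr 1
  exact (prod_subtype _ (fun _ ↦ mem_compl) f).symm

variable [Fintype V]

theorem mean_iidLaw_prod (p f : V → ℝ) :
    mean (iidLaw p) (fun v : ι → V ↦ ∏ i, f (v i)) = mean p f ^ Fintype.card ι := by
  simp only [mean, iidLaw, ← prod_mul_distrib]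
  rw [← Fintype.prod_sum fun (_ : ι) a ↦ p a * f a, prod_const, card_univ]

/-- Given the draws in `S`, the draws outside `S` are independent and contribute equal factors. -/
theorem mean_iidLaw_mul_prod_compl (S : Finset ι) (p : V → ℝ) (F : (S → V) → ℝ)
    (g : (S → V) → V → ℝ) :
    mean (iidLaw p) (fun v : ι → V ↦ F (fun x ↦ v x) * ∏ y ∈ Sᶜ, g (fun x ↦ v x) (v y)) =
      mean (iidLaw p) fun w : S → V ↦ F w * mean p (g w) ^ (Fintype.card ι - #S) := by
  have hcard : Fintype.card ι - #S = Fintype.card {y // y ∉ S} := by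
    rw [Fintype.card_subtype_compl, Fintype.card_coe]
  have hsplit := (Equiv.piEquivPiSubtypeProd (· ∈ S) fun _ ↦ V).sum_comp fun q ↦
    iidLaw p q.1 * iidLaw p q.2 * (F q.1 * ∏ y, g q.1 (q.2 y))
  simp only [hcard, ← mean_iidLaw_prod, ← mean_const_mul]
  simp only [mean, mul_sum, ← mul_assoc] at hsplit ⊢
  rw [Fintype.sum_prod_type] at hsplit
  rw [← hsplit]
  refine sum_congr rfl fun v _ ↦ ?_
  rw [prod_subtype Sᶜ fun _ ↦ mem_compl, iidLaw, ← prod_coe_mul_prod_notMem S fun x ↦ p (v x)]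
  rfl

end IidSplit

section Channels

variable {n : ℕ} {α : ℝ}

/-- The joint mass function of the channels: independent Bernoulli(`α`) off the diagonal, and
`false` on it. -/
noncomputable def channelLaw (α : ℝ) (B : Sym2 (Fin n) → Bool) : ℝ :=
  ∏ e : Sym2 (Fin n), if e.IsDiag then (if B e then 0 else 1) else (if B e then α else 1 - α)

theorem channelLaw_nonneg (hα : α ∈ Set.Icc 0 1) (B : Sym2 (Fin n) → Bool) :
    0 ≤ channelLaw α B := by
  have := sub_nonneg.2 hα.2
  refine prod_nonneg fun e _ ↦ ?_
  split_ifs <;> first | positivity | exact hα.1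

theorem mean_channelLaw_forall_eq_false (α : ℝ) {E : Finset (Sym2 (Fin n))}
    (hE : ∀ e ∈ E, ¬ e.IsDiag) :
    mean (channelLaw α) ({B | ∀ e ∈ E, B e = false}.indicator 1) = (1 - α) ^ #E := by
  have hind (B : Sym2 (Fin n) → Bool) :
      Set.indicator {B | ∀ e ∈ E, B e = false} 1 B =
        ∏ e : Sym2 (Fin n), if e ∈ E ∧ B e then (0 : ℝ) else 1 := by
    simp only [Set.indicator_apply, Set.mem_ofPred_eq, Pi.one_apply]
    split_ifs with h
    · refine (prod_eq_one fun e _ ↦ if_neg ?_).symm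
      rintro ⟨heE, heB⟩
      simp [h e heE] at heB
    · push Not at h
      obtain ⟨e, heE, heB⟩ := h
      exact (prod_eq_zero (i := e) (mem_univ e) (by simpa [heE] using heB)).symm
  have hfactor (e : Sym2 (Fin n)) :
      ∑ b : Bool, (if e.IsDiag then (if b then 0 else 1) else (if b then α else 1 - α)) *
        (if e ∈ E ∧ b then 0 else 1) = if e ∈ E then 1 - α else 1 := by
    by_cases he : e ∈ E
    · simp [he, hE e he]
    · by_cases hdiag : e.IsDiag <;> simp [he, hdiag]
  simp only [mean, hind, channelLaw, ← prod_mul_distrib]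
  rw [← Fintype.prod_sum fun (e : Sym2 (Fin n)) (b : Bool) ↦
    (if e.IsDiag then (if b then 0 else 1) else (if b then α else 1 - α)) *
      (if e ∈ E ∧ b then 0 else 1)]
  simp only [hfactor, prod_ite_mem, univ_inter, prod_const]

theorem sum_channelLaw (α : ℝ) : ∑ B : Sym2 (Fin n) → Bool, channelLaw α B = 1 := by
  simpa [mean] using mean_channelLaw_forall_eq_false (n := n) α (E := ∅) (by simp)

end Channels

section Cut

variable {n r P : ℕ} {μ : Fin (r + 1) → ℝ} {K : Fin (r + 1) → ℕ} {α : ℝ}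

theorem mean_wt (μ : Fin (r + 1) → ℝ) (K : Fin (r + 1) → ℕ) (α : ℝ) (f : Config n r P → ℝ) :
    mean (wt μ K α) f = mean (iidLaw (nodeLaw μ K)) fun v ↦
      mean (channelLaw α) fun B ↦ f (fun x ↦ (v x).1, fun x ↦ (v x).2, B) := by
  rw [mean, mean, Fintype.sum_prod_type]
  simp only [Fintype.sum_prod_type]
  rw [← (Equiv.arrowProdEquivProdArrow (Fin n) _ _).symm.sum_comp, Fintype.sum_prod_type]
  refine sum_congr rfl fun t _ ↦ sum_congr rfl fun R _ ↦ ?_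
  simp only [Equiv.arrowProdEquivProdArrow, Equiv.coe_fn_symm_mk]
  rw [mean, mul_sum]
  refine sum_congr rfl fun B _ ↦ ?_
  simp only [wt, iidLaw, nodeLaw, ringLaw, channelLaw, prod_mul_distrib, Fintype.card_fin]
  ring

theorem wt_mem_stdSimplex (hμ : μ ∈ stdSimplex ℝ (Fin (r + 1))) (hK : ∀ j, K j ≤ P)
    (hα : α ∈ Set.Icc 0 1) : wt μ K α ∈ stdSimplex ℝ (Config n r P) := by
  refine ⟨fun c ↦ ?_, ?_⟩
  · refine mul_nonneg (mul_nonneg (prod_nonneg fun x _ ↦ hμ.1 _) (prod_nonneg fun x _ ↦ ?_))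
      (channelLaw_nonneg hα c.2.2)
    split_ifs <;> positivity
  · have hnode : (nodeLaw μ K : _ × Finset (Fin P) → ℝ) ∈ stdSimplex ℝ _ :=
      nodeLaw_mem_stdSimplex hμ (by simpa using hK)
    have h := mean_wt (n := n) (P := P) μ K α fun _ ↦ 1
    simpa [mean, sum_channelLaw, (iidLaw_mem_stdSimplex hnode).2] using h

theorem pr_eq_mean (μ : Fin (r + 1) → ℝ) (K : Fin (r + 1) → ℕ) (α : ℝ)
    (E : Config n r P → Prop) : pr μ K α E = mean (wt μ K α) ({c | E c}.indicator 1) := by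
  refine sum_congr rfl fun c _ ↦ ?_
  by_cases hE : E c <;> simp [hE]

theorem pr_nonneg (hμ : μ ∈ stdSimplex ℝ (Fin (r + 1))) (hK : ∀ j, K j ≤ P)
    (hα : α ∈ Set.Icc 0 1) (E : Config n r P → Prop) : 0 ≤ pr μ K α E := by
  rw [pr_eq_mean]
  exact mean_nonneg (wt_mem_stdSimplex hμ hK hα).1 (Set.indicator_nonneg fun _ _ ↦ zero_le_one)

theorem pr_mono (hμ : μ ∈ stdSimplex ℝ (Fin (r + 1))) (hK : ∀ j, K j ≤ P)
    (hα : α ∈ Set.Icc 0 1) {E E' : Config n r P → Prop} (h : ∀ c, E c → E' c) :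
    pr μ K α E ≤ pr μ K α E' := by
  simp only [pr_eq_mean]
  exact mean_mono (wt_mem_stdSimplex hμ hK hα).1
    (Set.indicator_le_indicator_of_subset h fun _ ↦ zero_le_one)

theorem pr_eq_one_sub_pr_not (hμ : μ ∈ stdSimplex ℝ (Fin (r + 1))) (hK : ∀ j, K j ≤ P)
    (hα : α ∈ Set.Icc 0 1) (E : Config n r P → Prop) :
    pr μ K α E = 1 - pr μ K α fun c ↦ ¬ E c := by
  simp only [pr_eq_mean, ← mean_one_sub (wt_mem_stdSimplex hμ hK hα)]
  congr 1
  ext c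
  by_cases hE : E c <;> simp [hE]

theorem pr_exists_le (hμ : μ ∈ stdSimplex ℝ (Fin (r + 1))) (hK : ∀ j, K j ≤ P)
    (hα : α ∈ Set.Icc 0 1) {ι : Type*} (s : Finset ι) (E : ι → Config n r P → Prop) :
    pr μ K α (fun c ↦ ∃ i ∈ s, E i c) ≤ ∑ i ∈ s, pr μ K α (E i) := by
  simp only [pr_eq_mean, ← mean_sum]
  refine mean_mono (wt_mem_stdSimplex hμ hK hα).1 fun c ↦ ?_
  have hnonneg (i : ι) : 0 ≤ {c | E i c}.indicator (1 : Config n r P → ℝ) c :=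
    Set.indicator_nonneg (fun _ _ ↦ zero_le_one) c
  refine Set.indicator_apply_le' (fun ⟨i, hi, hE⟩ ↦ ?_) fun _ ↦ sum_nonneg fun i _ ↦ hnonneg i
  refine le_trans (le_of_eq ?_) (single_le_sum (fun i _ ↦ hnonneg i) hi)
  exact (Set.indicator_of_mem (s := {c | E i c}) hE 1).symm

/-- The event that no edge joins `S` to its complement. -/
def NoCross (S : Finset (Fin n)) (c : Config n r P) : Prop := ∀ x ∈ S, ∀ y ∉ S, ¬ Adj c x y

/-- Given the rings, the pairs across the cut are independent. -/
theorem mean_channelLaw_noCross (α : ℝ) (S : Finset (Fin n)) (t : Fin n → Fin (r + 1))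
    (R : Fin n → Finset (Fin P)) :
    mean (channelLaw α) (fun B ↦ {c | NoCross S c}.indicator 1 (t, R, B)) =
      ∏ y ∈ Sᶜ, ∏ x : S, (1 - α * meet (R x) (R y)) := by
  set crossing : Finset (Fin n × Fin n) := {p ∈ S ×ˢ Sᶜ | (R p.1 ∩ R p.2).Nonempty}
  have hcrossing {p : Fin n × Fin n} :
      p ∈ crossing ↔ p.1 ∈ S ∧ p.2 ∉ S ∧ (R p.1 ∩ R p.2).Nonempty := by
    simp [crossing, and_assoc]
  have hdiag : ∀ e ∈ crossing.image fun p ↦ s(p.1, p.2), ¬ e.IsDiag := by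
    simp only [forall_mem_image, Sym2.mk_isDiag_iff]
    exact fun p hp h ↦ (hcrossing.1 hp).2.1 (h ▸ (hcrossing.1 hp).1)
  have hinj : Set.InjOn (fun p : Fin n × Fin n ↦ s(p.1, p.2)) crossing := by
    rintro ⟨x, y⟩ hp ⟨x', y'⟩ hp' h
    rcases Sym2.eq_iff.1 h with ⟨rfl, rfl⟩ | ⟨rfl, rfl⟩
    · rfl
    · exact absurd (hcrossing.1 hp).1 (hcrossing.1 hp').2.1
  have hevent (B : Sym2 (Fin n) → Bool) : NoCross S (t, R, B) ↔
      ∀ e ∈ crossing.image fun p ↦ s(p.1, p.2), B e = false := by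
    simp only [forall_mem_image, Prod.forall, hcrossing, NoCross, Adj, not_and, Bool.not_eq_true]
    exact ⟨fun h x y ⟨hx, hy, hR⟩ ↦ h x hx y hy (fun hxy ↦ hy (hxy ▸ hx)) hR,
      fun h x hx y hy _ hR ↦ h x y ⟨hx, hy, hR⟩⟩
  have hind : (fun B ↦ {c | NoCross S c}.indicator (1 : Config n r P → ℝ) (t, R, B)) =
      {B | ∀ e ∈ crossing.image fun p ↦ s(p.1, p.2), B e = false}.indicator 1 := by
    ext B
    exact Set.indicator_eq_indicator (hevent B) rfl
  rw [hind, mean_channelLaw_forall_eq_false α hdiag, card_image_of_injOn hinj]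
  calc (1 - α) ^ #crossing
    _ = ∏ p ∈ S ×ˢ Sᶜ, (1 - α * meet (R p.1) (R p.2)) := by
      rw [← prod_const, prod_filter]
      refine prod_congr rfl fun p _ ↦ ?_
      split_ifs with h <;> simp [meet, h]
    _ = _ := by
      rw [prod_product_right]
      exact prod_congr rfl fun y _ ↦ (prod_coe_sort S _).symm

/-- Conditionally on the vertices of `S`, each of the `n - #S` other vertices misses `S`
independently with probability `missProb`. -/
theorem mean_wt_mul_noCross (μ : Fin (r + 1) → ℝ) (K : Fin (r + 1) → ℕ) (α : ℝ)
    (S : Finset (Fin n)) (F : (S → Fin (r + 1) × Finset (Fin P)) → ℝ) :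
    mean (wt μ K α) (fun c ↦ F (fun x ↦ (c.1 x, c.2.1 x)) * {c | NoCross S c}.indicator 1 c) =
      mean (iidLaw (nodeLaw μ K)) fun w ↦
        F w * missProb μ K α (fun x ↦ (w x).2) ^ (n - #S) := by
  simp only [mean_wt, mean_const_mul, mean_channelLaw_noCross]
  have h := mean_iidLaw_mul_prod_compl S (nodeLaw μ K) F
    fun w u ↦ ∏ x, (1 - α * meet (w x).2 u.2)
  simp only [Fintype.card_fin, mean_nodeLaw] at h
  exact h

theorem mean_iidLaw_missProb_pow_congr {C κ ι ι' V : Type*} [Fintype C] [Fintype κ]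
    [DecidableEq κ] [Fintype ι] [DecidableEq ι] [Fintype ι'] [DecidableEq ι'] [Fintype V]
    (e : ι ≃ ι') (μ : C → ℝ) (K : C → ℕ) (α : ℝ) (p : V → ℝ) (ring : V → Finset κ) (N : ℕ) :
    mean (iidLaw p) (fun v : ι → V ↦ missProb μ K α (ring ∘ v) ^ N) =
      mean (iidLaw p) fun v : ι' → V ↦ missProb μ K α (ring ∘ v) ^ N := by
  rw [← mean_iidLaw_comp_equiv e]
  congr 1
  ext v
  simp only [missProb, Function.comp_apply]
  congr 3
  ext j
  congr 1
  ext T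
  exact e.prod_comp fun i ↦ 1 - α * meet (ring (v i)) T

theorem pr_noCross_le (hμ : μ ∈ stdSimplex ℝ (Fin (r + 1))) (hKmono : Monotone K)
    (hK : ∀ j, K j ≤ P) (hα : α ∈ Set.Icc 0 1) {S : Finset (Fin n)} {ℓ : ℕ} (hS : #S = ℓ) :
    pr μ K α (NoCross S : Config n r P → Prop) ≤
      mean (iidLaw (ringLaw (K 0))) fun R : Fin ℓ → Finset (Fin P) ↦
        missProb μ K α R ^ (n - ℓ) := by
  have hcut := mean_wt_mul_noCross (P := P) μ K α S fun _ ↦ 1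
  have hK' : ∀ j, K j ≤ Fintype.card (Fin P) := by simpa using hK
  have hanti : Antitone fun R : Fin ℓ → Finset (Fin P) ↦ missProb μ K α R ^ (n - ℓ) :=
    fun A B hAB ↦ pow_le_pow_left₀ (missProb_nonneg hμ hα B) (missProb_antitone hμ hα hAB) _
  simp only [one_mul, hS] at hcut
  rw [pr_eq_mean]
  refine (hcut.trans (mean_iidLaw_missProb_pow_congr (equivFinOfCardEq hS) μ K α _ Prod.snd
    (n - ℓ))).trans_le ?_
  exact mean_iidLaw_le_of_antitone (nodeLaw_mem_stdSimplex hμ hK').1 (ringLaw_nonneg _) Prod.snd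
    (fun f hf ↦ mean_nodeLaw_snd_le hμ hK' (fun j ↦ hKmono (Fin.zero_le j)) hf) hanti

theorem mean_iidLaw_nodeLaw_class {C κ ι : Type*} [Fintype C] [Fintype κ] [Fintype ι]
    [DecidableEq ι] (μ : C → ℝ) (K : C → ℕ) (j : C) (F : (ι → Finset κ) → ℝ) :
    mean (iidLaw (nodeLaw μ K)) (fun v : ι → C × Finset κ ↦
      {v | ∀ i, (v i).1 = j}.indicator 1 v * F (Prod.snd ∘ v)) =
      μ j ^ Fintype.card ι * mean (iidLaw (ringLaw (K j))) F := by
  classical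
  rw [mean, ← (Equiv.arrowProdEquivProdArrow ι _ _).symm.sum_comp, Fintype.sum_prod_type,
    sum_eq_single fun _ ↦ j]
  · simp [Equiv.arrowProdEquivProdArrow, iidLaw, nodeLaw, prod_mul_distrib, mean, mul_sum,
      mul_assoc, Function.comp_def]
  · intro t _ ht
    have hclass : ¬ ∀ i, t i = j := fun h ↦ ht (funext h)
    simp [Equiv.arrowProdEquivProdArrow, hclass]
  · simp

theorem pr_noCross_and_class (μ : Fin (r + 1) → ℝ) (K : Fin (r + 1) → ℕ) (α : ℝ)
    (j : Fin (r + 1)) {S : Finset (Fin n)} {ℓ : ℕ} (hS : #S = ℓ) :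
    pr μ K α (fun c : Config n r P ↦ NoCross S c ∧ ∀ x ∈ S, c.1 x = j) =
      μ j ^ ℓ * mean (iidLaw (ringLaw (K j))) fun R : Fin ℓ → Finset (Fin P) ↦
        missProb μ K α R ^ (n - ℓ) := by
  have hevent : {c | NoCross S c ∧ ∀ x ∈ S, c.1 x = j}.indicator (1 : Config n r P → ℝ) =
      fun c ↦ {v : S → Fin (r + 1) × Finset (Fin P) | ∀ x, (v x).1 = j}.indicator 1
        (fun x ↦ (c.1 x, c.2.1 x)) * {c | NoCross S c}.indicator 1 c := by
    ext c
    by_cases hclass : ∀ x ∈ S, c.1 x = j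
    · by_cases hcross : NoCross S c
      · have hmem : c ∈ {c | NoCross S c ∧ ∀ x ∈ S, c.1 x = j} := ⟨hcross, hclass⟩
        rw [Set.indicator_of_mem hmem,
          Set.indicator_of_mem (by simpa using hclass),
          Set.indicator_of_mem (show c ∈ {c | NoCross S c} from hcross)]
        simp
      · simp [hcross]
    · simp [hclass]
  rw [pr_eq_mean, hevent, mean_wt_mul_noCross]
  refine (mean_iidLaw_nodeLaw_class μ K j fun R ↦ missProb μ K α R ^ (n - #S)).trans ?_
  rw [Fintype.card_coe, hS]
  congr 1
  exact mean_iidLaw_missProb_pow_congr (equivFinOfCardEq hS) μ K α _ id (n - ℓ)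

end Cut

/-! ### Disconnecting cuts -/

section Graph

variable {n r P : ℕ} {c : Config n r P}

theorem Adj.symm {x y : Fin n} (h : Adj c x y) : Adj c y x :=
  ⟨h.1.symm, inter_comm (c.2.1 x) _ ▸ h.2.1, Sym2.eq_swap (a := x) ▸ h.2.2⟩

theorem graphOf_adj {x y : Fin n} : (graphOf c).Adj x y ↔ Adj c x y := by
  rw [graphOf, SimpleGraph.fromRel_adj]
  exact ⟨fun ⟨hne, h⟩ ↦ h.elim (⟨hne, ·⟩) fun h ↦ Adj.symm ⟨hne.symm, h⟩,
    fun h ↦ ⟨h.1, Or.inl h.2⟩⟩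

theorem noCross_singleton_iff {x : Fin n} : NoCross {x} c ↔ Isolated c x := by
  simp only [NoCross, mem_singleton, forall_eq]
  exact ⟨fun h y hxy ↦ h y hxy.1.symm hxy, fun h y _ ↦ h y⟩

theorem NoCross.compl {S : Finset (Fin n)} (h : NoCross S c) : NoCross Sᶜ c :=
  fun x hx y hy hxy ↦ h y (not_not.1 (mem_compl.not.1 hy)) x (mem_compl.1 hx) hxy.symm

theorem exists_noCross_of_not_connected (hn : 0 < n) (h : ¬ (graphOf c).Connected) :
    ∃ S : Finset (Fin n), S.Nonempty ∧ 2 * #S ≤ n ∧ NoCross S c := by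
  classical
  have : Nonempty (Fin n) := ⟨⟨0, hn⟩⟩
  have hpre : ¬ (graphOf c).Preconnected := fun hp ↦ h ⟨hp⟩
  unfold SimpleGraph.Preconnected at hpre
  push Not at hpre
  obtain ⟨u, v, huv⟩ := hpre
  set S : Finset (Fin n) := {x | (graphOf c).Reachable u x} with hS
  have hcross : NoCross S c := fun x hx y hy hxy ↦ by
    simp only [hS, mem_filter_univ] at hx hy
    exact hy (hx.trans (graphOf_adj.2 hxy).reachable)
  by_cases hcard : 2 * #S ≤ n
  · exact ⟨S, ⟨u, by simp [hS]⟩, hcard, hcross⟩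
  · refine ⟨Sᶜ, ⟨v, by simp [hS, huv]⟩, ?_, hcross.compl⟩
    rw [card_compl, Fintype.card_fin]
    omega

theorem noIsolatedNodes_of_connected (hn : 2 ≤ n) (h : (graphOf c).Connected) :
    NoIsolatedNodes c := fun x hx ↦ by
  have : Nontrivial (Fin n) := Fin.nontrivial_iff_two_le.2 hn
  obtain ⟨y, hy⟩ := h.preconnected.exists_adj_of_nontrivial x
  exact hx y (graphOf_adj.1 hy)

variable {μ : Fin (r + 1) → ℝ} {K : Fin (r + 1) → ℕ} {α : ℝ}

theorem pr_not_connected_le (hn : 0 < n) (hμ : μ ∈ stdSimplex ℝ (Fin (r + 1)))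
    (hK : ∀ j, K j ≤ P) (hα : α ∈ Set.Icc 0 1) {b : ℕ → ℝ}
    (hb : ∀ S : Finset (Fin n), S.Nonempty → 2 * #S ≤ n →
      pr μ K α (NoCross S : Config n r P → Prop) ≤ b #S) :
    pr μ K α (fun c : Config n r P ↦ ¬ (graphOf c).Connected) ≤
      ∑ ℓ ∈ Icc 1 (n / 2), (n.choose ℓ : ℝ) * b ℓ := by
  set cuts : Finset (Finset (Fin n)) := {S | #S ∈ Icc 1 (n / 2)} with hcuts
  have hmem {S : Finset (Fin n)} : S ∈ cuts ↔ S.Nonempty ∧ 2 * #S ≤ n := by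
    rw [hcuts, mem_filter_univ, mem_Icc, ← card_pos]
    omega
  have hmaps : ∀ S ∈ cuts, #S ∈ Icc 1 (n / 2) := fun S hS ↦ by
    simpa only [hcuts, mem_filter_univ] using hS
  calc pr μ K α (fun c : Config n r P ↦ ¬ (graphOf c).Connected)
      ≤ pr μ K α fun c : Config n r P ↦ ∃ S ∈ cuts, NoCross S c := by
        refine pr_mono hμ hK hα fun c hc ↦ ?_
        obtain ⟨S, hS, hcard, hcross⟩ := exists_noCross_of_not_connected hn hc
        exact ⟨S, hmem.2 ⟨hS, hcard⟩, hcross⟩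
    _ ≤ ∑ S ∈ cuts, pr μ K α (NoCross S : Config n r P → Prop) := pr_exists_le hμ hK hα cuts _
    _ ≤ ∑ S ∈ cuts, b #S := sum_le_sum fun S hS ↦ hb S (hmem.1 hS).1 (hmem.1 hS).2
    _ = ∑ ℓ ∈ Icc 1 (n / 2), ∑ S ∈ cuts with #S = ℓ, b #S :=
        (sum_fiberwise_of_maps_to hmaps fun S ↦ b #S).symm
    _ = ∑ ℓ ∈ Icc 1 (n / 2), (n.choose ℓ : ℝ) * b ℓ := by
        refine sum_congr rfl fun ℓ hℓ ↦ ?_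
        have hlevel : {S ∈ cuts | #S = ℓ} = powersetCard ℓ univ := by
          ext S
          simp only [hcuts, mem_filter, mem_univ, true_and, mem_powersetCard_univ]
          exact ⟨And.right, fun h ↦ ⟨h ▸ hℓ, h⟩⟩
        rw [hlevel, sum_congr rfl fun S hS ↦ by rw [(mem_powersetCard.1 hS).2], sum_const,
          card_powersetCard, card_univ, Fintype.card_fin, nsmul_eq_mul]

end Graph

/-! ### The key-sharing probability -/

section KeySharing

variable {P a b : ℕ}

theorem mean_ringLaw_one_sub_meet (b : ℕ) (A : Finset (Fin P)) :
    mean (ringLaw b) (fun T ↦ 1 - meet A T) = avoidProb P #A b := by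
  have hsub (T : Finset (Fin P)) : T ⊆ Aᶜ ↔ ¬ (A ∩ T).Nonempty := by
    rw [subset_compl_iff_disjoint_left, disjoint_iff_inter_eq_empty, not_nonempty_iff_eq_empty]
  have hmiss (T : Finset (Fin P)) : 1 - meet A T = if T ⊆ Aᶜ then 1 else 0 := by
    simp only [meet, hsub]
    split_ifs <;> norm_num
  have hmissing : {T ∈ powersetCard b (univ : Finset (Fin P)) | T ⊆ Aᶜ} = powersetCard b Aᶜ := by
    ext T
    simp [mem_powersetCard, and_comm]
  simp only [mean_ringLaw, hmiss, sum_boole, hmissing, card_powersetCard, card_compl,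
    Fintype.card_fin, avoidProb]

theorem mean_ringLaw_meet (hb : b ≤ P) (A : Finset (Fin P)) :
    mean (ringLaw b) (meet A) = pEdge P #A b := by
  have hcompl := mean_one_sub (ringLaw_mem_stdSimplex (by simpa using hb)) (meet A)
  rw [mean_ringLaw_one_sub_meet] at hcompl
  rw [pEdge, hcompl, sub_sub_cancel]

theorem pEdge_nonneg (P a b : ℕ) : 0 ≤ pEdge P a b :=
  sub_nonneg.2 (div_le_one_of_le₀ (mod_cast Nat.choose_le_choose b (Nat.sub_le P a))
    (Nat.cast_nonneg _))

theorem pEdge_le_mul_div (ha : a ≤ P) (hb : b ≤ P) : pEdge P a b ≤ a * (b / P) := by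
  obtain ⟨A, -, hA⟩ := exists_subset_card_eq (s := (univ : Finset (Fin P))) (by simpa using ha)
  calc pEdge P a b = mean (ringLaw b) (meet A) := by rw [mean_ringLaw_meet hb, hA]
    _ ≤ mean (ringLaw b) fun T ↦ (#(A ∩ T) : ℝ) :=
      mean_mono (ringLaw_nonneg b) (meet_le_card_inter A)
    _ = a * (b / P) := by
      rw [mean_ringLaw_card_inter (by simpa using hb), hA, Fintype.card_fin]

theorem mul_div_div_le_pEdge (ha : a ≤ P) (hb : b ≤ P) :
    a * (b / P) / (1 + 2 * (a * (b / P))) ≤ pEdge P a b := by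
  obtain ⟨A, -, hA⟩ := exists_subset_card_eq (s := (univ : Finset (Fin P))) (by simpa using ha)
  have hload (x : Fin P) : (keyLoad (fun _ : Unit ↦ A) x : ℝ) ≤ 1 + 0 := by
    rw [add_zero, Nat.cast_le_one, keyLoad]
    exact (card_filter_le _ _).trans_eq card_univ
  have hmiss := mean_ringLaw_prod_one_sub_mul_meet_le (by simpa using hb) (fun _ ↦ hA.le) le_rfl
    hload (Set.right_mem_Icc.2 zero_le_one)
  simp only [univ_unique, prod_singleton, one_mul, sum_singleton, hA, Fintype.card_fin,
    mean_ringLaw_one_sub_meet] at hmiss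
  have hden : a * (b / P : ℝ) + (1 + 0 + a * (b / P)) = 1 + 2 * (a * (b / P)) := by ring
  rw [hden] at hmiss
  exact le_sub_comm.1 hmiss

theorem mul_div_le_two_mul_pEdge (ha : a ≤ P) (hb : b ≤ P) (h : pEdge P a b ≤ 1 / 4) :
    (a * (b / P) : ℝ) ≤ 2 * pEdge P a b := by
  have hlower := mul_div_div_le_pEdge ha hb
  rw [div_le_iff₀ (by positivity)] at hlower
  have hmul : pEdge P a b * (a * (b / P)) ≤ 1 / 4 * (a * (b / P)) :=
    mul_le_mul_of_nonneg_right h (by positivity)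
  linarith

end KeySharing

/-! ### The envelope of the miss probability -/

section Envelope

variable {C : Type*} [Fintype C] {μ x : C → ℝ} {δ : ℝ}

/-- The form `1 - (1 - δ) / (1 + δ) * ∑ j, μ j * (x j / (1 + x j))` to which `missBound` is
relaxed, where `x j` stands for the mean number of keys, counted over open channels, that a vertex
of class `j` shares with all the rings of a cut. -/
noncomputable def missEnvelope (μ : C → ℝ) (δ : ℝ) (x : C → ℝ) : ℝ :=
  1 - (1 - δ) / (1 + δ) * mean μ fun j ↦ x j / (1 + x j)

theorem div_one_add_le_div_one_add {u v : ℝ} (hu : 0 ≤ u) (h : u ≤ v) :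
    u / (1 + u) ≤ v / (1 + v) := by
  rw [div_le_div_iff₀ (by linarith) (by linarith)]
  linarith

theorem one_sub_three_mul_le (hδ : 0 ≤ δ) : 1 - 3 * δ ≤ (1 - δ) / (1 + δ) * (1 + δ)⁻¹ := by
  rw [← div_eq_mul_inv, div_div, le_div_iff₀ (by positivity)]
  nlinarith [pow_nonneg hδ 2, pow_nonneg hδ 3]

theorem mean_div_one_add_nonneg (hμ : 0 ≤ μ) (hx : 0 ≤ x) :
    0 ≤ mean μ fun j ↦ x j / (1 + x j) :=
  mean_nonneg hμ fun j ↦ div_nonneg (hx j) (add_nonneg zero_le_one (hx j))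

theorem missEnvelope_nonneg (hμ : μ ∈ stdSimplex ℝ C) (hx : 0 ≤ x) (hδ : 0 ≤ δ) :
    0 ≤ missEnvelope μ δ x := by
  refine sub_nonneg.2 (mul_le_one₀ ?_ (mean_div_one_add_nonneg hμ.1 hx) ?_)
  · rw [div_le_one (by linarith)]
    linarith
  · refine mean_le_one hμ fun j ↦ ?_
    have hj : 0 ≤ x j := hx j
    rw [div_le_one (by linarith)]
    linarith

theorem missEnvelope_le_exp_mean (hμ : 0 ≤ μ) (hx : 0 ≤ x) (hδ0 : 0 ≤ δ) (hδ1 : δ ≤ 1)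
    (hxδ : ∀ j, x j ≤ δ) : missEnvelope μ δ x ≤ Real.exp (-((1 - 3 * δ) * mean μ x)) := by
  have hsat : (1 + δ)⁻¹ * mean μ x ≤ mean μ fun j ↦ x j / (1 + x j) := by
    rw [← mean_const_mul]
    refine mean_mono hμ fun j ↦ ?_
    have hj : 0 ≤ x j := hx j
    rw [inv_mul_eq_div]
    exact div_le_div_of_nonneg_left hj (by linarith) (by linarith [hxδ j])
  have hmean : (1 - 3 * δ) * mean μ x ≤ (1 - δ) / (1 + δ) * mean μ fun j ↦ x j / (1 + x j) :=
    calc (1 - 3 * δ) * mean μ x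
        ≤ (1 - δ) / (1 + δ) * (1 + δ)⁻¹ * mean μ x :=
          mul_le_mul_of_nonneg_right (one_sub_three_mul_le hδ0) (mean_nonneg hμ hx)
      _ = (1 - δ) / (1 + δ) * ((1 + δ)⁻¹ * mean μ x) := mul_assoc _ _ _
      _ ≤ (1 - δ) / (1 + δ) * mean μ fun j ↦ x j / (1 + x j) :=
          mul_le_mul_of_nonneg_left hsat (div_nonneg (by linarith) (by linarith))
  exact (sub_le_sub_left hmean 1).trans (Real.one_sub_le_exp_neg _)

theorem missEnvelope_le_exp_single (hμ : 0 ≤ μ) (hx : 0 ≤ x) (hδ0 : 0 ≤ δ) (hδ1 : δ ≤ 1)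
    {v : ℝ} (hv : 0 ≤ v) {j : C} (hvx : v ≤ x j) :
    missEnvelope μ δ x ≤ Real.exp (-((1 - δ) / (1 + δ) * (μ j * (v / (1 + v))))) := by
  have hsingle : μ j * (v / (1 + v)) ≤ mean μ fun j ↦ x j / (1 + x j) :=
    (mul_le_mul_of_nonneg_left (div_one_add_le_div_one_add hv hvx) (hμ j)).trans
      (single_le_sum (f := fun i ↦ μ i * (x i / (1 + x i))) (fun i _ ↦ mul_nonneg (hμ i)
        (div_nonneg (hx i) (add_nonneg zero_le_one (hx i)))) (mem_univ j))
  have hrate : 0 ≤ (1 - δ) / (1 + δ) := div_nonneg (by linarith) (by linarith)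
  exact (sub_le_sub_left (mul_le_mul_of_nonneg_left hsingle hrate) 1).trans
    (Real.one_sub_le_exp_neg _)

theorem missEnvelope_le_three_mul (hμ : μ ∈ stdSimplex ℝ C) (hδ0 : 0 < δ) (hδ1 : δ ≤ 1)
    (hxδ : ∀ j, δ⁻¹ ≤ x j) : missEnvelope μ δ x ≤ 3 * δ := by
  have hsat : (1 + δ)⁻¹ ≤ mean μ fun j ↦ x j / (1 + x j) := by
    rw [← mean_const hμ (1 + δ)⁻¹]
    refine mean_mono hμ.1 fun j ↦ ?_
    have hinv : (1 + δ)⁻¹ = δ⁻¹ / (1 + δ⁻¹) := by field_simp; ring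
    rw [hinv]
    exact div_one_add_le_div_one_add (inv_nonneg.2 hδ0.le) (hxδ j)
  have hmul := mul_le_mul_of_nonneg_left hsat
    (div_nonneg (by linarith) (by linarith) : 0 ≤ (1 - δ) / (1 + δ))
  rw [missEnvelope]
  linarith [one_sub_three_mul_le hδ0.le]

theorem missBound_le_missEnvelope (hμ : 0 ≤ μ) (K : C → ℕ) (k P : ℕ) {α : ℝ}
    (hα : 0 ≤ α) (ℓ : ℕ) (hδ1 : δ ≤ 1) {M : ℝ} (hM0 : 0 ≤ M)
    (hM : ∀ j, M ≤ δ * (ℓ * (k * (K j / P)))) (hload : ∀ j, k * (K j / P : ℝ) ≤ δ) :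
    missBound μ K k P α ℓ δ M ≤ missEnvelope μ δ fun j ↦ ℓ * (α * (k * (K j / P))) := by
  rw [missBound, missEnvelope, ← mean_const_mul]
  refine sub_le_sub_left (mean_mono hμ fun j ↦ ?_) 1
  set o : ℝ := k * (K j / P) with ho
  have hcoef : α * (ℓ * k) * (K j / P) = ℓ * (α * o) := by rw [ho]; ring
  have ho0 : 0 ≤ o := by rw [ho]; positivity
  have hαM : α * M ≤ δ * (ℓ * (α * o)) :=
    (mul_le_mul_of_nonneg_left (hM j) hα).trans_eq (by ring)
  have hm : 0 ≤ ℓ * (α * o) := by positivity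
  have hαM0 : 0 ≤ α * M := mul_nonneg hα hM0
  rw [hcoef, div_mul_div_comm]
  refine div_le_div_of_nonneg_left (mul_nonneg (by linarith) hm) (by linarith) ?_
  linarith [hload j]

end Envelope

/-! ### Pairs of rings -/

section Pairs

variable {r P : ℕ} {μ : Fin (r + 1) → ℝ} {K : Fin (r + 1) → ℕ} {α : ℝ} {i : Fin (r + 1)}

/-- The probability that a vertex of class `i` is adjacent to a given other vertex. -/
noncomputable def adjProb (μ : Fin (r + 1) → ℝ) (K : Fin (r + 1) → ℕ) (P : ℕ) (α : ℝ)
    (i : Fin (r + 1)) : ℝ :=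
  α * lamb μ K P i

/-- The mean number of keys that vertices of classes `i` and `j` share over an open channel. -/
noncomputable def openOverlap (K : Fin (r + 1) → ℕ) (P : ℕ) (α : ℝ) (i j : Fin (r + 1)) : ℝ :=
  α * (K i * (K j / P))

theorem lamb_nonneg (hμ : 0 ≤ μ) (K : Fin (r + 1) → ℕ) (P : ℕ) (i : Fin (r + 1)) :
    0 ≤ lamb μ K P i :=
  sum_nonneg fun j _ ↦ mul_nonneg (hμ j) (pEdge_nonneg P (K i) (K j))

theorem adjProb_nonneg (hμ : 0 ≤ μ) (K : Fin (r + 1) → ℕ) (P : ℕ) (hα : 0 ≤ α)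
    (i : Fin (r + 1)) : 0 ≤ adjProb μ K P α i :=
  mul_nonneg hα (lamb_nonneg hμ K P i)

theorem openOverlap_nonneg (K : Fin (r + 1) → ℕ) (P : ℕ) (hα : 0 ≤ α) (i j : Fin (r + 1)) :
    0 ≤ openOverlap K P α i j := by
  unfold openOverlap; positivity

theorem mean_mean_ringLaw_meet (μ : Fin (r + 1) → ℝ) (hK : ∀ j, K j ≤ P) {A : Finset (Fin P)}
    (hA : #A = K i) : (mean μ fun j ↦ mean (ringLaw (K j)) (meet A)) = lamb μ K P i := by
  simp only [mean_ringLaw_meet (hK _), hA]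
  rfl

theorem missProb_fin_one (hμ : μ ∈ stdSimplex ℝ (Fin (r + 1))) (hK : ∀ j, K j ≤ P) (α : ℝ)
    {A : Fin 1 → Finset (Fin P)} (hA : #(A 0) = K i) :
    missProb μ K α A = 1 - adjProb μ K P α i := by
  have hring (j) := mean_one_sub (ringLaw_mem_stdSimplex (by simpa using hK j))
    fun T ↦ α * meet (A 0) T
  simp only [missProb, Fin.prod_univ_one, hring, mean_const_mul, mean_one_sub hμ,
    mean_mean_ringLaw_meet μ hK hA, adjProb]

theorem missProb_fin_two (hμ : μ ∈ stdSimplex ℝ (Fin (r + 1))) (hK : ∀ j, K j ≤ P) (α : ℝ)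
    {A : Fin 2 → Finset (Fin P)} (hA : ∀ x, #(A x) = K i) :
    missProb μ K α A = 1 - 2 * adjProb μ K P α i +
      α ^ 2 * mean μ fun j ↦ mean (ringLaw (K j)) fun T ↦ meet (A 0) T * meet (A 1) T := by
  have hexpand (T : Finset (Fin P)) : (1 - α * meet (A 0) T) * (1 - α * meet (A 1) T) =
      1 - (α * (meet (A 0) T + meet (A 1) T) + -α ^ 2 * (meet (A 0) T * meet (A 1) T)) := by
    ring
  have hring (j) := mean_one_sub (ringLaw_mem_stdSimplex (by simpa using hK j))
    fun T ↦ α * (meet (A 0) T + meet (A 1) T) + -α ^ 2 * (meet (A 0) T * meet (A 1) T)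
  simp only [missProb, Fin.prod_univ_two, hexpand, hring, mean_one_sub hμ, mean_add,
    mean_const_mul, mean_mean_ringLaw_meet μ hK (hA _), adjProb]
  ring

theorem missProb_fin_two_le (hμ : μ ∈ stdSimplex ℝ (Fin (r + 1))) (hK : ∀ j, K j ≤ P) (α : ℝ)
    {A : Fin 2 → Finset (Fin P)} (hA : ∀ x, #(A x) = K i) :
    missProb μ K α A ≤ 1 - 2 * adjProb μ K P α i + α * adjProb μ K P α i := by
  rw [missProb_fin_two hμ hK α hA, adjProb, ← mul_assoc α α, ← pow_two,
    ← mean_mean_ringLaw_meet μ hK (hA 0)]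
  gcongr
  refine mean_mono hμ.1 fun j ↦ mean_mono (ringLaw_nonneg (K j)) fun T ↦ ?_
  exact mul_le_of_le_one_right (meet_nonneg _ _) (meet_le_one _ _)

theorem mean_ringLaw_meet_mul_meet_le {b : ℕ} (hb : b ≤ P) {A B : Finset (Fin P)}
    (hAB : Disjoint A B) :
    mean (ringLaw b) (fun T ↦ meet A T * meet B T) ≤ #A * #B * ((b : ℝ) / P) ^ 2 := by
  have hcard (A T : Finset (Fin P)) : (#(A ∩ T) : ℝ) = ∑ x ∈ A, if x ∈ T then 1 else 0 := by
    simp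
  calc mean (ringLaw b) (fun T ↦ meet A T * meet B T)
      ≤ mean (ringLaw b) fun T ↦ ∑ x ∈ A, ∑ y ∈ B,
          (if x ∈ T then 1 else 0) * (if y ∈ T then 1 else 0) := by
        refine mean_mono (ringLaw_nonneg b) fun T ↦ ?_
        rw [← sum_mul_sum, ← hcard, ← hcard]
        exact mul_le_mul (meet_le_card_inter A T) (meet_le_card_inter B T) (meet_nonneg B T)
          (Nat.cast_nonneg _)
    _ = ∑ x ∈ A, ∑ y ∈ B, mean (ringLaw b) fun T ↦
          (if x ∈ T then 1 else 0) * (if y ∈ T then 1 else 0) := by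
        simp only [mean_sum]
    _ ≤ ∑ x ∈ A, ∑ y ∈ B, ((b : ℝ) / P) ^ 2 := by
        refine sum_le_sum fun x hx ↦ sum_le_sum fun y hy ↦ ?_
        simpa using mean_ringLaw_mem_mul_mem_le (by simpa using hb)
          (disjoint_iff_ne.1 hAB x hx y hy)
    _ = #A * #B * ((b : ℝ) / P) ^ 2 := by simp [mul_assoc]

theorem missProb_fin_two_le_of_disjoint (hμ : μ ∈ stdSimplex ℝ (Fin (r + 1)))
    (hK : ∀ j, K j ≤ P) (α : ℝ) {A : Fin 2 → Finset (Fin P)} (hA : ∀ x, #(A x) = K i)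
    (hdisj : Disjoint (A 0) (A 1)) :
    missProb μ K α A ≤ 1 - 2 * adjProb μ K P α i +
      mean μ fun j ↦ openOverlap K P α i j ^ 2 := by
  rw [missProb_fin_two hμ hK α hA, ← mean_const_mul]
  refine add_le_add le_rfl (mean_mono hμ.1 fun j ↦ ?_)
  calc _ ≤ α ^ 2 * (K i * K i * ((K j : ℝ) / P) ^ 2) := by
        have := mean_ringLaw_meet_mul_meet_le (hK j) hdisj
        rw [hA, hA] at this
        gcongr
    _ = _ := by rw [openOverlap]; ring

theorem mean_iidLaw_meet {k : ℕ} (hk : k ≤ P) :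
    mean (iidLaw (ringLaw k)) (fun A : Fin 2 → Finset (Fin P) ↦ meet (A 0) (A 1)) =
      pEdge P k k := by
  have hlaw := ringLaw_mem_stdSimplex (κ := Fin P) (by simpa using hk)
  have hmeet (T : Finset (Fin P)) (hT : ringLaw k T ≠ 0) :
      mean (ringLaw k) (fun A ↦ meet A T) = pEdge P k k := by
    simp only [meet_comm _ T, mean_ringLaw_meet hk, card_eq_of_ringLaw_ne_zero hT]
  simp only [mean_iidLaw_succ, mean_iidLaw_zero, Fin.cons_zero, Fin.cons_one]
  refine le_antisymm ?_ ?_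
  · exact (mean_mono_of_support hlaw.1 fun T hT ↦ (hmeet T hT).le).trans_eq (mean_const hlaw _)
  · exact (mean_const hlaw _).symm.trans_le
      (mean_mono_of_support hlaw.1 fun T hT ↦ (hmeet T hT).ge)

theorem mean_missProb_pair_pow_le (hμ : μ ∈ stdSimplex ℝ (Fin (r + 1))) (hK : ∀ j, K j ≤ P)
    (hα : α ∈ Set.Icc 0 1) (hs : adjProb μ K P α i ≤ 1 / 2) (N : ℕ) :
    mean (iidLaw (ringLaw (K i))) (fun A : Fin 2 → Finset (Fin P) ↦ missProb μ K α A ^ N) ≤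
      (1 - 2 * adjProb μ K P α i + mean μ fun j ↦ openOverlap K P α i j ^ 2) ^ N +
        pEdge P (K i) (K i) * (1 - 2 * adjProb μ K P α i + α * adjProb μ K P α i) ^ N := by
  set bDisj := 1 - 2 * adjProb μ K P α i + mean μ fun j ↦ openOverlap K P α i j ^ 2
  set bMeet := 1 - 2 * adjProb μ K P α i + α * adjProb μ K P α i
  have hbDisj : 0 ≤ bDisj := add_nonneg (by linarith) (mean_nonneg hμ.1 fun j ↦ sq_nonneg _)
  have hlaw := ringLaw_mem_stdSimplex (κ := Fin P) (by simpa using hK i)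
  have hpoint (A : Fin 2 → Finset (Fin P)) (hA : iidLaw (ringLaw (K i)) A ≠ 0) :
      missProb μ K α A ^ N ≤ bDisj ^ N + bMeet ^ N * meet (A 0) (A 1) := by
    have hcard (x) : #(A x) = K i := card_eq_of_ringLaw_ne_zero (ne_zero_of_iidLaw_ne_zero hA x)
    have hmiss := missProb_nonneg (K := K) hμ hα A
    by_cases hAA : (A 0 ∩ A 1).Nonempty
    · have := pow_le_pow_left₀ hmiss (missProb_fin_two_le hμ hK α hcard) N
      simp only [meet, if_pos hAA, mul_one]
      linarith [pow_nonneg hbDisj N]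
    · have hdisj : Disjoint (A 0) (A 1) :=
        disjoint_iff_inter_eq_empty.2 (not_nonempty_iff_eq_empty.1 hAA)
      simpa only [meet, if_neg hAA, mul_zero, add_zero] using
        pow_le_pow_left₀ hmiss (missProb_fin_two_le_of_disjoint hμ hK α hcard hdisj) N
  refine (mean_mono_of_support (iidLaw_mem_stdSimplex hlaw).1 hpoint).trans_eq ?_
  rw [mean_add, mean_const (iidLaw_mem_stdSimplex hlaw), mean_const_mul, mean_iidLaw_meet (hK i),
    mul_comm]

end Pairs

/-! ### The second moment of the number of isolated nodes -/

section SecondMoment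

variable {Ω ι : Type*} [Fintype Ω] [Fintype ι] {p : Ω → ℝ} {E : ι → Set Ω} {p₁ p₂ : ℝ}

theorem mean_sq_sum_indicator_le (hp₂ : 0 ≤ p₂) (hE : ∀ i, mean p ((E i).indicator 1) = p₁)
    (hEE : ∀ i j, i ≠ j → mean p ((E i ∩ E j).indicator 1) ≤ p₂) :
    mean p (fun ω ↦ (∑ i, (E i).indicator 1 ω) ^ 2) ≤
      Fintype.card ι * (p₁ + Fintype.card ι * p₂) := by
  classical
  have hpair (i j : ι) : mean p ((E i ∩ E j).indicator 1) ≤ (if i = j then p₁ else 0) + p₂ := by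
    rcases eq_or_ne i j with rfl | hij
    · simpa [hE] using hp₂
    · simpa [hij] using hEE i j hij
  calc mean p (fun ω ↦ (∑ i, (E i).indicator 1 ω) ^ 2)
      = ∑ i, ∑ j, mean p ((E i ∩ E j).indicator 1) := by
        simp only [← mean_sum, pow_two, sum_mul_sum, Set.inter_indicator_one, Pi.mul_apply]
    _ ≤ ∑ i, ∑ j, ((if i = j then p₁ else 0) + p₂) :=
        sum_le_sum fun i _ ↦ sum_le_sum fun j _ ↦ hpair i j
    _ = Fintype.card ι * (p₁ + Fintype.card ι * p₂) := by
        simp [sum_add_distrib, mul_add]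

theorem mean_forall_notMem_le [Nonempty ι] (hp : p ∈ stdSimplex ℝ Ω) (hp₁ : 0 < p₁) (hp₂ : 0 ≤ p₂)
    (hE : ∀ i, mean p ((E i).indicator 1) = p₁)
    (hEE : ∀ i j, i ≠ j → mean p ((E i ∩ E j).indicator 1) ≤ p₂) :
    mean p ({ω | ∀ i, ω ∉ E i}.indicator 1) ≤
      1 / (Fintype.card ι * p₁) + (p₂ / p₁ ^ 2 - 1) := by
  have : (0 : ℝ) < Fintype.card ι := by exact_mod_cast Fintype.card_pos
  set count : Ω → ℝ := fun ω ↦ ∑ i, (E i).indicator 1 ω with hcount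
  set t := 1 / (Fintype.card ι * p₁) with ht
  have hmean : mean p count = Fintype.card ι * p₁ := by
    rw [hcount, mean_sum]
    simp [hE]
  calc mean p ({ω | ∀ i, ω ∉ E i}.indicator 1)
      ≤ mean p fun ω ↦ (1 - t * count ω) ^ 2 := by
        refine mean_mono hp.1 fun ω ↦
          Set.indicator_apply_le' (fun hω ↦ ?_) fun _ ↦ sq_nonneg _
        have hzero : count ω = 0 :=
          sum_eq_zero fun i _ ↦ Set.indicator_of_notMem (show ω ∉ E i from hω i) 1
        simp [hzero]
    _ = mean p fun ω ↦ 1 - (2 * t * count ω + -t ^ 2 * count ω ^ 2) := by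
        congr with ω
        ring
    _ = 1 - 2 * t * mean p count + t ^ 2 * mean p (fun ω ↦ count ω ^ 2) := by
        rw [mean_one_sub hp, mean_add, mean_const_mul, mean_const_mul]
        ring
    _ ≤ 1 - 2 * t * (Fintype.card ι * p₁) +
          t ^ 2 * (Fintype.card ι * (p₁ + Fintype.card ι * p₂)) := by
        rw [hmean]
        gcongr
        exact mean_sq_sum_indicator_le hp₂ hE hEE
    _ = t + (p₂ / p₁ ^ 2 - 1) := by
        rw [ht]
        field_simp
        ring

end SecondMoment

section NoIsolated

variable {n r P : ℕ} {μ : Fin (r + 1) → ℝ} {K : Fin (r + 1) → ℕ} {α : ℝ} {i : Fin (r + 1)}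

theorem NoCross.union {S T : Finset (Fin n)} {c : Config n r P} (hS : NoCross S c)
    (hT : NoCross T c) : NoCross (S ∪ T) c := by
  intro x hx y hy
  rw [mem_union, not_or] at hy
  exact (mem_union.1 hx).elim (fun h ↦ hS x h y hy.1) fun h ↦ hT x h y hy.2

theorem pr_isolated_and_class (hμ : μ ∈ stdSimplex ℝ (Fin (r + 1))) (hK : ∀ j, K j ≤ P) (α : ℝ)
    (i : Fin (r + 1)) (x : Fin n) :
    pr μ K α (fun c : Config n r P ↦ Isolated c x ∧ c.1 x = i) =
      μ i * (1 - adjProb μ K P α i) ^ (n - 1) := by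
  have hlaw := iidLaw_mem_stdSimplex (ι := Fin 1)
    (ringLaw_mem_stdSimplex (κ := Fin P) (by simpa using hK i))
  have hmiss (R : Fin 1 → Finset (Fin P)) (hR : iidLaw (ringLaw (K i)) R ≠ 0) :
      missProb μ K α R ^ (n - 1) = (1 - adjProb μ K P α i) ^ (n - 1) := by
    rw [missProb_fin_one hμ hK α (card_eq_of_ringLaw_ne_zero (ne_zero_of_iidLaw_ne_zero hR 0))]
  have hcut := pr_noCross_and_class (P := P) μ K α i (card_singleton x)
  simp only [noCross_singleton_iff, mem_singleton, forall_eq, pow_one] at hcut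
  rw [hcut]
  congr 1
  refine le_antisymm ?_ ?_
  · exact (mean_mono_of_support hlaw.1 fun R hR ↦ (hmiss R hR).le).trans_eq (mean_const hlaw _)
  · exact (mean_const hlaw _).symm.trans_le
      (mean_mono_of_support hlaw.1 fun R hR ↦ (hmiss R hR).ge)

theorem pr_isolated_pair_and_class_le (hμ : μ ∈ stdSimplex ℝ (Fin (r + 1)))
    (hK : ∀ j, K j ≤ P) (hα : α ∈ Set.Icc 0 1) (hs : adjProb μ K P α i ≤ 1 / 2) {x y : Fin n}
    (hxy : x ≠ y) :
    pr μ K α (fun c : Config n r P ↦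
      (Isolated c x ∧ c.1 x = i) ∧ Isolated c y ∧ c.1 y = i) ≤ μ i ^ 2 *
      ((1 - 2 * adjProb μ K P α i + mean μ fun j ↦ openOverlap K P α i j ^ 2) ^ (n - 2) +
        pEdge P (K i) (K i) * (1 - 2 * adjProb μ K P α i + α * adjProb μ K P α i) ^ (n - 2)) := by
  calc _ ≤ pr μ K α fun c : Config n r P ↦
          NoCross {x, y} c ∧ ∀ z ∈ ({x, y} : Finset (Fin n)), c.1 z = i := by
        refine pr_mono hμ hK hα fun c ⟨⟨hx, hxi⟩, hy, hyi⟩ ↦ ⟨?_, by simp [hxi, hyi]⟩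
        exact (noCross_singleton_iff.2 hx).union (noCross_singleton_iff.2 hy)
    _ = μ i ^ 2 * mean (iidLaw (ringLaw (K i))) fun R : Fin 2 → Finset (Fin P) ↦
          missProb μ K α R ^ (n - 2) := pr_noCross_and_class μ K α i (card_pair hxy)
    _ ≤ _ := mul_le_mul_of_nonneg_left (mean_missProb_pair_pow_le hμ hK hα hs _) (sq_nonneg _)

theorem pr_noIsolatedNodes_le (hn : 2 ≤ n) (hμ : μ ∈ stdSimplex ℝ (Fin (r + 1))) (hμi : 0 < μ i)
    (hK : ∀ j, K j ≤ P) (hα : α ∈ Set.Icc 0 1) {s β : ℝ} (hs : s = adjProb μ K P α i)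
    (hs2 : s ≤ 1 / 2) (hβ : β = mean μ fun j ↦ openOverlap K P α i j ^ 2) :
    pr μ K α (NoIsolatedNodes : Config n r P → Prop) ≤
      1 / (n * (μ i * (1 - s) ^ (n - 1))) +
        (((1 - 2 * s + β) ^ (n - 2) + pEdge P (K i) (K i) * (1 - 2 * s + α * s) ^ (n - 2)) /
          ((1 - s) ^ (n - 1)) ^ 2 - 1) := by
  have : Nonempty (Fin n) := ⟨⟨0, by omega⟩⟩
  have hs0 : 0 ≤ s := hs ▸ adjProb_nonneg hμ.1 K P hα.1 i
  have hβ0 : 0 ≤ β := hβ ▸ mean_nonneg hμ.1 fun j ↦ sq_nonneg _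
  have hdisj : 0 ≤ 1 - 2 * s + β := by linarith
  have hmeet : 0 ≤ 1 - 2 * s + α * s := add_nonneg (by linarith) (mul_nonneg hα.1 hs0)
  have hp := pEdge_nonneg P (K i) (K i)
  have hs1 : 0 < 1 - s := by linarith
  have hmoment := mean_forall_notMem_le (wt_mem_stdSimplex (n := n) hμ hK hα)
    (E := fun x ↦ {c | Isolated c x ∧ c.1 x = i}) (p₁ := μ i * (1 - s) ^ (n - 1))
    (p₂ := μ i ^ 2 *
      ((1 - 2 * s + β) ^ (n - 2) + pEdge P (K i) (K i) * (1 - 2 * s + α * s) ^ (n - 2)))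
    (by positivity) (by positivity)
    (fun x ↦ by rw [← pr_eq_mean, pr_isolated_and_class hμ hK, hs])
    (fun x y hxy ↦ by
      rw [← Set.ofPred_and, ← pr_eq_mean, hs, hβ]
      exact pr_isolated_pair_and_class_le hμ hK hα (hs ▸ hs2) hxy)
  rw [← pr_eq_mean, Fintype.card_fin, mul_pow, mul_div_mul_left _ _ (by positivity)] at hmoment
  exact (pr_mono hμ hK hα fun c hc x hx ↦ hc x hx.1).trans hmoment

end NoIsolated

section ExpBounds

variable {n : ℕ} {s a b : ℝ}

theorem one_div_mul_pow_le (hn : 0 < n) (ha : 0 < a) (hs0 : 0 ≤ s) (hs : s ≤ 1 / 2) :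
    1 / (n * (a * (1 - s) ^ (n - 1))) ≤
      a⁻¹ * Real.exp (((1 - s) ^ 2)⁻¹ * (s * n) - Real.log n) := by
  have hs1 : 0 < 1 - s := by linarith
  have hn0 : (0 : ℝ) < n := by exact_mod_cast hn
  have hinv : (1 - s)⁻¹ ≤ Real.exp (((1 - s) ^ 2)⁻¹ * s) :=
    calc (1 - s)⁻¹ = (1 - s)⁻¹ * s + 1 := by field_simp; ring
      _ ≤ ((1 - s) ^ 2)⁻¹ * s + 1 := by
          gcongr
          exact pow_le_of_le_one hs1.le (by linarith) two_ne_zero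
      _ ≤ _ := Real.add_one_le_exp _
  have hpow : ((1 - s) ^ (n - 1))⁻¹ ≤ Real.exp (((1 - s) ^ 2)⁻¹ * (s * n)) :=
    calc ((1 - s) ^ (n - 1))⁻¹ ≤ ((1 - s) ^ n)⁻¹ := by
          exact inv_anti₀ (pow_pos hs1 n)
            (pow_le_pow_of_le_one hs1.le (by linarith) (Nat.sub_le n 1))
      _ ≤ Real.exp (((1 - s) ^ 2)⁻¹ * s) ^ n := by
          rw [← inv_pow]
          gcongr
      _ = _ := by rw [← Real.exp_nat_mul]; ring_nf
  calc 1 / (n * (a * (1 - s) ^ (n - 1))) = a⁻¹ * (((1 - s) ^ (n - 1))⁻¹ / n) := by field_simp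
    _ ≤ a⁻¹ * (Real.exp (((1 - s) ^ 2)⁻¹ * (s * n)) / n) := by gcongr
    _ = _ := by rw [Real.exp_sub, Real.exp_log hn0]

theorem one_sub_two_mul_add_pow_div_le (hn : 2 ≤ n) (hs : s ≤ 1 / 2) (hb : 0 ≤ b) :
    (1 - 2 * s + b) ^ (n - 2) / ((1 - s) ^ (n - 1)) ^ 2 ≤
      ((1 - s) ^ 2)⁻¹ * Real.exp (((1 - s) ^ 2)⁻¹ * (b * n)) := by
  obtain ⟨N, rfl⟩ : ∃ N, n = N + 2 := ⟨n - 2, by omega⟩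
  have hs1 : 0 < (1 - s) ^ 2 := by
    have : 0 < 1 - s := by linarith
    positivity
  have hbase : (1 - 2 * s + b) / (1 - s) ^ 2 ≤ Real.exp (((1 - s) ^ 2)⁻¹ * b) :=
    calc (1 - 2 * s + b) / (1 - s) ^ 2 ≤ ((1 - s) ^ 2 + b) / (1 - s) ^ 2 := by
          gcongr
          linarith [sq_nonneg s, sub_sq 1 s]
      _ = ((1 - s) ^ 2)⁻¹ * b + 1 := by
          rw [add_div, div_self hs1.ne', div_eq_inv_mul, add_comm]
      _ ≤ _ := Real.add_one_le_exp _
  calc (1 - 2 * s + b) ^ (N + 2 - 2) / ((1 - s) ^ (N + 2 - 1)) ^ 2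
      = ((1 - s) ^ 2)⁻¹ * ((1 - 2 * s + b) / (1 - s) ^ 2) ^ N := by
        rw [← pow_mul, Nat.add_sub_cancel, show (N + 2 - 1) * 2 = 2 * N + 2 by omega, pow_add,
          pow_mul, div_pow]
        field_simp
    _ ≤ ((1 - s) ^ 2)⁻¹ * Real.exp (((1 - s) ^ 2)⁻¹ * b) ^ N := by
        gcongr
        exact div_nonneg (by linarith) hs1.le
    _ ≤ _ := by
        rw [← Real.exp_nat_mul, mul_left_comm, mul_comm b]
        gcongr
        exact Nat.le_add_right N 2

end ExpBounds

/-! ### Scalings -/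

theorem tendsto_log_pow_mul_exp_neg {γ : ℝ} (hγ : 0 < γ) (k : ℕ) :
    Tendsto (fun n : ℕ ↦ Real.log n ^ k * Real.exp (-(γ * Real.log n))) atTop (nhds 0) := by
  have hlog : Tendsto (fun n : ℕ ↦ γ * Real.log n) atTop atTop :=
    (Real.tendsto_log_atTop.comp tendsto_natCast_atTop_atTop).const_mul_atTop hγ
  have hlim := ((Real.tendsto_pow_mul_exp_neg_atTop_nhds_zero k).comp hlog).const_mul (γ ^ k)⁻¹
  rw [mul_zero] at hlim
  refine hlim.congr fun n ↦ ?_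
  simp only [Function.comp_apply, mul_pow]
  field_simp

theorem eventually_log_natCast_pos : ∀ᶠ n : ℕ in atTop, 0 < Real.log n := by
  filter_upwards [eventually_ge_atTop 2] with n hn
  exact Real.log_pos (by exact_mod_cast hn)

theorem exp_mul_le_one_add_mul_exp {t : ℝ} (ht0 : 0 ≤ t) (ht1 : t ≤ 1) (x : ℝ) :
    Real.exp (t * x) ≤ 1 + t * Real.exp x := by
  have hconv := convexOn_exp.2 (Set.mem_univ 0) (Set.mem_univ x) (sub_nonneg.2 ht1) ht0 (by ring)
  simp only [smul_eq_mul, mul_zero, zero_add, Real.exp_zero, mul_one] at hconv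
  linarith

/-- A scaling of the model under which `λ₁(n) = o(1)` and `αₙ K₁ₙ K_avg,n / Pₙ ∼ c log n / n`. -/
structure Scaling {r : ℕ} (μ : Fin (r + 1) → ℝ) (K : ℕ → Fin (r + 1) → ℕ) (P : ℕ → ℕ)
    (α : ℕ → ℝ) (c : ℝ) : Prop where
  class_pos : ∀ i, 0 < μ i
  class_sum : ∑ i, μ i = 1
  one_le_ring : ∀ n, 1 ≤ K n 0
  ring_mono : ∀ n, Monotone (K n)
  two_mul_ring_le : ∀ n, 2 * K n (Fin.last r) ≤ P n
  channel_mem : ∀ n, α n ∈ Set.Ioo (0 : ℝ) 1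
  limit_pos : 0 < c
  tendsto_lamb : Tendsto (fun n ↦ lamb μ (K n) (P n) 0) atTop (nhds 0)
  tendsto_ratio : Tendsto (fun n : ℕ ↦
    (α n * (K n 0 : ℝ) * (∑ j, μ j * (K n j : ℝ)) / (P n : ℝ)) / (c * Real.log n / n))
    atTop (nhds 1)

/-- The mean over the class `j` of `openOverlap K P α 0 j`, which is the quantity
`α K₁ K_avg / P` of the scaling. -/
noncomputable def meanOverlap {r : ℕ} (μ : Fin (r + 1) → ℝ) (K : Fin (r + 1) → ℕ) (P : ℕ)
    (α : ℝ) : ℝ :=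
  mean μ (openOverlap K P α 0)

theorem openOverlap_monotone {r : ℕ} {K : Fin (r + 1) → ℕ} (hK : Monotone K) (P : ℕ) {α : ℝ}
    (hα : 0 ≤ α) (i : Fin (r + 1)) : Monotone (openOverlap K P α i) := fun j j' hj ↦ by
  have := hK hj
  unfold openOverlap
  gcongr

namespace Scaling

variable {r : ℕ} {μ : Fin (r + 1) → ℝ} {K : ℕ → Fin (r + 1) → ℕ} {P : ℕ → ℕ} {α : ℕ → ℝ} {c : ℝ}

theorem class_mem (h : Scaling μ K P α c) : μ ∈ stdSimplex ℝ (Fin (r + 1)) :=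
  ⟨fun i ↦ (h.class_pos i).le, h.class_sum⟩

theorem channel_mem_Icc (h : Scaling μ K P α c) (n : ℕ) : α n ∈ Set.Icc 0 1 :=
  Set.Ioo_subset_Icc_self (h.channel_mem n)

theorem ring_le_pool (h : Scaling μ K P α c) (n : ℕ) (j : Fin (r + 1)) : K n j ≤ P n := by
  have := h.ring_mono n (Fin.le_last j)
  have := h.two_mul_ring_le n
  omega

theorem pool_pos (h : Scaling μ K P α c) (n : ℕ) : 0 < P n :=
  (h.one_le_ring n).trans (h.ring_le_pool n 0)

theorem openOverlap_nonneg (h : Scaling μ K P α c) (n : ℕ) (j : Fin (r + 1)) :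
    0 ≤ openOverlap (K n) (P n) (α n) 0 j :=
  _root_.openOverlap_nonneg (K n) (P n) (h.channel_mem n).1.le 0 j

theorem meanOverlap_nonneg (h : Scaling μ K P α c) (n : ℕ) :
    0 ≤ meanOverlap μ (K n) (P n) (α n) :=
  mean_nonneg h.class_mem.1 (h.openOverlap_nonneg n)

theorem openOverlap_le_div (h : Scaling μ K P α c) (n : ℕ) (j : Fin (r + 1)) :
    openOverlap (K n) (P n) (α n) 0 j ≤ meanOverlap μ (K n) (P n) (α n) / μ j := by
  rw [le_div_iff₀ (h.class_pos j), mul_comm]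
  exact single_le_sum (f := fun j ↦ μ j * openOverlap (K n) (P n) (α n) 0 j)
    (fun i _ ↦ mul_nonneg (h.class_pos i).le (h.openOverlap_nonneg n i)) (mem_univ j)

theorem openOverlap_zero_le_meanOverlap (h : Scaling μ K P α c) (n : ℕ) :
    openOverlap (K n) (P n) (α n) 0 0 ≤ meanOverlap μ (K n) (P n) (α n) :=
  (mean_const h.class_mem _).symm.trans_le <| mean_mono h.class_mem.1 fun j ↦
    openOverlap_monotone (h.ring_mono n) (P n) (h.channel_mem n).1.le 0 (Fin.zero_le j)

theorem meanOverlap_le_openOverlap_last (h : Scaling μ K P α c) (n : ℕ) :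
    meanOverlap μ (K n) (P n) (α n) ≤ openOverlap (K n) (P n) (α n) 0 (Fin.last r) :=
  (mean_mono h.class_mem.1 fun j ↦ openOverlap_monotone (h.ring_mono n) (P n)
    (h.channel_mem n).1.le 0 (Fin.le_last j)).trans_eq (mean_const h.class_mem _)

theorem adjProb_le_meanOverlap (h : Scaling μ K P α c) (n : ℕ) :
    adjProb μ (K n) (P n) (α n) 0 ≤ meanOverlap μ (K n) (P n) (α n) := by
  rw [meanOverlap, adjProb, lamb, mul_sum]
  refine sum_le_sum fun j _ ↦ ?_
  rw [mul_left_comm]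
  have := (h.channel_mem n).1.le
  have := pEdge_le_mul_div (h.ring_le_pool n 0) (h.ring_le_pool n j)
  exact mul_le_mul_of_nonneg_left (by unfold openOverlap; gcongr) (h.class_pos j).le

theorem tendsto_pEdge (h : Scaling μ K P α c) (j : Fin (r + 1)) :
    Tendsto (fun n ↦ pEdge (P n) (K n 0) (K n j)) atTop (nhds 0) := by
  have hlim := h.tendsto_lamb.div_const (μ j)
  rw [zero_div] at hlim
  refine squeeze_zero (fun n ↦ pEdge_nonneg _ _ _) (fun n ↦ ?_) hlim
  rw [le_div_iff₀ (h.class_pos j), mul_comm]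
  exact single_le_sum (f := fun j ↦ μ j * pEdge (P n) (K n 0) (K n j))
    (fun i _ ↦ mul_nonneg (h.class_pos i).le (pEdge_nonneg _ _ _)) (mem_univ j)

theorem eventually_mul_div_le (h : Scaling μ K P α c) {ε : ℝ} (hε : 0 < ε) :
    ∀ᶠ n in atTop, ∀ j, (K n 0 * (K n j / P n) : ℝ) ≤ ε := by
  refine eventually_all.2 fun j ↦ ?_
  have hp := h.tendsto_pEdge j
  filter_upwards [hp.eventually_le_const (show (0 : ℝ) < 1 / 4 by norm_num),
    hp.eventually_le_const (half_pos hε)] with n hquarter hhalf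
  linarith [mul_div_le_two_mul_pEdge (h.ring_le_pool n 0) (h.ring_le_pool n j) hquarter]

theorem tendsto_mul_meanOverlap_div_log (h : Scaling μ K P α c) :
    Tendsto (fun n : ℕ ↦ n * meanOverlap μ (K n) (P n) (α n) / Real.log n) atTop (nhds c) := by
  have hlim := h.tendsto_ratio.const_mul c
  rw [mul_one] at hlim
  refine hlim.congr fun n ↦ ?_
  have hmean : meanOverlap μ (K n) (P n) (α n) =
      α n * (K n 0 : ℝ) * (∑ j, μ j * (K n j : ℝ)) / (P n : ℝ) := by
    simp only [meanOverlap, mean, openOverlap, mul_sum, sum_div]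
    exact sum_congr rfl fun j _ ↦ by ring
  have := h.limit_pos.ne'
  rw [← hmean]
  field_simp

theorem eventually_le_mul_meanOverlap (h : Scaling μ K P α c) {c' : ℝ} (hc' : c' < c) :
    ∀ᶠ n : ℕ in atTop, c' * Real.log n ≤ n * meanOverlap μ (K n) (P n) (α n) := by
  filter_upwards [h.tendsto_mul_meanOverlap_div_log.eventually_const_le hc',
    eventually_log_natCast_pos] with n hn hlog
  exact (le_div_iff₀ hlog).1 hn

theorem eventually_mul_meanOverlap_le (h : Scaling μ K P α c) {c' : ℝ} (hc' : c < c') :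
    ∀ᶠ n : ℕ in atTop, n * meanOverlap μ (K n) (P n) (α n) ≤ c' * Real.log n := by
  filter_upwards [h.tendsto_mul_meanOverlap_div_log.eventually_le_const hc',
    eventually_log_natCast_pos] with n hn hlog
  exact (div_le_iff₀ hlog).1 hn

theorem tendsto_mul_meanOverlap_pow_mul_exp_neg (h : Scaling μ K P α c) {γ : ℝ} (hγ : 0 < γ)
    (k : ℕ) :
    Tendsto (fun n : ℕ ↦
      (n * meanOverlap μ (K n) (P n) (α n)) ^ k * Real.exp (-(γ * Real.log n)))
      atTop (nhds 0) := by
  have hlim := (h.tendsto_mul_meanOverlap_div_log.pow k).mul (tendsto_log_pow_mul_exp_neg hγ k)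
  rw [mul_zero] at hlim
  refine hlim.congr' ?_
  filter_upwards [eventually_log_natCast_pos] with n hlog
  rw [div_pow]
  field_simp

/-! ### The zero-law for isolated nodes -/

theorem tendsto_meanOverlap (h : Scaling μ K P α c) :
    Tendsto (fun n ↦ meanOverlap μ (K n) (P n) (α n)) atTop (nhds 0) := by
  refine (h.tendsto_mul_meanOverlap_pow_mul_exp_neg one_pos 1).congr' ?_
  filter_upwards [eventually_gt_atTop 0] with n hn
  rw [one_mul, Real.exp_neg, Real.exp_log (by positivity)]
  field_simp

theorem tendsto_adjProb (h : Scaling μ K P α c) :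
    Tendsto (fun n ↦ adjProb μ (K n) (P n) (α n) 0) atTop (nhds 0) :=
  squeeze_zero (fun n ↦ adjProb_nonneg h.class_mem.1 (K n) (P n) (h.channel_mem n).1.le 0)
    h.adjProb_le_meanOverlap h.tendsto_meanOverlap

theorem tendsto_inv_sq_one_sub_adjProb (h : Scaling μ K P α c) :
    Tendsto (fun n ↦ ((1 - adjProb μ (K n) (P n) (α n) 0) ^ 2)⁻¹) atTop (nhds 1) := by
  have hlim := ((h.tendsto_adjProb.const_sub 1).pow 2).inv₀ (by norm_num)
  simpa using hlim

theorem tendsto_mean_sq_openOverlap_mul (h : Scaling μ K P α c) :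
    Tendsto (fun n : ℕ ↦ (mean μ fun j ↦ openOverlap (K n) (P n) (α n) 0 j ^ 2) * n)
      atTop (nhds 0) := by
  have hsq : Tendsto (fun n : ℕ ↦ meanOverlap μ (K n) (P n) (α n) ^ 2 * n) atTop (nhds 0) := by
    refine (h.tendsto_mul_meanOverlap_pow_mul_exp_neg one_pos 2).congr' ?_
    filter_upwards [eventually_gt_atTop 0] with n hn
    rw [one_mul, Real.exp_neg, Real.exp_log (by positivity)]
    field_simp
  have hlim := hsq.const_mul (∑ j, (μ j)⁻¹)
  rw [mul_zero] at hlim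
  refine squeeze_zero (fun n ↦ mul_nonneg (mean_nonneg h.class_mem.1 fun j ↦ sq_nonneg _)
    n.cast_nonneg) (fun n ↦ ?_) hlim
  rw [← mul_assoc, sum_mul]
  refine mul_le_mul_of_nonneg_right (sum_le_sum fun j _ ↦ ?_) n.cast_nonneg
  have := h.class_pos j
  calc μ j * openOverlap (K n) (P n) (α n) 0 j ^ 2
      ≤ μ j * (meanOverlap μ (K n) (P n) (α n) / μ j) ^ 2 := by
        gcongr
        exacts [h.openOverlap_nonneg n j, h.openOverlap_le_div n j]
    _ = (μ j)⁻¹ * meanOverlap μ (K n) (P n) (α n) ^ 2 := by field_simp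

theorem eventually_inv_sq_mul_adjProb_le (h : Scaling μ K P α c) {c' : ℝ} (hc' : c < c') :
    ∀ᶠ n : ℕ in atTop, ((1 - adjProb μ (K n) (P n) (α n) 0) ^ 2)⁻¹ *
      (adjProb μ (K n) (P n) (α n) 0 * n) ≤ c' * Real.log n := by
  have hlim := h.tendsto_inv_sq_one_sub_adjProb.mul h.tendsto_mul_meanOverlap_div_log
  rw [one_mul] at hlim
  filter_upwards [hlim.eventually_le_const hc', eventually_log_natCast_pos] with n hn hlog
  rw [← mul_div_assoc, div_le_iff₀ hlog] at hn
  refine le_trans ?_ hn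
  rw [mul_comm (adjProb μ (K n) (P n) (α n) 0)]
  gcongr
  exact h.adjProb_le_meanOverlap n

theorem tendsto_pEdge_mul_exp (h : Scaling μ K P α c) (hc : c < 1) :
    Tendsto (fun n : ℕ ↦ pEdge (P n) (K n 0) (K n 0) *
      Real.exp (((1 - adjProb μ (K n) (P n) (α n) 0) ^ 2)⁻¹ *
        (α n * adjProb μ (K n) (P n) (α n) 0 * n))) atTop (nhds 0) := by
  obtain ⟨c', hcc', hc'⟩ := exists_between hc
  have hlim := (h.tendsto_pEdge 0).add
    (h.tendsto_mul_meanOverlap_pow_mul_exp_neg (sub_pos.2 hc') 1)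
  rw [add_zero] at hlim
  refine squeeze_zero' (Eventually.of_forall fun n ↦
    mul_nonneg (pEdge_nonneg _ _ _) (Real.exp_pos _).le) ?_ hlim
  filter_upwards [h.eventually_inv_sq_mul_adjProb_le hcc', eventually_gt_atTop 0] with n hn hn0
  set p := pEdge (P n) (K n 0) (K n 0)
  have hp0 : 0 ≤ p := pEdge_nonneg _ _ _
  have hα := h.channel_mem_Icc n
  have hαp : α n * p ≤ meanOverlap μ (K n) (P n) (α n) :=
    (mul_le_mul_of_nonneg_left (pEdge_le_mul_div (h.ring_le_pool n 0) (h.ring_le_pool n 0))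
      hα.1).trans (h.openOverlap_zero_le_meanOverlap n)
  have hexp : Real.exp (c' * Real.log n) = n * Real.exp (-((1 - c') * Real.log n)) := by
    rw [show -((1 - c') * Real.log n) = c' * Real.log n - Real.log n by ring, Real.exp_sub,
      Real.exp_log (by positivity)]
    field_simp
  calc _ ≤ p * Real.exp (α n * (c' * Real.log n)) := by
        rw [mul_assoc (α n), mul_left_comm _ (α n)]
        gcongr
        exact hα.1
    _ ≤ p * (1 + α n * Real.exp (c' * Real.log n)) := by
        gcongr
        exact exp_mul_le_one_add_mul_exp hα.1 hα.2 _
    _ = p + α n * p * Real.exp (c' * Real.log n) := by ring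
    _ ≤ p + meanOverlap μ (K n) (P n) (α n) * Real.exp (c' * Real.log n) := by gcongr
    _ = _ := by rw [hexp]; ring

theorem zero_law_isolated (h : Scaling μ K P α c) (hc : c < 1) :
    Tendsto (fun n ↦ pr μ (K n) (α n) (fun cfg : Config n r (P n) ↦ NoIsolatedNodes cfg))
      atTop (nhds 0) := by
  obtain ⟨c', hcc', hc'⟩ := exists_between hc
  have hu := h.tendsto_inv_sq_one_sub_adjProb
  have hfirst := (tendsto_log_pow_mul_exp_neg (sub_pos.2 hc') 0).const_mul (μ 0)⁻¹
  have hdisjoint := (Real.continuous_exp.tendsto _).comp (hu.mul h.tendsto_mean_sq_openOverlap_mul)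
  have hbound := hfirst.add ((hu.mul (hdisjoint.add (h.tendsto_pEdge_mul_exp hc))).sub_const 1)
  norm_num at hbound
  refine squeeze_zero' (Eventually.of_forall fun n ↦
    pr_nonneg h.class_mem (h.ring_le_pool n) (h.channel_mem_Icc n) _) ?_ hbound
  filter_upwards [h.tendsto_adjProb.eventually_le_const (show (0 : ℝ) < 1 / 2 by norm_num),
    h.eventually_inv_sq_mul_adjProb_le hcc', eventually_ge_atTop 2] with n hs hlog hn
  refine (pr_noIsolatedNodes_le hn h.class_mem (h.class_pos 0) (h.ring_le_pool n)
    (h.channel_mem_Icc n) rfl hs rfl).trans ?_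
  have hα := (h.channel_mem_Icc n).1
  have hs0 := adjProb_nonneg h.class_mem.1 (K n) (P n) hα 0
  refine add_le_add ?_ (sub_le_sub_right ?_ 1)
  · refine (one_div_mul_pow_le (by omega) (h.class_pos 0) hs0 hs).trans ?_
    have := h.class_pos 0
    gcongr
    linarith
  · rw [add_div, mul_div_assoc, mul_add, mul_left_comm _ (pEdge _ _ _)]
    exact add_le_add
      (one_sub_two_mul_add_pow_div_le hn hs (mean_nonneg h.class_mem.1 fun j ↦ sq_nonneg _))
      (mul_le_mul_of_nonneg_left (one_sub_two_mul_add_pow_div_le hn hs (mul_nonneg hα hs0))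
        (pEdge_nonneg _ _ _))

end Scaling

/-! ### The one-law for isolated nodes -/

/-- The bound `missEnvelope` for the probability that a random node is joined to none of `ℓ` nodes
of the smallest class. -/
noncomputable def cutEnvelope {r : ℕ} (μ : Fin (r + 1) → ℝ) (K : Fin (r + 1) → ℕ) (P : ℕ)
    (α δ : ℝ) (ℓ : ℕ) : ℝ :=
  missEnvelope μ δ fun j ↦ ℓ * openOverlap K P α 0 j

section SingleRing

variable {n r P : ℕ} {μ : Fin (r + 1) → ℝ} {K : Fin (r + 1) → ℕ} {α δ : ℝ}

theorem cutEnvelope_nonneg (hμ : μ ∈ stdSimplex ℝ (Fin (r + 1))) (K : Fin (r + 1) → ℕ) (P : ℕ)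
    (hα : 0 ≤ α) (hδ : 0 ≤ δ) (ℓ : ℕ) : 0 ≤ cutEnvelope μ K P α δ ℓ :=
  missEnvelope_nonneg hμ (fun j ↦ mul_nonneg ℓ.cast_nonneg (openOverlap_nonneg K P hα 0 j)) hδ

theorem pr_not_noIsolatedNodes_le (hμ : μ ∈ stdSimplex ℝ (Fin (r + 1))) (hKmono : Monotone K)
    (hK : ∀ j, K j ≤ P) (hα : α ∈ Set.Icc 0 1) {q : ℝ}
    (hq : ∀ A : Fin 1 → Finset (Fin P), (∀ i, #(A i) = K 0) → missProb μ K α A ≤ q) :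
    pr μ K α (fun c : Config n r P ↦ ¬ NoIsolatedNodes c) ≤ n * q ^ (n - 1) := by
  have hlaw : (iidLaw (ringLaw (K 0)) : (Fin 1 → Finset (Fin P)) → ℝ) ∈ stdSimplex ℝ _ :=
    iidLaw_mem_stdSimplex (ringLaw_mem_stdSimplex (by simpa using hK 0))
  have hnode (x : Fin n) :
      pr μ K α (NoCross {x} : Config n r P → Prop) ≤ q ^ (n - 1) := by
    refine (pr_noCross_le hμ hKmono hK hα (card_singleton x)).trans ?_
    rw [← mean_const hlaw (q ^ (n - 1))]
    refine mean_mono_of_support hlaw.1 fun A hA ↦ ?_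
    exact pow_le_pow_left₀ (missProb_nonneg hμ hα A)
      (hq A fun i ↦ card_eq_of_ringLaw_ne_zero (ne_zero_of_iidLaw_ne_zero hA i)) _
  calc pr μ K α (fun c : Config n r P ↦ ¬ NoIsolatedNodes c)
      ≤ pr μ K α fun c : Config n r P ↦ ∃ x ∈ univ, NoCross {x} c :=
        pr_mono hμ hK hα fun c hc ↦ by
          simpa [NoIsolatedNodes, noCross_singleton_iff] using hc
    _ ≤ ∑ x, pr μ K α (NoCross {x} : Config n r P → Prop) := pr_exists_le hμ hK hα _ _
    _ ≤ ∑ _ : Fin n, q ^ (n - 1) := sum_le_sum fun x _ ↦ hnode x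
    _ = n * q ^ (n - 1) := by simp

theorem missProb_le_cutEnvelope_one (hμ : μ ∈ stdSimplex ℝ (Fin (r + 1))) (hK : ∀ j, K j ≤ P)
    (hα : α ∈ Set.Icc 0 1) (hδ0 : 0 ≤ δ) (hδ1 : δ ≤ 1)
    (hload : ∀ j, (K 0 * (K j / P) : ℝ) ≤ δ) (A : Fin 1 → Finset (Fin P))
    (hA : ∀ i, #(A i) = K 0) : missProb μ K α A ≤ cutEnvelope μ K P α δ 1 := by
  have hkey (x : Fin P) : (keyLoad A x : ℝ) ≤ 1 + 0 := by
    have hx : keyLoad A x ≤ 1 := card_le_univ _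
    rw [add_zero]
    exact_mod_cast hx
  have htotal : (1 - δ) * (Fintype.card (Fin 1) * K 0) ≤ ∑ i, (#(A i) : ℝ) := by
    simpa [hA] using mul_le_of_le_one_left (K 0).cast_nonneg (sub_le_self 1 hδ0)
  have hbound := missProb_le_missBound hμ (by simpa using hK) hα (fun i ↦ (hA i).le) le_rfl hkey
    hδ0 hδ1 htotal
  simp only [Fintype.card_fin] at hbound
  exact hbound.trans (missBound_le_missEnvelope hμ.1 K (K 0) P hα.1 1 hδ1 le_rfl
    (fun j ↦ by positivity) hload)

end SingleRing

/-- With `a = c log n / n` and `q = exp (-ℓ a)` the summand would be at most `n ^ ((1 - c) ℓ)`. -/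
theorem choose_mul_pow_le_exp_pow {n ℓ : ℕ} (hn : 0 < n) (hℓ : ℓ ≤ n) {q a ρ c : ℝ} (hq0 : 0 ≤ q)
    (hρ : 0 ≤ ρ) (hq : q ≤ Real.exp (-(ρ * (ℓ * a)))) (hℓρ : ρ * n ≤ n - ℓ) (ha : 0 ≤ a)
    (hca : c * Real.log n ≤ n * a) :
    (n.choose ℓ : ℝ) * q ^ (n - ℓ) ≤ Real.exp (-((c * ρ ^ 2 - 1) * Real.log n)) ^ ℓ := by
  have hchoose : (n.choose ℓ : ℝ) ≤ Real.exp (ℓ * Real.log n) := by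
    rw [Real.exp_nat_mul, Real.exp_log (by positivity)]
    exact_mod_cast Nat.choose_le_pow n ℓ
  calc (n.choose ℓ : ℝ) * q ^ (n - ℓ)
      ≤ Real.exp (ℓ * Real.log n) * Real.exp (-(ρ * (ℓ * a))) ^ (n - ℓ) := by gcongr
    _ = Real.exp (ℓ * Real.log n - (n - ℓ) * (ρ * (ℓ * a))) := by
      rw [← Real.exp_nat_mul, Nat.cast_sub hℓ, ← Real.exp_add, mul_neg, ← sub_eq_add_neg]
    _ ≤ Real.exp (ℓ * -((c * ρ ^ 2 - 1) * Real.log n)) := by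
      refine Real.exp_le_exp.2 ?_
      have hcut : (ρ * n) * (ρ * (ℓ * a)) ≤ (n - ℓ) * (ρ * (ℓ * a)) := by gcongr
      have hrate : (ρ ^ 2 * ℓ) * (c * Real.log n) ≤ (ρ ^ 2 * ℓ) * (n * a) := by gcongr
      linarith
    _ = _ := Real.exp_nat_mul _ _

theorem exists_one_lt_mul_pow {c : ℝ} (hc : 1 < c) :
    ∃ δ : ℝ, 0 < δ ∧ δ ≤ 1 / 48 ∧ 1 < c * (1 - 3 * δ) ^ 3 := by
  have hcont : Continuous fun δ : ℝ ↦ c * (1 - 3 * δ) ^ 3 := by fun_prop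
  have hzero : 1 < c * (1 - 3 * 0) ^ 3 := by linarith
  have hnear := ((hcont.tendsto 0).eventually_const_lt hzero).filter_mono
    (nhdsWithin_le_nhds (s := Set.Ioi 0))
  obtain ⟨δ, hδ, hδ0, hδ48⟩ :=
    (hnear.and (Ioc_mem_nhdsGT (show (0 : ℝ) < 1 / 48 by norm_num))).exists
  exact ⟨δ, hδ0, hδ48, hδ⟩

namespace Scaling

variable {r : ℕ} {μ : Fin (r + 1) → ℝ} {K : ℕ → Fin (r + 1) → ℕ} {P : ℕ → ℕ} {α : ℕ → ℝ} {c : ℝ}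

theorem tendsto_pr_one (h : Scaling μ K P α c) {E : ∀ n, Config n r (P n) → Prop}
    (hE : Tendsto (fun n ↦ pr μ (K n) (α n) fun cfg ↦ ¬ E n cfg) atTop (nhds 0)) :
    Tendsto (fun n ↦ pr μ (K n) (α n) (E n)) atTop (nhds 1) := by
  have hlim := hE.const_sub 1
  rw [sub_zero] at hlim
  exact hlim.congr fun n ↦
    (pr_eq_one_sub_pr_not h.class_mem (h.ring_le_pool n) (h.channel_mem_Icc n) _).symm

theorem cutEnvelope_nonneg (h : Scaling μ K P α c) {δ : ℝ} (hδ : 0 ≤ δ) (n ℓ : ℕ) :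
    0 ≤ cutEnvelope μ (K n) (P n) (α n) δ ℓ :=
  _root_.cutEnvelope_nonneg h.class_mem (K n) (P n) (h.channel_mem n).1.le hδ ℓ

theorem cutEnvelope_le_exp (h : Scaling μ K P α c) {δ : ℝ} (hδ0 : 0 ≤ δ) (hδ1 : δ ≤ 1) {n ℓ : ℕ}
    (hℓ : ∀ j, ℓ * openOverlap (K n) (P n) (α n) 0 j ≤ δ) :
    cutEnvelope μ (K n) (P n) (α n) δ ℓ ≤
      Real.exp (-((1 - 3 * δ) * (ℓ * meanOverlap μ (K n) (P n) (α n)))) := by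
  rw [meanOverlap, ← mean_const_mul]
  exact missEnvelope_le_exp_mean h.class_mem.1
    (fun j ↦ mul_nonneg ℓ.cast_nonneg (h.openOverlap_nonneg n j)) hδ0 hδ1 hℓ

theorem exists_eventually_mul_openOverlap_le (h : Scaling μ K P α c) {δ : ℝ} (hδ : 0 < δ) :
    ∃ ε > 0, ∀ᶠ n : ℕ in atTop, ∀ ℓ : ℕ, ℓ * Real.log n ≤ ε * n →
      ∀ j, ℓ * openOverlap (K n) (P n) (α n) 0 j ≤ δ := by
  obtain ⟨i, hi⟩ := Finite.exists_min μ
  have hμi := h.class_pos i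
  have hc := h.limit_pos
  refine ⟨δ * μ i / (2 * c), by positivity, ?_⟩
  filter_upwards [h.eventually_mul_meanOverlap_le (show c < 2 * c by linarith),
    eventually_gt_atTop 0] with n hmean hn ℓ hℓ j
  have hn : (0 : ℝ) < n := by exact_mod_cast hn
  have hj := h.openOverlap_le_div n j
  rw [le_div_iff₀ (h.class_pos j)] at hj
  refine le_of_mul_le_mul_right ?_ (mul_pos hμi hn)
  have ho := h.openOverlap_nonneg n j
  calc ℓ * openOverlap (K n) (P n) (α n) 0 j * (μ i * n)
      ≤ ℓ * openOverlap (K n) (P n) (α n) 0 j * (μ j * n) := by gcongr; exact hi j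
    _ = ℓ * n * (openOverlap (K n) (P n) (α n) 0 j * μ j) := by ring
    _ ≤ ℓ * n * meanOverlap μ (K n) (P n) (α n) := by gcongr
    _ = ℓ * (n * meanOverlap μ (K n) (P n) (α n)) := by ring
    _ ≤ ℓ * (2 * c * Real.log n) := by gcongr
    _ = 2 * c * (ℓ * Real.log n) := by ring
    _ ≤ 2 * c * (δ * μ i / (2 * c) * n) := by gcongr
    _ = δ * (μ i * n) := by field_simp

theorem exists_eventually_choose_mul_cutEnvelope_le (h : Scaling μ K P α c) {δ : ℝ}
    (hδ0 : 0 < δ) (hδ : 3 * δ < 1) :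
    ∃ ε > 0, ∀ᶠ n : ℕ in atTop, ∀ ℓ : ℕ, ℓ ≤ n → ℓ * Real.log n ≤ ε * n →
      (n.choose ℓ : ℝ) * cutEnvelope μ (K n) (P n) (α n) δ ℓ ^ (n - ℓ) ≤
        Real.exp (-((c * (1 - 3 * δ) ^ 3 - 1) * Real.log n)) ^ ℓ := by
  obtain ⟨ε, hε, hsmall⟩ := h.exists_eventually_mul_openOverlap_le hδ0
  refine ⟨ε, hε, ?_⟩
  have hc := h.limit_pos
  have hlog : Tendsto (fun n : ℕ ↦ Real.log n) atTop atTop :=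
    Real.tendsto_log_atTop.comp tendsto_natCast_atTop_atTop
  filter_upwards [hsmall, h.eventually_le_mul_meanOverlap (show c * (1 - 3 * δ) < c by nlinarith),
    hlog.eventually_ge_atTop (ε / (3 * δ)), eventually_log_natCast_pos, eventually_gt_atTop 0]
    with n hsmall hmean hlogε hlog hn ℓ hℓn hℓ
  rw [div_le_iff₀ (by positivity)] at hlogε
  have hℓδ : (ℓ : ℝ) ≤ 3 * δ * n := by
    refine le_of_mul_le_mul_right (hℓ.trans ?_) hlog
    nlinarith [n.cast_nonneg (α := ℝ)]
  have hbound := choose_mul_pow_le_exp_pow hn hℓn (h.cutEnvelope_nonneg hδ0.le n ℓ)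
    (sub_nonneg.2 hδ.le) (h.cutEnvelope_le_exp hδ0.le (by linarith) (hsmall ℓ hℓ))
    (by linarith) (h.meanOverlap_nonneg n) hmean
  convert hbound using 5
  ring

theorem one_law_isolated (h : Scaling μ K P α c) (hc : 1 < c) :
    Tendsto (fun n ↦ pr μ (K n) (α n) (fun cfg : Config n r (P n) ↦ NoIsolatedNodes cfg))
      atTop (nhds 1) := by
  obtain ⟨δ, hδ0, hδ48, hδ⟩ := exists_one_lt_mul_pow hc
  obtain ⟨ε, hε, hcut⟩ := h.exists_eventually_choose_mul_cutEnvelope_le hδ0 (by linarith)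
  have hlog := Real.isLittleO_log_id_atTop.comp_tendsto tendsto_natCast_atTop_atTop
  have hlim := tendsto_log_pow_mul_exp_neg (sub_pos.2 hδ) 0
  simp only [pow_zero, one_mul] at hlim
  refine h.tendsto_pr_one (squeeze_zero' (Eventually.of_forall fun n ↦
    pr_nonneg h.class_mem (h.ring_le_pool n) (h.channel_mem_Icc n) _) ?_ hlim)
  filter_upwards [hcut, hlog.bound hε, h.eventually_mul_div_le hδ0, eventually_ge_atTop 1]
    with n hcut hlog hload hn
  have hlogε : ((1 : ℕ) : ℝ) * Real.log n ≤ ε * n := by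
    have := (le_abs_self _).trans hlog
    simpa using this
  have hone := hcut 1 hn hlogε
  rw [Nat.choose_one_right, pow_one] at hone
  exact (pr_not_noIsolatedNodes_le h.class_mem (h.ring_mono n) (h.ring_le_pool n)
    (h.channel_mem_Icc n) (missProb_le_cutEnvelope_one h.class_mem (h.ring_le_pool n)
      (h.channel_mem_Icc n) hδ0.le (by linarith) hload)).trans hone

end Scaling

/-! ### The one-law for connectivity -/

/-- Of the exponent `δ k`, a part at least `1` yields the factor `x`, and the remaining part, with
`ζ ≤ exp (-4/δ)`, yields `exp (-2k)`. -/
theorem exp_mul_rpow_le {k δ x ζ : ℝ} (hδ : 0 < δ) (hk : 1 ≤ δ * k / 2) (hζ0 : 0 < ζ)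
    (hζx : ζ ≤ x) (hζδ : ζ ≤ (Real.exp (4 / δ))⁻¹) :
    Real.exp k * ζ ^ (δ * k) ≤ Real.exp (-k) * x := by
  have hζ1 : ζ ≤ 1 := hζδ.trans (inv_le_one_of_one_le₀ (Real.one_le_exp (by positivity)))
  have hlinear : ζ ^ (δ * k / 2) ≤ x := by
    have := Real.rpow_le_rpow_of_exponent_ge hζ0 hζ1 hk
    rw [Real.rpow_one] at this
    exact this.trans hζx
  have hexp : ζ ^ (δ * k / 2) ≤ Real.exp (-(2 * k)) := by
    refine (Real.rpow_le_rpow hζ0.le hζδ (by linarith)).trans_eq ?_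
    rw [← Real.exp_neg, ← Real.exp_mul]
    congr 1
    field_simp
    ring
  calc Real.exp k * ζ ^ (δ * k)
      = Real.exp k * (ζ ^ (δ * k / 2) * ζ ^ (δ * k / 2)) := by
        rw [← Real.rpow_add hζ0, add_halves]
    _ ≤ Real.exp k * (Real.exp (-(2 * k)) * x) := by gcongr
    _ = Real.exp (-k) * x := by
        rw [← mul_assoc, ← Real.exp_add]
        ring_nf

theorem mul_le_min_mul_max {A P : ℝ} (hA : 0 < A) (hP : 0 ≤ P) (x : ℝ) :
    x * P ≤ min x A⁻¹ * P * max 1 (A * x) := by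
  rcases le_total x A⁻¹ with hx | hx
  · rw [min_eq_left hx, max_eq_left (by rwa [mul_comm, ← le_div_iff₀ hA, one_div]), mul_one]
  · calc x * P = A⁻¹ * P * (A * x) := by field_simp
      _ ≤ min x A⁻¹ * P * max 1 (A * x) := by
        rw [min_eq_right hx]
        gcongr
        exact le_max_right _ _

/-- The first summand accounts for smallest rings with too many overloaded keys. -/
theorem pr_noCross_le_pow_add_cutEnvelope_pow {n r P : ℕ} {μ : Fin (r + 1) → ℝ}
    {K : Fin (r + 1) → ℕ} {α δ : ℝ} (hμ : μ ∈ stdSimplex ℝ (Fin (r + 1))) (hKmono : Monotone K)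
    (hK : ∀ j, K j ≤ P) (hK0 : 0 < K 0) (hα : α ∈ Set.Icc 0 1) (hδ0 : 0 < δ) (hδ1 : δ ≤ 1)
    (hKexp : Real.exp (4 / δ) ≤ δ * K 0) (hload : ∀ j, (K 0 * (K j / P) : ℝ) ≤ δ)
    {S : Finset (Fin n)} (hS : S.Nonempty) :
    pr μ K α (NoCross S : Config n r P → Prop) ≤
      (Real.exp (-(K 0 : ℝ)) * (#S * K 0 / P)) ^ #S + cutEnvelope μ K P α δ #S ^ (n - #S) := by
  have hP : (0 : ℝ) < P := by exact_mod_cast hK0.trans_le (hK 0)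
  have : (0 : ℝ) < #S := by exact_mod_cast hS.card_pos
  have hKhalf : 1 ≤ δ * K 0 / 2 := by
    have : 4 ≤ 4 / δ := le_div_self (by norm_num) hδ0 hδ1
    linarith [Real.add_one_le_exp (4 / δ)]
  -- The load threshold is `1 + A x`, and at most a proportion `ζ = min x A⁻¹` of the keys is heavy:
  -- `ζ = x` suffices as heavy keys have load at least `1`, `ζ = A⁻¹` as their load exceeds `A x`.
  set A := Real.exp (4 / δ)
  set x : ℝ := #S * K 0 / P with hx
  have hA0 : 0 < A := Real.exp_pos _
  have hx0 : 0 < x := by positivity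
  have hζ0 : 0 < min x A⁻¹ := lt_min hx0 (inv_pos.2 hA0)
  have hζ1 : min x A⁻¹ ≤ 1 :=
    (min_le_right _ _).trans (inv_le_one_of_one_le₀ (Real.one_le_exp (by positivity)))
  have hζ : (#S : ℝ) * K 0 ≤ min x A⁻¹ * Fintype.card (Fin P) * max 1 (A * x) := by
    rw [Fintype.card_fin, show (#S : ℝ) * K 0 = x * P by rw [hx]; field_simp]
    exact mul_le_min_mul_max hA0 hP.le x
  have hM (j) : A * x ≤ δ * (#S * (K 0 * (K j / P))) := by
    have hj : (K 0 : ℝ) ≤ K j := by exact_mod_cast hKmono (Fin.zero_le j)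
    calc A * x ≤ δ * K j * x := by gcongr; exact hKexp.trans (by gcongr)
      _ = δ * (#S * (K 0 * (K j / P))) := by rw [hx]; ring
  refine (pr_noCross_le hμ hKmono hK hα rfl).trans <|
    (mean_missProb_pow_le hμ (by simpa using hK) (by simpa using hK 0) hα (by positivity) hδ0.le hδ1
      hζ0 hζ1 hζ (n - #S)).trans ?_
  refine add_le_add (pow_le_pow_left₀ (mul_nonneg (Real.exp_pos _).le (Real.rpow_nonneg hζ0.le _))
    ?_ _) (pow_le_pow_left₀ ?_ ?_ _)
  · exact exp_mul_rpow_le hδ0 hKhalf hζ0 (min_le_left _ _) (min_le_right _ _)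
  · exact missBound_nonneg hμ _ _ hα.1 _ hδ0.le (by positivity)
  · rw [Fintype.card_fin]
    exact missBound_le_missEnvelope hμ.1 K (K 0) P hα.1 #S hδ1 (by positivity) hM hload

theorem choose_le_exp_one_mul_div_pow {n ℓ : ℕ} (hℓ : 0 < ℓ) :
    (n.choose ℓ : ℝ) ≤ (Real.exp 1 * (n / ℓ)) ^ ℓ := by
  have : (0 : ℝ) < ℓ := by exact_mod_cast hℓ
  have hfactorial := Real.pow_div_factorial_le_exp (ℓ : ℝ) (by positivity) ℓ
  calc (n.choose ℓ : ℝ) ≤ n ^ ℓ / ℓ.factorial := Nat.choose_le_pow_div ℓ n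
    _ = ℓ ^ ℓ / ℓ.factorial * (n / ℓ) ^ ℓ := by rw [div_pow]; field_simp
    _ ≤ Real.exp ℓ * (n / ℓ) ^ ℓ := by gcongr
    _ = (Real.exp 1 * (n / ℓ)) ^ ℓ := by rw [mul_pow, ← Real.exp_nat_mul, mul_one]

theorem exists_forall_choose_le_exp {θ : ℝ} (hθ : 0 < θ) : ∃ η > 0, ∀ n ℓ : ℕ, 0 < ℓ →
    (ℓ : ℝ) ≤ η * n → (n.choose ℓ : ℝ) ≤ Real.exp (θ * n) := by
  have hcont : Continuous fun x : ℝ ↦ x + Real.negMulLog x :=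
    continuous_id.add Real.continuous_negMulLog
  have hzero : (0 : ℝ) + Real.negMulLog 0 < θ := by simpa using hθ
  obtain ⟨η, hη, hentropy⟩ :=
    Metric.eventually_nhds_iff.1 ((hcont.tendsto 0).eventually_lt_const hzero)
  refine ⟨η / 2, by positivity, fun n ℓ hℓ hle ↦ ?_⟩
  have hℓ0 : (0 : ℝ) < ℓ := by exact_mod_cast hℓ
  have hn : (0 : ℝ) < n := pos_of_mul_pos_right (hℓ0.trans_le hle) (by positivity)
  have hx : (0 : ℝ) < ℓ / n := by positivity
  have hxη : dist (ℓ / n : ℝ) 0 < η := by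
    rw [Real.dist_eq, sub_zero, abs_of_pos hx, div_lt_iff₀ hn]
    nlinarith
  calc (n.choose ℓ : ℝ) ≤ (Real.exp 1 * (n / ℓ)) ^ ℓ := choose_le_exp_one_mul_div_pow hℓ
    _ = Real.exp ((ℓ / n + Real.negMulLog (ℓ / n)) * n) := by
      have hratio : (n / ℓ : ℝ) = Real.exp (-Real.log (ℓ / n)) := by
        rw [Real.exp_neg, Real.exp_log hx, inv_div]
      rw [hratio, ← Real.exp_add, ← Real.exp_nat_mul, Real.negMulLog]
      congr 1
      field_simp
    _ ≤ Real.exp (θ * n) := by gcongr; exact (hentropy hxη).le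

theorem choose_mul_pow_le_exp {n ℓ : ℕ} (hℓ : 2 * ℓ ≤ n) {q θ : ℝ} (hq0 : 0 ≤ q) (hθ : 0 ≤ θ)
    (hq : q ≤ Real.exp (-θ)) (hchoose : (n.choose ℓ : ℝ) ≤ Real.exp (θ / 4 * n)) :
    (n.choose ℓ : ℝ) * q ^ (n - ℓ) ≤ Real.exp (-(θ / 4 * n)) := by
  have hhalf : (n : ℝ) / 2 ≤ (n - ℓ : ℕ) := by
    rw [div_le_iff₀ two_pos]
    exact_mod_cast (by omega : n ≤ (n - ℓ) * 2)
  calc (n.choose ℓ : ℝ) * q ^ (n - ℓ) ≤ Real.exp (θ / 4 * n) * Real.exp (-θ) ^ (n - ℓ) := by gcongr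
    _ = Real.exp (θ / 4 * n - θ * (n - ℓ : ℕ)) := by
      rw [← Real.exp_nat_mul, ← Real.exp_add]
      ring_nf
    _ ≤ Real.exp (-(θ / 4 * n)) := Real.exp_le_exp.2 (by nlinarith)

theorem choose_mul_pow_le_half_pow {n ℓ : ℕ} (hℓ : 2 * ℓ ≤ n) {q : ℝ} (hq0 : 0 ≤ q)
    (hq : q ≤ 1 / 16) : (n.choose ℓ : ℝ) * q ^ (n - ℓ) ≤ (1 / 2) ^ n := by
  have hchoose : (n.choose ℓ : ℝ) ≤ 2 ^ n := by exact_mod_cast Nat.choose_le_two_pow n ℓ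
  calc (n.choose ℓ : ℝ) * q ^ (n - ℓ) ≤ 2 ^ n * ((1 / 4) ^ 2) ^ (n - ℓ) := by
        gcongr
        linarith
    _ ≤ 2 ^ n * (1 / 4) ^ n := by
        rw [← pow_mul]
        gcongr 2 ^ n * ?_
        exact pow_le_pow_of_le_one (by norm_num) (by norm_num) (by omega)
    _ = (1 / 2) ^ n := by rw [← mul_pow]; norm_num

theorem choose_mul_exp_neg_mul_pow_le {n ℓ : ℕ} (hn : 0 < n) (hℓ : 0 < ℓ) {k P σ : ℝ} (hk : 0 ≤ k)
    (hσ : 0 < σ) (hP : σ * n ≤ P) :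
    (n.choose ℓ : ℝ) * (Real.exp (-k) * (ℓ * k / P)) ^ ℓ ≤
      (Real.exp 1 / σ * (k * Real.exp (-k))) ^ ℓ := by
  have hP0 : 0 < P := lt_of_lt_of_le (by positivity) hP
  calc (n.choose ℓ : ℝ) * (Real.exp (-k) * (ℓ * k / P)) ^ ℓ
      ≤ (Real.exp 1 * (n / ℓ)) ^ ℓ * (Real.exp (-k) * (ℓ * k / (σ * n))) ^ ℓ := by
        gcongr
        exact choose_le_exp_one_mul_div_pow hℓ
    _ = _ := by
      rw [← mul_pow]
      congr 1
      field_simp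

theorem sum_Icc_one_pow_le {x : ℝ} (hx0 : 0 ≤ x) (hx : x ≤ 1 / 2) (m : ℕ) :
    ∑ ℓ ∈ Icc 1 m, x ^ ℓ ≤ 2 * x := by
  have hsum := geom_sum_Ico_le_of_lt_one hx0 (by linarith : x < 1) (m := 1) (n := m + 1)
  rw [pow_one] at hsum
  refine hsum.trans ?_
  rw [div_le_iff₀ (by linarith)]
  nlinarith

theorem tendsto_natCast_mul_exp_neg {κ : ℝ} (hκ : 0 < κ) :
    Tendsto (fun n : ℕ ↦ n * Real.exp (-(κ * n))) atTop (nhds 0) := by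
  have hlin : Tendsto (fun n : ℕ ↦ κ * (n : ℝ)) atTop atTop :=
    tendsto_natCast_atTop_atTop.const_mul_atTop hκ
  have hlim := ((Real.tendsto_pow_mul_exp_neg_atTop_nhds_zero 1).comp hlin).const_mul κ⁻¹
  rw [mul_zero] at hlim
  refine hlim.congr fun n ↦ ?_
  simp only [Function.comp_apply, pow_one]
  field_simp

theorem tendsto_sum_Icc_of_le_pow_add_exp {f : ℕ → ℕ → ℝ} {y : ℕ → ℝ} {κ : ℝ} (hκ : 0 < κ)
    (hf : ∀ n ℓ, 0 ≤ f n ℓ) (hy0 : ∀ n, 0 ≤ y n) (hy : Tendsto y atTop (nhds 0))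
    (hle : ∀ᶠ n : ℕ in atTop, ∀ ℓ ∈ Icc 1 (n / 2), f n ℓ ≤ y n ^ ℓ + Real.exp (-(κ * n))) :
    Tendsto (fun n ↦ ∑ ℓ ∈ Icc 1 (n / 2), f n ℓ) atTop (nhds 0) := by
  have hlim := (hy.const_mul 2).add (tendsto_natCast_mul_exp_neg hκ)
  rw [mul_zero, add_zero] at hlim
  refine squeeze_zero' (Eventually.of_forall fun n ↦ sum_nonneg fun ℓ _ ↦ hf n ℓ) ?_ hlim
  filter_upwards [hle, hy.eventually_le_const (show (0 : ℝ) < 1 / 2 by norm_num)] with n hle hyn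
  refine (sum_le_sum hle).trans ?_
  rw [sum_add_distrib, sum_const, Nat.card_Icc, nsmul_eq_mul]
  gcongr
  · exact sum_Icc_one_pow_le (hy0 n) hyn _
  · omega

namespace Scaling

variable {r : ℕ} {μ : Fin (r + 1) → ℝ} {K : ℕ → Fin (r + 1) → ℕ} {P : ℕ → ℕ} {α : ℕ → ℝ} {c : ℝ}

theorem tendsto_ring_atTop (h : Scaling μ K P α c) {σ : ℝ} (hσ : 0 < σ)
    (hPσ : ∀ n : ℕ, σ * n ≤ (P n : ℝ))
    (hp : Tendsto (fun n : ℕ ↦ (n : ℝ) * α n * pEdge (P n) (K n 0) (K n 0)) atTop atTop) :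
    Tendsto (fun n ↦ (K n 0 : ℝ)) atTop atTop := by
  refine tendsto_atTop_mono (fun n ↦ ?_) (Real.tendsto_sqrt_atTop.comp (hp.atTop_mul_const hσ))
  refine Real.sqrt_le_iff.2 ⟨(K n 0).cast_nonneg, ?_⟩
  have hα := h.channel_mem_Icc n
  have hp0 := pEdge_nonneg (P n) (K n 0) (K n 0)
  have hP : (0 : ℝ) < P n := by exact_mod_cast h.pool_pos n
  calc (n : ℝ) * α n * pEdge (P n) (K n 0) (K n 0) * σ
      ≤ n * 1 * (K n 0 * (K n 0 / P n)) * σ := by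
        gcongr
        exacts [hα.2, pEdge_le_mul_div (h.ring_le_pool n 0) (h.ring_le_pool n 0)]
    _ = σ * n * (K n 0 * (K n 0 / P n)) := by ring
    _ ≤ P n * (K n 0 * (K n 0 / P n)) := by gcongr; exact hPσ n
    _ = (K n 0 : ℝ) ^ 2 := by field_simp

/-- The largest class alone separates `cutEnvelope` from `1`. -/
theorem exists_eventually_cutEnvelope_le_exp (h : Scaling μ K P α c) {δ : ℝ} (hδ0 : 0 ≤ δ)
    (hδ1 : δ < 1) {ε : ℝ} (hε : 0 < ε) :
    ∃ θ > 0, ∀ᶠ n : ℕ in atTop, ∀ ℓ : ℕ, ε * n ≤ ℓ * Real.log n →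
      cutEnvelope μ (K n) (P n) (α n) δ ℓ ≤ Real.exp (-θ) := by
  have hc := h.limit_pos
  set v := ε * (c / 2) with hv
  have hv0 : 0 < v := by positivity
  have hlast := h.class_pos (Fin.last r)
  have : 0 < (1 - δ) / (1 + δ) := div_pos (by linarith) (by linarith)
  refine ⟨(1 - δ) / (1 + δ) * (μ (Fin.last r) * (v / (1 + v))), by positivity, ?_⟩
  filter_upwards [h.eventually_le_mul_meanOverlap (half_lt_self hc), eventually_log_natCast_pos,
    eventually_gt_atTop 0] with n hmean hlog hn ℓ hℓ
  refine missEnvelope_le_exp_single h.class_mem.1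
    (fun j ↦ mul_nonneg ℓ.cast_nonneg (h.openOverlap_nonneg n j)) hδ0 hδ1.le hv0.le
    (j := Fin.last r) ?_
  have := h.meanOverlap_nonneg n
  refine le_trans ?_
    (mul_le_mul_of_nonneg_left (h.meanOverlap_le_openOverlap_last n) ℓ.cast_nonneg)
  have hn : (0 : ℝ) < n := by exact_mod_cast hn
  refine le_of_mul_le_mul_right ?_ (mul_pos hn hlog)
  calc v * (n * Real.log n) = ε * n * (c / 2 * Real.log n) := by rw [hv]; ring
    _ ≤ ℓ * Real.log n * (n * meanOverlap μ (K n) (P n) (α n)) := by gcongr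
    _ = ℓ * meanOverlap μ (K n) (P n) (α n) * (n * Real.log n) := by ring

theorem eventually_cutEnvelope_le_three_mul (h : Scaling μ K P α c)
    (hp : Tendsto (fun n : ℕ ↦ (n : ℝ) * α n * pEdge (P n) (K n 0) (K n 0)) atTop atTop) {δ : ℝ}
    (hδ0 : 0 < δ) (hδ1 : δ ≤ 1) {η : ℝ} (hη : 0 < η) :
    ∀ᶠ n : ℕ in atTop, ∀ ℓ : ℕ, η * n ≤ ℓ →
      cutEnvelope μ (K n) (P n) (α n) δ ℓ ≤ 3 * δ := by
  filter_upwards [hp.eventually_ge_atTop (δ⁻¹ / η)] with n hn ℓ hℓ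
  refine missEnvelope_le_three_mul h.class_mem hδ0 hδ1 fun j ↦ ?_
  have hα := (h.channel_mem n).1.le
  have hp0 := pEdge_nonneg (P n) (K n 0) (K n 0)
  rw [div_le_iff₀ hη] at hn
  calc δ⁻¹ ≤ n * α n * pEdge (P n) (K n 0) (K n 0) * η := hn
    _ = η * n * (α n * pEdge (P n) (K n 0) (K n 0)) := by ring
    _ ≤ ℓ * openOverlap (K n) (P n) (α n) 0 0 := by
      gcongr
      exact mul_le_mul_of_nonneg_left
        (pEdge_le_mul_div (h.ring_le_pool n 0) (h.ring_le_pool n 0)) hα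
    _ ≤ ℓ * openOverlap (K n) (P n) (α n) 0 j := by
      gcongr
      exact openOverlap_monotone (h.ring_mono n) (P n) hα 0 (Fin.zero_le j)

/-- Up to size `η n` the bound `exp (-θ)` beats the entropy of the cuts, beyond it the bound
`1 / 16` beats their total number. -/
theorem exists_eventually_choose_mul_cutEnvelope_le_exp (h : Scaling μ K P α c)
    (hp : Tendsto (fun n : ℕ ↦ (n : ℝ) * α n * pEdge (P n) (K n 0) (K n 0)) atTop atTop) {δ : ℝ}
    (hδ0 : 0 < δ) (hδ : δ ≤ 1 / 48) {ε : ℝ} (hε : 0 < ε) :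
    ∃ κ > 0, ∀ᶠ n : ℕ in atTop, ∀ ℓ ∈ Icc 1 (n / 2), ε * n ≤ ℓ * Real.log n →
      (n.choose ℓ : ℝ) * cutEnvelope μ (K n) (P n) (α n) δ ℓ ^ (n - ℓ) ≤
        Real.exp (-(κ * n)) := by
  obtain ⟨θ, hθ, hmid⟩ := h.exists_eventually_cutEnvelope_le_exp hδ0.le (by linarith) hε
  obtain ⟨η, hη, hchoose⟩ := exists_forall_choose_le_exp (show 0 < θ / 4 by positivity)
  refine ⟨min (θ / 4) (Real.log 2), lt_min (by positivity) (Real.log_pos one_lt_two), ?_⟩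
  filter_upwards [hmid, h.eventually_cutEnvelope_le_three_mul hp hδ0 (by linarith) hη]
    with n hmid hlarge ℓ hℓ hℓε
  obtain ⟨hℓ1, hℓ2⟩ := mem_Icc.1 hℓ
  have henv := h.cutEnvelope_nonneg hδ0.le n ℓ
  rcases le_total (ℓ : ℝ) (η * n) with hℓη | hℓη
  · refine (choose_mul_pow_le_exp (by omega) henv hθ.le (hmid ℓ hℓε)
      (hchoose n ℓ hℓ1 hℓη)).trans (Real.exp_le_exp.2 (neg_le_neg ?_))
    gcongr
    exact min_le_left _ _
  · refine (choose_mul_pow_le_half_pow (by omega) henv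
      ((hlarge ℓ hℓη).trans (by linarith))).trans ?_
    have hhalf : (1 / 2 : ℝ) ^ n = Real.exp (-(Real.log 2 * n)) := by
      rw [mul_comm, ← mul_neg, Real.exp_nat_mul, Real.exp_neg, Real.exp_log two_pos, one_div]
    rw [hhalf]
    refine Real.exp_le_exp.2 (neg_le_neg ?_)
    gcongr
    exact min_le_right _ _

theorem tendsto_sum_choose_mul_cutEnvelope (h : Scaling μ K P α c)
    (hp : Tendsto (fun n : ℕ ↦ (n : ℝ) * α n * pEdge (P n) (K n 0) (K n 0)) atTop atTop) {δ : ℝ}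
    (hδ0 : 0 < δ) (hδ : δ ≤ 1 / 48) (hcδ : 1 < c * (1 - 3 * δ) ^ 3) :
    Tendsto (fun n ↦ ∑ ℓ ∈ Icc 1 (n / 2),
      (n.choose ℓ : ℝ) * cutEnvelope μ (K n) (P n) (α n) δ ℓ ^ (n - ℓ)) atTop (nhds 0) := by
  obtain ⟨ε, hε, hsmall⟩ := h.exists_eventually_choose_mul_cutEnvelope_le hδ0 (by linarith)
  obtain ⟨κ, hκ, hlarge⟩ := h.exists_eventually_choose_mul_cutEnvelope_le_exp hp hδ0 hδ hε
  have hlim := tendsto_log_pow_mul_exp_neg (sub_pos.2 hcδ) 0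
  simp only [pow_zero, one_mul] at hlim
  refine tendsto_sum_Icc_of_le_pow_add_exp hκ (fun n ℓ ↦ mul_nonneg (Nat.cast_nonneg _)
    (pow_nonneg (h.cutEnvelope_nonneg hδ0.le n ℓ) _)) (fun n ↦ (Real.exp_pos _).le) hlim ?_
  filter_upwards [hsmall, hlarge] with n hsmall hlarge ℓ hℓ
  rcases le_total (ℓ * Real.log n) (ε * n) with hℓε | hℓε
  · have hℓn : ℓ ≤ n := (mem_Icc.1 hℓ).2.trans (Nat.div_le_self n 2)
    exact (hsmall ℓ hℓn hℓε).trans (le_add_of_nonneg_right (Real.exp_pos _).le)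
  · exact (hlarge ℓ hℓ hℓε).trans (le_add_of_nonneg_left (by positivity))

theorem tendsto_sum_choose_mul_overload (h : Scaling μ K P α c) {σ : ℝ} (hσ : 0 < σ)
    (hPσ : ∀ n : ℕ, σ * n ≤ (P n : ℝ))
    (hp : Tendsto (fun n : ℕ ↦ (n : ℝ) * α n * pEdge (P n) (K n 0) (K n 0)) atTop atTop) :
    Tendsto (fun n ↦ ∑ ℓ ∈ Icc 1 (n / 2),
      (n.choose ℓ : ℝ) * (Real.exp (-(K n 0 : ℝ)) * (ℓ * K n 0 / P n)) ^ ℓ) atTop (nhds 0) := by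
  have hlim := ((Real.tendsto_pow_mul_exp_neg_atTop_nhds_zero 1).comp
    (h.tendsto_ring_atTop hσ hPσ hp)).const_mul (Real.exp 1 / σ)
  simp only [Function.comp_def, pow_one, mul_zero] at hlim
  refine tendsto_sum_Icc_of_le_pow_add_exp one_pos (fun n ℓ ↦ by positivity)
    (fun n ↦ by positivity) hlim ?_
  filter_upwards [eventually_gt_atTop 0] with n hn ℓ hℓ
  exact (choose_mul_exp_neg_mul_pow_le hn (mem_Icc.1 hℓ).1 (K n 0).cast_nonneg hσ (hPσ n)).trans
    (le_add_of_nonneg_right (Real.exp_pos _).le)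

theorem one_law_connected (h : Scaling μ K P α c) (hc : 1 < c) {σ : ℝ} (hσ : 0 < σ)
    (hPσ : ∀ n : ℕ, σ * n ≤ (P n : ℝ))
    (hp : Tendsto (fun n : ℕ ↦ (n : ℝ) * α n * pEdge (P n) (K n 0) (K n 0)) atTop atTop) :
    Tendsto (fun n ↦ pr μ (K n) (α n) (fun cfg : Config n r (P n) ↦ (graphOf cfg).Connected))
      atTop (nhds 1) := by
  obtain ⟨δ, hδ0, hδ48, hδ⟩ := exists_one_lt_mul_pow hc
  have hlim := (h.tendsto_sum_choose_mul_overload hσ hPσ hp).add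
    (h.tendsto_sum_choose_mul_cutEnvelope hp hδ0 hδ48 hδ)
  rw [add_zero] at hlim
  refine h.tendsto_pr_one (squeeze_zero' (Eventually.of_forall fun n ↦
    pr_nonneg h.class_mem (h.ring_le_pool n) (h.channel_mem_Icc n) _) ?_ hlim)
  filter_upwards [h.eventually_mul_div_le hδ0, eventually_gt_atTop 0,
    (h.tendsto_ring_atTop hσ hPσ hp).eventually_ge_atTop (Real.exp (4 / δ) / δ)]
    with n hload hn hring
  rw [div_le_iff₀' hδ0] at hring
  simp only [← sum_add_distrib, ← mul_add]
  exact pr_not_connected_le hn h.class_mem (h.ring_le_pool n) (h.channel_mem_Icc n) fun S hS _ ↦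
    pr_noCross_le_pow_add_cutEnvelope_pow h.class_mem (h.ring_mono n) (h.ring_le_pool n)
      (h.one_le_ring n) (h.channel_mem_Icc n) hδ0 (by linarith) hring hload hS

theorem zero_law_connected (h : Scaling μ K P α c) (hc : c < 1) :
    Tendsto (fun n ↦ pr μ (K n) (α n) (fun cfg : Config n r (P n) ↦ (graphOf cfg).Connected))
      atTop (nhds 0) := by
  refine squeeze_zero' (Eventually.of_forall fun n ↦
    pr_nonneg h.class_mem (h.ring_le_pool n) (h.channel_mem_Icc n) _) ?_ (h.zero_law_isolated hc)
  filter_upwards [eventually_ge_atTop 2] with n hn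
  exact pr_mono h.class_mem (h.ring_le_pool n) (h.channel_mem_Icc n) fun _ ↦
    noIsolatedNodes_of_connected hn

end Scaling

end

/-- Corollary: zero-one laws in terms of `K₁ K_avg / P`:
if `λ₁(n) = o(1)` and `αₙ K₁ₙ K_avg,n / Pₙ ∼ c log n / n` for some `c > 0`, then the
zero-one law for absence of isolated nodes holds; if in addition `Pₙ ≥ σ n` for some `σ > 0`
and `p₁₁(n) = ω(1/(n αₙ))`, the same zero-one law holds for connectivity. -/
theorem zero_one_law_Kavg {r : ℕ} (μ : Fin (r + 1) → ℝ)
    (hμpos : ∀ i, 0 < μ i) (hμsum : ∑ i, μ i = 1)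
    (K : ℕ → Fin (r + 1) → ℕ) (P : ℕ → ℕ) (α : ℕ → ℝ)
    (hK1 : ∀ n, 1 ≤ K n 0) (hKmono : ∀ n, Monotone (K n))
    (hKP : ∀ n, 2 * K n (Fin.last r) ≤ P n)
    (hα : ∀ n, α n ∈ Set.Ioo (0 : ℝ) 1)
    (c : ℝ) (hcpos : 0 < c)
    (hlam : Tendsto (fun n : ℕ => lamb μ (K n) (P n) 0) atTop (nhds 0))
    (hscal : Tendsto
      (fun n : ℕ =>
        (α n * (K n 0 : ℝ) * (∑ j, μ j * (K n j : ℝ)) / (P n : ℝ)) / (c * Real.log n / n))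
      atTop (nhds 1)) :
    ((c < 1 →
        Tendsto
          (fun n => pr μ (K n) (α n) (fun cfg : Config n r (P n) => NoIsolatedNodes cfg))
          atTop (nhds 0)) ∧
      (1 < c →
        Tendsto
          (fun n => pr μ (K n) (α n) (fun cfg : Config n r (P n) => NoIsolatedNodes cfg))
          atTop (nhds 1))) ∧
    (∀ σ : ℝ, 0 < σ → (∀ n, σ * n ≤ (P n : ℝ)) →
      Tendsto (fun n : ℕ => (n : ℝ) * α n * pEdge (P n) (K n 0) (K n 0)) atTop atTop →
      ((c < 1 →
          Tendsto
            (fun n => pr μ (K n) (α n)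
              (fun cfg : Config n r (P n) => (graphOf cfg).Connected))
            atTop (nhds 0)) ∧
        (1 < c →
          Tendsto
            (fun n => pr μ (K n) (α n)
              (fun cfg : Config n r (P n) => (graphOf cfg).Connected))
            atTop (nhds 1)))) := by
  have h : Scaling μ K P α c :=
    ⟨hμpos, hμsum, hK1, hKmono, hKP, hα, hcpos, hlam, hscal⟩
  exact ⟨⟨h.zero_law_isolated, h.one_law_isolated⟩, fun σ hσ hPσ hp ↦
    ⟨h.zero_law_connected, fun hc ↦ h.one_law_connected hc hσ hPσ hp⟩⟩
end

section
/- Consider sequences of integers K_{i,n}, K_{j,n}, P_n with 1 ≤ K_{i,n}, K_{j,n} ≤ P_n/2 and let p_ij(n) = 1 − C(P_n−K_{i,n}, K_{j,n})/C(P_n, K_{j,n}). Then lim_{n→∞} p_ij(n) = 0 if and only if lim_{n→∞} K_{i,n} K_{j,n}/P_n = 0, and in that case one has the asymptotic equivalence p_ij(n) ~ K_{i,n} K_{j,n}/P_n, i.e., lim_{n→∞} p_ij(n) / (K_{i,n} K_{j,n}/P_n) = 1. -/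
/-!
Write `x = a b / P`. Enlarging the fixed set one element at a time multiplies the avoidance
probability by `1 - b / (P - j) ≤ 1 - b / P`, so it is at most
`(1 - b / P) ^ a ≤ exp (-x) ≤ 1 / (1 + x)`. The same enlargement lowers it by at most `b / P`,
which gives the union bound `1 - x`. Hence `x / (1 + x) ≤ pEdge ≤ x`. Both the equivalence of the
two limits and the asymptotic equivalence are read off from this sandwich.
-/

open Filter

section Sandwich

variable {ι : Type*} {l : Filter ι} {p x : ι → ℝ}

lemma tendsto_zero_iff_of_div_one_add_le (hx : ∀ᶠ i in l, 0 ≤ x i)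
    (hlower : ∀ᶠ i in l, x i / (1 + x i) ≤ p i) (hupper : ∀ᶠ i in l, p i ≤ x i) :
    Tendsto p l (nhds 0) ↔ Tendsto x l (nhds 0) := by
  constructor <;> intro h
  · have hodds : Tendsto (fun i => p i / (1 - p i)) l (nhds 0) := by
      simpa [Pi.div_def] using h.div (h.const_sub 1) (by norm_num)
    refine squeeze_zero' hx ?_ hodds
    filter_upwards [hx, hlower, h.eventually_lt_const one_pos] with i hxi hi hpi
    rw [div_le_iff₀ (by linarith)] at hi
    rw [le_div_iff₀ (by linarith)]
    linarith
  · refine squeeze_zero' ?_ hupper h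
    filter_upwards [hx, hlower] with i hxi hi
    exact le_trans (by positivity) hi

lemma tendsto_div_one_of_div_one_add_le (hx : ∀ᶠ i in l, 0 < x i)
    (hlower : ∀ᶠ i in l, x i / (1 + x i) ≤ p i) (hupper : ∀ᶠ i in l, p i ≤ x i)
    (h : Tendsto x l (nhds 0)) : Tendsto (fun i => p i / x i) l (nhds 1) := by
  have hinv : Tendsto (fun i => (1 + x i)⁻¹) l (nhds 1) := by
    simpa using (h.const_add 1).inv₀ (by norm_num)
  refine tendsto_of_tendsto_of_tendsto_of_le_of_le' hinv tendsto_const_nhds ?_ ?_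
  · filter_upwards [hx, hlower] with i hxi hi
    rwa [le_div_iff₀ hxi, inv_mul_eq_div]
  · filter_upwards [hx, hupper] with i hxi hi
    exact (div_le_one hxi).2 hi

end Sandwich

section AvoidProb

variable {P a b : ℕ}

lemma avoidProb_nonneg (P a b : ℕ) : 0 ≤ avoidProb P a b := by
  unfold avoidProb
  positivity

lemma avoidProb_zero_left (hb : b ≤ P) : avoidProb P 0 b = 1 := by
  have hchoose : (P.choose b : ℝ) ≠ 0 := mod_cast (Nat.choose_pos hb).ne'
  simp [avoidProb, hchoose]

lemma avoidProb_succ_left (ha : a < P) (b : ℕ) :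
    avoidProb P (a + 1) b = avoidProb P a b * (1 - b / (P - a)) := by
  obtain ⟨m, rfl⟩ := Nat.exists_eq_add_of_lt ha
  have hm : a + m + 1 - (a + 1) = m := by omega
  have hm' : a + m + 1 - a = m + 1 := by omega
  have hchoose : (m.choose b : ℝ) * (m + 1) = (m + 1).choose b * (m + 1 - b) := by
    rcases le_or_gt b (m + 1) with hb | hb
    · have h := Nat.choose_mul_succ_eq m b
      rify [hb] at h
      exact h
    -- For `b > P - a` the factor is negative, but both binomial coefficients vanish.
    · simp [Nat.choose_eq_zero_of_lt hb, Nat.choose_eq_zero_of_lt (show m < b by omega)]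
  have hfactor : 1 - (b : ℝ) / ((a + m + 1 : ℕ) - a) = (m + 1 - b) / (m + 1) := by
    push_cast
    rw [show (a + m + 1 - a : ℝ) = m + 1 by ring]
    field_simp
  rw [avoidProb, avoidProb, hm, hm', hfactor, div_mul_div_comm, ← hchoose,
    mul_div_mul_right _ _ (by positivity)]

lemma one_sub_div_nonneg (hb : b ≤ P) : 0 ≤ 1 - (b : ℝ) / P :=
  sub_nonneg.2 (div_le_one_of_le₀ (mod_cast hb) P.cast_nonneg)

lemma avoidProb_le_pow (ha : a ≤ P) (hb : b ≤ P) :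
    avoidProb P a b ≤ (1 - b / P : ℝ) ^ a := by
  induction a with
  | zero => simp [avoidProb_zero_left hb]
  | succ a ih =>
    have haP : (0 : ℝ) < P - a := sub_pos.2 (mod_cast ha)
    have hfactor : 1 - (b : ℝ) / (P - a) ≤ 1 - b / P := by
      gcongr
      simp
    calc avoidProb P (a + 1) b
        = avoidProb P a b * (1 - b / (P - a)) := avoidProb_succ_left ha b
      _ ≤ avoidProb P a b * (1 - b / P) :=
        mul_le_mul_of_nonneg_left hfactor (avoidProb_nonneg P a b)
      _ ≤ (1 - b / P) ^ a * (1 - b / P) :=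
        mul_le_mul_of_nonneg_right (ih (Nat.le_of_succ_le ha)) (one_sub_div_nonneg hb)
      _ = (1 - b / P) ^ (a + 1) := (pow_succ _ _).symm

lemma avoidProb_le_inv (ha : a ≤ P) (hb : b ≤ P) :
    avoidProb P a b ≤ (1 + a * b / P : ℝ)⁻¹ := by
  calc avoidProb P a b
      ≤ (1 - b / P : ℝ) ^ a := avoidProb_le_pow ha hb
    _ ≤ Real.exp (-(b / P)) ^ a :=
      pow_le_pow_left₀ (one_sub_div_nonneg hb) (Real.one_sub_le_exp_neg _) a
    _ = (Real.exp (a * b / P))⁻¹ := by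
      rw [← Real.exp_nat_mul, ← Real.exp_neg]
      congr 1
      ring
    _ ≤ (1 + a * b / P : ℝ)⁻¹ := by
      gcongr
      linarith [Real.add_one_le_exp (a * b / P : ℝ)]

lemma avoidProb_sub_avoidProb_succ_le (ha : a < P) (b : ℕ) :
    avoidProb P a b - avoidProb P (a + 1) b ≤ b / P := by
  rcases b with _ | c
  · simp [avoidProb]
  have hpascal : ((P - a).choose (c + 1) : ℝ) - (P - (a + 1)).choose (c + 1)
      = (P - (a + 1)).choose c := by
    rw [show P - a = P - (a + 1) + 1 by omega, Nat.choose_succ_succ']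
    push_cast
    ring
  have habsorb : (P : ℝ) * (P - 1).choose c = P.choose (c + 1) * (c + 1 : ℕ) := by
    have h := Nat.add_one_mul_choose_eq (P - 1) c
    rw [Nat.sub_add_cancel (show 1 ≤ P by omega)] at h
    exact_mod_cast h
  have hP : (0 : ℝ) < P := mod_cast (Nat.zero_le a).trans_lt ha
  calc avoidProb P a (c + 1) - avoidProb P (a + 1) (c + 1)
      = (P - (a + 1)).choose c / P.choose (c + 1) := by
        rw [avoidProb, avoidProb, ← sub_div, hpascal]
    _ ≤ (P - 1).choose c / P.choose (c + 1) := by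
        gcongr
        omega
    _ ≤ (c + 1 : ℕ) / P := by
        refine div_le_of_le_mul₀ (by positivity) (by positivity) ?_
        rw [div_mul_eq_mul_div, le_div_iff₀ hP]
        linarith

lemma one_sub_le_avoidProb (ha : a ≤ P) (hb : b ≤ P) :
    1 - (a * b / P : ℝ) ≤ avoidProb P a b := by
  induction a with
  | zero => simp [avoidProb_zero_left hb]
  | succ a ih =>
    calc 1 - ((a + 1 : ℕ) * b / P : ℝ)
        = 1 - (a * b / P : ℝ) - b / P := by
          push_cast
          ring
      _ ≤ avoidProb P a b - b / P := sub_le_sub_right (ih (Nat.le_of_succ_le ha)) _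
      _ ≤ avoidProb P (a + 1) b := sub_le_comm.1 (avoidProb_sub_avoidProb_succ_le ha b)

lemma pEdge_le (ha : a ≤ P) (hb : b ≤ P) : pEdge P a b ≤ a * b / P :=
  sub_le_comm.1 (one_sub_le_avoidProb ha hb)

lemma div_one_add_le_pEdge (ha : a ≤ P) (hb : b ≤ P) :
    (a * b / P : ℝ) / (1 + a * b / P) ≤ pEdge P a b := by
  calc (a * b / P : ℝ) / (1 + a * b / P)
      = 1 - (1 + a * b / P : ℝ)⁻¹ := by
        have hne : (1 + a * b / P : ℝ) ≠ 0 := by positivity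
        rw [eq_sub_iff_add_eq, ← one_div, ← add_div, add_comm, div_self hne]
    _ ≤ pEdge P a b := sub_le_sub_left (avoidProb_le_inv ha hb) 1

end AvoidProb

theorem pEdge_asymptotic_general {ι : Type*} {l : Filter ι} {a b P : ι → ℕ}
    (ha : ∀ᶠ i in l, 1 ≤ a i) (hb : ∀ᶠ i in l, 1 ≤ b i)
    (haP : ∀ᶠ i in l, a i ≤ P i) (hbP : ∀ᶠ i in l, b i ≤ P i) :
    (Tendsto (fun i => pEdge (P i) (a i) (b i)) l (nhds 0) ↔
      Tendsto (fun i => (a i * b i / P i : ℝ)) l (nhds 0)) ∧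
    (Tendsto (fun i => pEdge (P i) (a i) (b i)) l (nhds 0) →
      Tendsto (fun i => pEdge (P i) (a i) (b i) / (a i * b i / P i : ℝ)) l (nhds 1)) := by
  have hpos : ∀ᶠ i in l, (0 : ℝ) < a i * b i / P i := by
    filter_upwards [ha, hb, haP] with i hai hbi haPi
    have : 0 < P i := hai.trans haPi
    positivity
  have hlower := (haP.and hbP).mono fun i h => div_one_add_le_pEdge h.1 h.2
  have hupper := (haP.and hbP).mono fun i h => pEdge_le h.1 h.2
  have hiff := tendsto_zero_iff_of_div_one_add_le (hpos.mono fun _ => le_of_lt) hlower hupper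
  exact ⟨hiff, fun h => tendsto_div_one_of_div_one_add_le hpos hlower hupper (hiff.1 h)⟩

/-- `p_ij(n) → 0` iff `K_{i,n} K_{j,n} / P_n → 0`, and in that case
`p_ij(n) ∼ K_{i,n} K_{j,n} / P_n`. -/
theorem pEdge_asymptotic (Ki Kj P : ℕ → ℕ)
    (hKi1 : ∀ n, 1 ≤ Ki n) (hKj1 : ∀ n, 1 ≤ Kj n)
    (hKiP : ∀ n, 2 * Ki n ≤ P n) (hKjP : ∀ n, 2 * Kj n ≤ P n) :
    (Tendsto (fun n => pEdge (P n) (Ki n) (Kj n)) atTop (nhds 0) ↔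
      Tendsto (fun n : ℕ => (Ki n : ℝ) * (Kj n : ℝ) / (P n : ℝ)) atTop (nhds 0)) ∧
    (Tendsto (fun n => pEdge (P n) (Ki n) (Kj n)) atTop (nhds 0) →
      Tendsto
        (fun n : ℕ => pEdge (P n) (Ki n) (Kj n) / ((Ki n : ℝ) * (Kj n : ℝ) / (P n : ℝ)))
        atTop (nhds 1)) :=
  pEdge_asymptotic_general (.of_forall hKi1) (.of_forall hKj1)
    (.of_forall fun n => by linarith [hKiP n]) (.of_forall fun n => by linarith [hKjP n])
end

section
/- For any positive integers K_i, K_j, P with K_i, K_j ≤ P and any real scalar a ≥ 1 such that ⌈aK_i⌉ + K_j ≤ P, one has C(P − ⌈aK_i⌉, K_j)/C(P, K_j) ≤ (C(P − K_i, K_j)/C(P, K_j))^a, where C(a,b) denotes the binomial coefficient and ⌈·⌉ is the ceiling function. -/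
open Filter

/-!
The ratio `C(P - m, k) / C(P, k)` is the product of the factors `1 - m / (P - l)` over `l < k`.
When `m` is at least `a * K`, each factor is at most `1 - a * (K / (P - l))`, which Bernoulli's
inequality bounds by `(1 - K / (P - l)) ^ a`. If `m + k ≤ P` all factors are nonnegative and the
bounds multiply; otherwise the ratio vanishes.
-/

theorem choose_sub_div_choose_eq_prod {𝕜 : Type*} [Field 𝕜] [CharZero 𝕜] {m k P : ℕ}
    (hm : m ≤ P) (hk : k ≤ P) :
    ((P - m).choose k : 𝕜) / (P.choose k : 𝕜) =
      ∏ l ∈ Finset.range k, (1 - (m : 𝕜) / ((P : 𝕜) - l)) := by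
  have factorial_ne : (k.factorial : 𝕜) ≠ 0 := Nat.cast_ne_zero.mpr k.factorial_ne_zero
  rw [Nat.cast_choose_eq_descPochhammer_div, Nat.cast_choose_eq_descPochhammer_div,
    div_div_div_cancel_right₀ factorial_ne, descPochhammer_eval_eq_prod_range,
    descPochhammer_eval_eq_prod_range, ← Finset.prod_div_distrib]
  refine Finset.prod_congr rfl fun l hl ↦ ?_
  have hlP : l < P := (Finset.mem_range.mp hl).trans_le hk
  have denom_ne : (P : 𝕜) - l ≠ 0 := sub_ne_zero.mpr (Nat.cast_injective.ne hlP.ne')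
  rw [Nat.cast_sub hm, sub_right_comm, sub_div, div_self denom_ne]

theorem prod_one_sub_le_rpow_prod_one_sub {ι : Type*} {s : Finset ι} {x y : ι → ℝ} {a : ℝ}
    (ha : 1 ≤ a) (hxy : ∀ i ∈ s, a * x i ≤ y i) (hy : ∀ i ∈ s, y i ≤ 1) :
    ∏ i ∈ s, (1 - y i) ≤ (∏ i ∈ s, (1 - x i)) ^ a := by
  have hx : ∀ i ∈ s, x i ≤ 1 := fun i hi ↦ by nlinarith [hxy i hi, hy i hi]
  rw [← Real.finsetProd_rpow _ _ fun i hi ↦ sub_nonneg.mpr (hx i hi)]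
  refine Finset.prod_le_prod (fun i hi ↦ sub_nonneg.mpr (hy i hi)) fun i hi ↦ ?_
  calc 1 - y i ≤ 1 + a * -x i := by linarith [hxy i hi]
    _ ≤ (1 + -x i) ^ a := one_add_mul_self_le_rpow_one_add (neg_le_neg (hx i hi)) ha
    _ = (1 - x i) ^ a := by rw [← sub_eq_add_neg]

theorem avoid_ratio_rpow_general {K m k P : ℕ} {a : ℝ} (ha : 1 ≤ a) (haK : a * K ≤ m)
    (hmP : m ≤ P) (hkP : k ≤ P) :
    ((P - m).choose k : ℝ) / (P.choose k : ℝ) ≤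
      (((P - K).choose k : ℝ) / (P.choose k : ℝ)) ^ a := by
  obtain hlt | hle := lt_or_ge (P - m) k
  · rw [Nat.choose_eq_zero_of_lt hlt, Nat.cast_zero, zero_div]
    positivity
  have hKm : K ≤ m := by exact_mod_cast (le_mul_of_one_le_left K.cast_nonneg ha).trans haK
  have numer_le_denom : ∀ l ∈ Finset.range k, (m : ℝ) ≤ P - l := fun l hl ↦ by
    have hlk := Finset.mem_range.mp hl
    exact le_sub_iff_add_le.mpr (by exact_mod_cast (by omega : m + l ≤ P))
  have denom_nonneg : ∀ l ∈ Finset.range k, (0 : ℝ) ≤ P - l := fun l hl ↦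
    m.cast_nonneg.trans (numer_le_denom l hl)
  rw [choose_sub_div_choose_eq_prod hmP hkP, choose_sub_div_choose_eq_prod (hKm.trans hmP) hkP]
  refine prod_one_sub_le_rpow_prod_one_sub ha (fun l hl ↦ ?_) fun l hl ↦
    div_le_one_of_le₀ (numer_le_denom l hl) (denom_nonneg l hl)
  rw [← mul_div_assoc]
  exact div_le_div_of_nonneg_right haK (denom_nonneg l hl)

/-- for `a ≥ 1`,
`C(P − ⌈aK_i⌉, K_j)/C(P, K_j) ≤ (C(P − K_i, K_j)/C(P, K_j))^a`. -/
theorem avoid_ratio_rpow (Ki Kj P : ℕ) (hKi : 1 ≤ Ki) (hKj : 1 ≤ Kj)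
    (hKiP : Ki ≤ P) (hKjP : Kj ≤ P) (a : ℝ) (ha : 1 ≤ a)
    (hceil : ⌈a * (Ki : ℝ)⌉₊ + Kj ≤ P) :
    ((P - ⌈a * (Ki : ℝ)⌉₊).choose Kj : ℝ) / (P.choose Kj : ℝ) ≤
      (((P - Ki).choose Kj : ℝ) / (P.choose Kj : ℝ)) ^ a :=
  avoid_ratio_rpow_general ha (Nat.le_ceil _) (le_of_add_le_left hceil) hKjP
end
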